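/- For every integer α ≥ 1 there exist integers d(n,0), d(n,2) for n ≥ 1 and d(n,1) for n ≥ 2 such that, in the d_5 tower, L_{2α} = p_0·∑_{n≥1} d(n,0)·7^{⌊(7n+2)/4⌋}·t^n + p_1·∑_{n≥2} d(n,1)·7^{⌊(7n−1)/4⌋}·t^n + ∑_{n≥1} d(n,2)·7^{⌊(7n−2)/4⌋}·t^n, where the infinite sums converge coefficientwise since t^n has q-order n. -/

import Mathlib

noncomputable section

/-- `J b = ∏_{k=1}^∞ (1 - q^{b·k})` as a formal power series with integer coefficients. -/
def J (b : ℕ) : PowerSeries ℤ :=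
  PowerSeries.mk fun n =>
    PowerSeries.coeff n
      (∏ k ∈ Finset.range (n + 1), (1 - (PowerSeries.X : PowerSeries ℤ) ^ (b * (k + 1))))

/-- The coefficientwise-convergent sum `∑_{n≥0} c(n)·t^n`: since `t` has q-order 1, the
coefficient of `q^m` only receives contributions from `n ≤ m`. -/
def tpowSum (t : PowerSeries ℤ) (c : ℕ → ℤ) : PowerSeries ℤ :=
  PowerSeries.mk fun m =>
    ∑ n ∈ Finset.range (m + 1), c n * PowerSeries.coeff m (t ^ n)

/-!
Put `Z = J₁ / (q² J₄₉)`, let `Z₂` be its image under `q ↦ q²`, and let `T = 1 / t`. By Euler's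
pentagonal number theorem the 7-dissection of `Z` is `u + v + w - 1`. Comparing residue classes of
exponents in Jacobi's formula for `J₁³` and in the product formulas for `J₁² / J₂` and `J₂² / J₁`
yields polynomial relations between `u`, `v`, `w` and their images under `q ↦ q²`, which make all
six of them functions on one explicit curve. Computing there, one finds that `Z` is a root of a
septic polynomial over `ℤ[T(q⁷)]`, and that every `U₇ (Zⁱ Z₂ʲ)` with `i, j ≥ 0` is a combination
of `1`, `S = T p₀` and `T₂ = T p₁` over `ℤ[T]`.

Since `U₇` is linear over series in `q⁷`, the septic equation turns into a recurrence in `e` for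
`U₇ (x Z⁻ᵉ)`. Its coefficients are divisible by enough powers of `7` for lower bounds of slope `7/4`
on the powers of `7`, together with bounds on the order in `t`, to propagate, so that seven
consecutive values establish them for all `e`. As `t = Z⁻⁴ T(q⁷)` and `A₅ = Z₂⁵ Z⁻¹⁶`, these bounds
show that `x ↦ U₇ (A₅ x)` and `U₇` map two lattices of expansions in `t` into one another. The one
place where termwise bounds fail is the lowest power of `t` in the odd members: there the leading
terms of `p₀` and `p₁` cancel in `p₀ + p₁`, which is why the odd members are expanded in `1`, `S`,
`S + T₂`.
-/

namespace D5Tower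

open PowerSeries

/-! ### `X`-adic limits and infinite products of power series -/

section XAdic

open Filter

variable {R : Type*} [CommRing R]

/-- Convergence of a sequence of power series in the `X`-adic topology. -/
def XAdicTendsto (F : ℕ → R⟦X⟧) (f : R⟦X⟧) : Prop :=
  ∀ M : ℕ, ∀ᶠ n in atTop, X ^ M ∣ F n - f

namespace XAdicTendsto

variable {F G : ℕ → R⟦X⟧} {f g : R⟦X⟧}

lemma unique (hf : XAdicTendsto F f) (hg : XAdicTendsto F g) : f = g := by
  ext m
  obtain ⟨n, hfn, hgn⟩ := ((hf (m + 1)).and (hg (m + 1))).exists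
  have hcoeff := X_pow_dvd_iff.1 (hgn.sub hfn) m m.lt_succ_self
  simp only [map_sub] at hcoeff
  linear_combination hcoeff

lemma const (f : R⟦X⟧) : XAdicTendsto (fun _ => f) f := fun M => by simp

lemma mul (hF : XAdicTendsto F f) (hG : XAdicTendsto G g) :
    XAdicTendsto (fun n => F n * G n) (f * g) := fun M => by
  filter_upwards [hF M, hG M] with n hFn hGn
  convert (hFn.mul_right (G n)).add (hGn.mul_left f) using 1
  ring

lemma prod {ι : Type*} {F : ι → ℕ → R⟦X⟧} {f : ι → R⟦X⟧} {s : Finset ι}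
    (h : ∀ i ∈ s, XAdicTendsto (F i) (f i)) :
    XAdicTendsto (fun n => ∏ i ∈ s, F i n) (∏ i ∈ s, f i) := by
  classical
  induction s using Finset.induction_on with
  | empty => simpa using const (1 : R⟦X⟧)
  | insert a s ha ih =>
    simp only [Finset.prod_insert ha]
    exact (h a (Finset.mem_insert_self a s)).mul
      (ih fun i hi => h i (Finset.mem_insert_of_mem hi))

lemma comp (hF : XAdicTendsto F f) {s : ℕ → ℕ} (hs : Tendsto s atTop atTop) :
    XAdicTendsto (fun n => F (s n)) f := fun M => hs.eventually (hF M)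

lemma congr (hF : XAdicTendsto F f) (hGF : ∀ᶠ n in atTop, G n = F n) : XAdicTendsto G f :=
  fun M => by
    filter_upwards [hF M, hGF] with n hFn hn
    rwa [hn]

lemma of_mul_right (hFG : XAdicTendsto (fun n => F n * G n) (f * g)) (hG : XAdicTendsto G g)
    (hg : IsUnit g) : XAdicTendsto F f := fun M => by
  filter_upwards [hFG M, hG M] with n hFGn hGn
  refine hg.dvd_mul_right.1 ?_
  convert hFGn.sub (hGn.mul_left (F n)) using 1
  ring

end XAdicTendsto

/-- The infinite product `∏ k, f k`, meaningful when `X ^ k ∣ f k - 1` for all `k`: the `n`-th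
coefficient is then already that of the product of the first `n + 1` factors. -/
def infProd (f : ℕ → R⟦X⟧) : R⟦X⟧ :=
  PowerSeries.mk fun n => PowerSeries.coeff n (∏ k ∈ Finset.range (n + 1), f k)

lemma X_pow_dvd_prod_range_sub_prod_range {f : ℕ → R⟦X⟧} {m : ℕ}
    (hf : ∀ i ≥ m, X ^ m ∣ f i - 1) {n : ℕ} (hn : m ≤ n) :
    X ^ m ∣ (∏ i ∈ Finset.range n, f i) - ∏ i ∈ Finset.range m, f i := by
  induction n, hn using Nat.le_induction with
  | base => simp
  | succ n hn ih =>
    rw [Finset.prod_range_succ]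
    convert ih.add ((hf n hn).mul_left (∏ i ∈ Finset.range n, f i)) using 1
    ring

lemma xAdicTendsto_infProd {f : ℕ → R⟦X⟧} (hf : ∀ i, X ^ i ∣ f i - 1) :
    XAdicTendsto (fun n => ∏ i ∈ Finset.range n, f i) (infProd f) := fun M => by
  filter_upwards [eventually_ge_atTop M] with n hn
  refine X_pow_dvd_iff.2 fun m hm => ?_
  have hdvd := X_pow_dvd_prod_range_sub_prod_range
    (fun i (hi : i ≥ m + 1) => (pow_dvd_pow X hi).trans (hf i)) (show m + 1 ≤ n by omega)
  have hcoeff := X_pow_dvd_iff.1 hdvd m m.lt_succ_self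
  rw [map_sub] at hcoeff ⊢
  simpa [infProd] using hcoeff

lemma isUnit_infProd {f : ℕ → R⟦X⟧} (hf : constantCoeff (f 0) = 1) : IsUnit (infProd f) := by
  rw [PowerSeries.isUnit_iff_constantCoeff, ← coeff_zero_eq_constantCoeff_apply]
  simp [infProd, hf]

lemma map_infProd {S : Type*} [CommRing S] (φ : R →+* S) (f : ℕ → R⟦X⟧) :
    PowerSeries.map φ (infProd f) = infProd fun i => PowerSeries.map φ (f i) := by
  ext n
  simp only [infProd, coeff_map, coeff_mk, ← map_prod]

lemma X_pow_mul_right_injective (n : ℕ) : Function.Injective ((X : R⟦X⟧) ^ n * ·) := fun f g h => by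
  ext m
  simpa [coeff_X_pow_mul] using congrArg (coeff (m + n)) h

end XAdic

/-! ### Gaussian binomial coefficients -/

section QBinomial

variable {A : Type*} [CommRing A] (Q : A)

/-- The Gaussian binomial coefficient with parameter `Q`, by its `Q`-Pascal recursion. -/
def qBinom : ℕ → ℕ → A
  | _, 0 => 1
  | 0, _ + 1 => 0
  | M + 1, k + 1 => qBinom M (k + 1) + Q ^ (M - k) * qBinom M k

/-- The `Q`-Pochhammer product `(1 - Q) (1 - Q²) ⋯ (1 - Qⁿ)`. -/
def qPochhammer (n : ℕ) : A := ∏ i ∈ Finset.range n, (1 - Q ^ (i + 1))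

lemma qPochhammer_succ (n : ℕ) :
    qPochhammer Q (n + 1) = qPochhammer Q n * (1 - Q ^ (n + 1)) :=
  Finset.prod_range_succ _ _

lemma qBinom_zero_right (M : ℕ) : qBinom Q M 0 = 1 := by cases M <;> simp [qBinom]

lemma qBinom_succ_succ (M k : ℕ) :
    qBinom Q (M + 1) (k + 1) = qBinom Q M (k + 1) + Q ^ (M - k) * qBinom Q M k := by
  rw [qBinom]

lemma qBinom_eq_zero_of_lt {M k : ℕ} (h : M < k) : qBinom Q M k = 0 := by
  induction M generalizing k with
  | zero =>
    obtain ⟨k, rfl⟩ := Nat.exists_eq_succ_of_ne_zero h.ne'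
    simp [qBinom]
  | succ M ih =>
    obtain ⟨k, rfl⟩ := Nat.exists_eq_succ_of_ne_zero (M.succ_pos.trans h).ne'
    simp [qBinom, ih (show M < k + 1 by omega), ih (show M < k by omega)]

theorem prod_range_add_mul_pow (x y : A) (M : ℕ) :
    ∏ i ∈ Finset.range M, (y + x * Q ^ i) =
      ∑ k ∈ Finset.range (M + 1), Q ^ k.choose 2 * qBinom Q M k * x ^ k * y ^ (M - k) := by
  induction M with
  | zero => simp [qBinom]
  | succ M ih =>
    have pascal : ∀ k ∈ Finset.range (M + 1),
        Q ^ (k + 1).choose 2 * qBinom Q (M + 1) (k + 1) * x ^ (k + 1) * y ^ (M + 1 - (k + 1)) =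
        Q ^ (k + 1).choose 2 * qBinom Q M (k + 1) * x ^ (k + 1) * y ^ (M + 1 - (k + 1)) +
          (Q ^ k.choose 2 * qBinom Q M k * x ^ k * y ^ (M - k)) * (x * Q ^ M) := by
      intro k hk
      have hQ : Q ^ M = Q ^ k * Q ^ (M - k) := by
        rw [← pow_add, Nat.add_sub_cancel' (Nat.lt_succ_iff.1 (Finset.mem_range.1 hk))]
      rw [Nat.choose_succ_succ' k 1, Nat.choose_one_right, hQ, Nat.add_sub_add_right,
        qBinom_succ_succ]
      ring
    have factor_y : ∀ k ∈ Finset.range M,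
        Q ^ (k + 1).choose 2 * qBinom Q M (k + 1) * x ^ (k + 1) * y ^ (M + 1 - (k + 1)) =
        Q ^ (k + 1).choose 2 * qBinom Q M (k + 1) * x ^ (k + 1) * y ^ (M - (k + 1)) * y := by
      intro k hk
      have hk : k < M := Finset.mem_range.1 hk
      rw [show M + 1 - (k + 1) = M - (k + 1) + 1 by omega, pow_succ]
      ring
    rw [Finset.prod_range_succ, ih, Finset.sum_range_succ' _ (M + 1),
      Finset.sum_congr rfl pascal, Finset.sum_add_distrib, ← Finset.sum_mul, mul_add,
      Finset.sum_range_succ' _ M, Finset.sum_range_succ _ M,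
      qBinom_eq_zero_of_lt Q M.lt_succ_self, Finset.sum_congr rfl factor_y, ← Finset.sum_mul]
    simp only [qBinom_zero_right, Nat.choose_zero_succ]
    simp only [pow_zero, mul_one, one_mul, Nat.sub_zero, mul_zero, zero_mul, add_zero]
    ring

lemma qPochhammer_mul_qPochhammer_mul_qBinom (k l : ℕ) :
    qPochhammer Q k * qPochhammer Q l * qBinom Q (k + l) k = qPochhammer Q (k + l) := by
  obtain ⟨M, hM⟩ : ∃ M, M = k + l := ⟨_, rfl⟩
  induction M generalizing k l with
  | zero =>
    obtain ⟨rfl, rfl⟩ : k = 0 ∧ l = 0 := by omega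
    simp [qBinom, qPochhammer]
  | succ M ih =>
    rcases k with _ | k
    · simp [qBinom_zero_right, qPochhammer]
    rcases l with _ | l
    · have hkk := ih k 0 (by omega)
      rw [add_zero] at hkk ⊢
      rw [qBinom_succ_succ, qBinom_eq_zero_of_lt Q k.lt_succ_self, qPochhammer_succ, Nat.sub_self,
        pow_zero]
      linear_combination (1 - Q ^ (k + 1)) * hkk
    · have left := ih (k + 1) l (by omega)
      have right := ih k (l + 1) (by omega)
      rw [qPochhammer_succ] at left right
      rw [show k + (l + 1) = k + 1 + l by omega] at right
      rw [show k + 1 + (l + 1) = k + 1 + l + 1 by omega, qBinom_succ_succ, qPochhammer_succ,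
        qPochhammer_succ, qPochhammer_succ, show k + 1 + l - k = l + 1 by omega,
        show k + 1 + l + 1 = (l + 1) + (k + 1) by omega, pow_add]
      linear_combination (1 - Q ^ (l + 1)) * left + Q ^ (l + 1) * (1 - Q ^ (k + 1)) * right

end QBinomial

/-! ### Theta series and the Jacobi triple product -/

section Theta

open Filter

variable {R : Type*} [CommRing R]

/-- The bilateral series `∑ k : ℤ, g k * X ^ e k`, for `e` with finite fibres. -/
def thetaSeries (g : ℤ → R) (e : ℤ → ℕ) : R⟦X⟧ :=
  PowerSeries.mk fun m => ∑ᶠ k : ℤ, if e k = m then g k else 0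

lemma coeff_thetaSeries (g : ℤ → R) {e : ℤ → ℕ} {m : ℕ} {S : Finset ℤ}
    (hS : ∀ k, e k = m → k ∈ S) :
    coeff m (thetaSeries g e) = ∑ k ∈ S, if e k = m then g k else 0 := by
  rw [thetaSeries, coeff_mk]
  refine finsum_eq_sum_of_support_subset _ fun k hk => ?_
  simp only [Function.mem_support, ne_eq, ite_eq_right_iff, Classical.not_imp] at hk
  exact hS k hk.1

lemma X_pow_dvd_sum_sub_thetaSeries (g : ℤ → R) {e : ℤ → ℕ} {M : ℕ} {S : Finset ℤ}
    (hS : ∀ k, e k < M → k ∈ S) :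
    X ^ M ∣ ∑ k ∈ S, C (g k) * X ^ e k - thetaSeries g e := by
  refine X_pow_dvd_iff.2 fun m hm => ?_
  rw [map_sub, coeff_thetaSeries g (S := S) fun k hk => hS k (hk.trans_lt hm), map_sum, sub_eq_zero]
  refine Finset.sum_congr rfl fun k _ => ?_
  simp only [coeff_C_mul, coeff_X_pow, mul_ite, mul_one, mul_zero, eq_comm]

/-- Dominated convergence: the far terms vanish `X`-adically, whatever their weights `c n k`. -/
lemma xAdicTendsto_thetaSeries (g : ℤ → R) {e : ℤ → ℕ} (he : ∀ k, k.natAbs ≤ e k + 1)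
    {c : ℕ → ℤ → R⟦X⟧} (hc : ∀ k, XAdicTendsto (fun n => c n k) 1) :
    XAdicTendsto (fun n => ∑ k ∈ Finset.Icc (-(n : ℤ)) n, C (g k) * X ^ e k * c n k)
      (thetaSeries g e) := fun M => by
  let K := Finset.Icc (-(M + 1 : ℤ)) (M + 1)
  have hweights : ∀ᶠ n in atTop, ∀ k ∈ K, X ^ M ∣ c n k - 1 :=
    (Filter.eventually_all_finset K).2 fun k _ => hc k M
  filter_upwards [eventually_ge_atTop (M + 1), hweights] with n hn hcn
  have hsub : K ⊆ Finset.Icc (-(n : ℤ)) n := Finset.Icc_subset_Icc (by omega) (by omega)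
  have far : X ^ M ∣ ∑ k ∈ Finset.Icc (-(n : ℤ)) n \ K, C (g k) * X ^ e k * c n k := by
    refine Finset.dvd_sum fun k hk => ((pow_dvd_pow X ?_).mul_left _).mul_right _
    have hk := (Finset.mem_sdiff.1 hk).2
    have := he k
    simp only [K, Finset.mem_Icc, not_and_or, not_le] at hk
    omega
  have near : X ^ M ∣ ∑ k ∈ K, C (g k) * X ^ e k * (c n k - 1) :=
    Finset.dvd_sum fun k hk => (hcn k hk).mul_left _
  have limit : X ^ M ∣ ∑ k ∈ K, C (g k) * X ^ e k - thetaSeries g e := by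
    refine X_pow_dvd_sum_sub_thetaSeries g fun k hk => ?_
    have := he k
    simp only [K, Finset.mem_Icc]
    omega
  rw [← Finset.sum_sdiff hsub]
  convert (far.add near).add limit using 1
  simp only [mul_sub, Finset.sum_sub_distrib, mul_one]
  ring

/-- The exponent `N k (k - 1) / 2 + c k` of the triple product; it is nonnegative for
`0 ≤ c ≤ N`. -/
def thetaExp (N c k : ℤ) : ℕ := (N * (k * (k - 1) / 2) + c * k).toNat

lemma two_mul_triangle (k : ℤ) : 2 * (k * (k - 1) / 2) = k * (k - 1) :=
  Int.mul_ediv_cancel' (Int.even_mul_pred_self k).two_dvd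

lemma abs_sub_one_le_triangle_add (k : ℤ) :
    (0 ≤ k → k - 1 ≤ k * (k - 1) / 2 ∧ 0 ≤ k * (k - 1) / 2) ∧
      (k ≤ 0 → -k - 1 ≤ k * (k - 1) / 2 + k ∧ 0 ≤ k * (k - 1) / 2 + k) := by
  have := two_mul_triangle k
  refine ⟨fun hk => ?_, fun hk => ?_⟩
  · rcases (show k = 0 ∨ k = 1 ∨ 2 ≤ k by omega) with rfl | rfl | hk
    · simp
    · simp
    · constructor <;> nlinarith
  · rcases (show k = 0 ∨ k = -1 ∨ k ≤ -2 by omega) with rfl | rfl | hk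
    · simp
    · simp
    · constructor <;> nlinarith

variable {N c : ℤ}

lemma abs_sub_one_le_thetaExp (hN : 1 ≤ N) (hc : 0 ≤ c) (hcN : c ≤ N) (k : ℤ) :
    |k| - 1 ≤ N * (k * (k - 1) / 2) + c * k ∧ 0 ≤ N * (k * (k - 1) / 2) + c * k := by
  rcases le_total 0 k with hk | hk
  · obtain ⟨hlarge, hnonneg⟩ := (abs_sub_one_le_triangle_add k).1 hk
    rw [abs_of_nonneg hk]
    constructor <;> nlinarith [mul_nonneg hc hk]
  · obtain ⟨hlarge, hnonneg⟩ := (abs_sub_one_le_triangle_add k).2 hk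
    rw [abs_of_nonpos hk]
    constructor <;> nlinarith [mul_nonneg (neg_nonneg.2 hk) (sub_nonneg.2 hcN)]

lemma coe_thetaExp (hN : 1 ≤ N) (hc : 0 ≤ c) (hcN : c ≤ N) (k : ℤ) :
    (thetaExp N c k : ℤ) = N * (k * (k - 1) / 2) + c * k :=
  Int.toNat_of_nonneg (abs_sub_one_le_thetaExp hN hc hcN k).2

lemma natAbs_le_thetaExp_add_one (hN : 1 ≤ N) (hc : 0 ≤ c) (hcN : c ≤ N) (k : ℤ) :
    k.natAbs ≤ thetaExp N c k + 1 := by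
  zify
  rw [coe_thetaExp hN hc hcN]
  linarith [(abs_sub_one_le_thetaExp hN hc hcN k).1]

end Theta

section TripleProduct

open Filter

variable {R : Type*} [CommRing R]

/-- Euler's product `∏ i ≥ 1, (1 - X ^ (N i))` over the ring `R`. -/
def eulerProd (R : Type*) [CommRing R] (N : ℕ) : R⟦X⟧ := infProd fun i => 1 - X ^ (N * (i + 1))

/-- The product `∏ i ≥ 0, (1 + z X ^ (N i + c))`. -/
def progressionProd (z : R) (N c : ℕ) : R⟦X⟧ := infProd fun i => 1 + C z * X ^ (N * i + c)

lemma X_pow_dvd_eulerProd_factor_sub_one {N : ℕ} (hN : 1 ≤ N) (i : ℕ) :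
    (X : R⟦X⟧) ^ i ∣ (1 - X ^ (N * (i + 1))) - 1 := by
  rw [sub_sub_cancel_left, dvd_neg]
  exact pow_dvd_pow X (by nlinarith)

lemma X_pow_dvd_progressionProd_factor_sub_one (z : R) {N : ℕ} (c : ℕ) (hN : 1 ≤ N) (i : ℕ) :
    (X : R⟦X⟧) ^ i ∣ (1 + C z * X ^ (N * i + c)) - 1 := by
  rw [add_sub_cancel_left]
  exact (pow_dvd_pow X (by nlinarith)).mul_left _

lemma xAdicTendsto_eulerProd {N : ℕ} (hN : 1 ≤ N) :
    XAdicTendsto (qPochhammer ((X : R⟦X⟧) ^ N)) (eulerProd R N) := by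
  refine (xAdicTendsto_infProd (X_pow_dvd_eulerProd_factor_sub_one hN)).congr
    (Eventually.of_forall fun n => ?_)
  simp only [qPochhammer, ← pow_mul]

lemma xAdicTendsto_progressionProd (z : R) {N : ℕ} (c : ℕ) (hN : 1 ≤ N) :
    XAdicTendsto (fun n => ∏ i ∈ Finset.range n, (1 + C z * X ^ (N * i + c)))
      (progressionProd z N c) :=
  xAdicTendsto_infProd (X_pow_dvd_progressionProd_factor_sub_one z c hN)

lemma isUnit_eulerProd {N : ℕ} (hN : 1 ≤ N) : IsUnit (eulerProd R N) :=
  isUnit_infProd (by simp [show N ≠ 0 by omega])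

lemma C_zpow_mul_C_zpow (z : Rˣ) (a b : ℤ) :
    (C ((z ^ a : Rˣ) : R) : R⟦X⟧) * C ((z ^ b : Rˣ) : R) = C ((z ^ (a + b) : Rˣ) : R) := by
  rw [← map_mul, ← Units.val_mul, ← zpow_add]

lemma C_mul_C_inv (z : Rˣ) : (C (z : R) : R⟦X⟧) * C ((z⁻¹ : Rˣ) : R) = 1 := by
  rw [← map_mul, Units.mul_inv, map_one]

variable (z : Rˣ) {N c : ℕ}

lemma prod_range_upper_half (n : ℕ) :
    ∏ i ∈ Finset.range n, ((X ^ N) ^ n + C (z : R) * X ^ c * (X ^ N) ^ (n + i) : R⟦X⟧) =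
      X ^ (N * (n * n)) * ∏ i ∈ Finset.range n, (1 + C (z : R) * X ^ (N * i + c)) := by
  have hX : (X : R⟦X⟧) ^ (N * (n * n)) = ∏ i ∈ Finset.range n, X ^ (N * n) := by
    rw [Finset.prod_const, Finset.card_range, ← pow_mul, mul_assoc]
  rw [hX, ← Finset.prod_mul_distrib]
  exact Finset.prod_congr rfl fun i _ => by ring

lemma prod_range_lower_half (hc : c ≤ N) (n : ℕ) :
    ∏ i ∈ Finset.range n, ((X ^ N) ^ n + C (z : R) * X ^ c * (X ^ N) ^ i : R⟦X⟧) =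
      X ^ (c * n + N * (n * (n - 1) / 2)) * (C ((z ^ n : Rˣ) : R) *
        ∏ i ∈ Finset.range n, (1 + C ((z⁻¹ : Rˣ) : R) * X ^ (N * i + (N - c)))) := by
  have leading : (X : R⟦X⟧) ^ (c * n + N * (n * (n - 1) / 2)) * C ((z ^ n : Rˣ) : R) =
      ∏ i ∈ Finset.range n, (C (z : R) * X ^ (c + N * i)) := by
    rw [Finset.prod_mul_distrib, Finset.prod_const, Finset.card_range,
      Finset.prod_pow_eq_pow_sum, Finset.sum_add_distrib, ← Finset.mul_sum, Finset.sum_range_id,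
      Finset.sum_const, Finset.card_range, smul_eq_mul, Units.val_pow_eq_pow_val, map_pow]
    ring
  rw [← Finset.prod_range_reflect fun i => 1 + C ((z⁻¹ : Rˣ) : R) * X ^ (N * i + (N - c)),
    ← mul_assoc, leading, ← Finset.prod_mul_distrib]
  refine Finset.prod_congr rfl fun i hi => ?_
  have hsplit : (X ^ N) ^ n = (X : R⟦X⟧) ^ (c + N * i) * X ^ (N * (n - 1 - i) + (N - c)) := by
    obtain ⟨l, rfl⟩ := Nat.exists_eq_add_of_lt (Finset.mem_range.1 hi)
    obtain ⟨d, rfl⟩ := Nat.exists_eq_add_of_le hc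
    rw [← pow_mul, ← pow_add, show i + l + 1 - 1 - i = l by omega, Nat.add_sub_cancel_left]
    ring
  rw [hsplit]
  linear_combination (-(X : R⟦X⟧) ^ (c + N * i) * X ^ (N * (n - 1 - i) + (N - c))) * C_mul_C_inv z

lemma thetaExp_sub (hN : 1 ≤ N) (hc : c ≤ N) {n k : ℕ} (hk : k ≤ 2 * n) :
    N * k.choose 2 + c * k + N * (n * (2 * n - k)) =
      c * n + N * (n * (n - 1) / 2) + N * (n * n) + thetaExp N c ((k : ℤ) - n) := by
  have natTriangle : ∀ m : ℕ, ((m * (m - 1) / 2 : ℕ) : ℤ) = (m : ℤ) * (m - 1) / 2 := by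
    rintro (_ | m) <;> simp
  have htriangle : (k * (k - 1) / 2 : ℤ) + n * (2 * n - k) - n * (n - 1) / 2 - n * n =
      ((k : ℤ) - n) * ((k - n) - 1) / 2 := by
    have hk := two_mul_triangle (k : ℤ)
    have hn := two_mul_triangle (n : ℤ)
    have hkn := two_mul_triangle ((k : ℤ) - n)
    refine mul_left_cancel₀ (two_ne_zero (α := ℤ)) ?_
    linear_combination hk - hn - hkn
  have hkt := natTriangle k
  have hnt := natTriangle n
  rw [Nat.choose_two_right]
  zify
  rw [coe_thetaExp (by exact_mod_cast hN) (by positivity) (by exact_mod_cast hc)]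
  push_cast [Nat.cast_sub hk] at hkt hnt ⊢
  rw [hkt, hnt]
  linear_combination (N : ℤ) * htriangle

lemma qBinom_term_eq (hN : 1 ≤ N) (hc : c ≤ N) {n k : ℕ} (hk : k ≤ 2 * n) :
    ((X : R⟦X⟧) ^ N) ^ k.choose 2 * qBinom ((X : R⟦X⟧) ^ N) (2 * n) k *
        (C (z : R) * X ^ c) ^ k * ((X ^ N) ^ n) ^ (2 * n - k) =
      X ^ (c * n + N * (n * (n - 1) / 2) + N * (n * n)) * (C ((z ^ n : Rˣ) : R) *
        (C ((z ^ ((k : ℤ) - n) : Rˣ) : R) * X ^ thetaExp N c ((k : ℤ) - n) *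
          qBinom ((X : R⟦X⟧) ^ N) (2 * n) k)) := by
  have hz : (C (z : R) : R⟦X⟧) ^ k = C ((z ^ n : Rˣ) : R) * C ((z ^ ((k : ℤ) - n) : Rˣ) : R) := by
    rw [← zpow_natCast z n, C_zpow_mul_C_zpow, add_sub_cancel, zpow_natCast,
      Units.val_pow_eq_pow_val, map_pow]
  have hX : ((X : R⟦X⟧) ^ N) ^ k.choose 2 * X ^ (c * k) * ((X ^ N) ^ n) ^ (2 * n - k) =
      X ^ (c * n + N * (n * (n - 1) / 2) + N * (n * n)) * X ^ thetaExp N c ((k : ℤ) - n) := by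
    rw [← pow_add, ← thetaExp_sub hN hc hk, ← pow_mul, ← pow_mul, ← pow_mul, ← pow_add, ← pow_add]
  rw [mul_pow, hz, ← pow_mul]
  linear_combination (qBinom (X ^ N) (2 * n) k * C ((z ^ n : Rˣ) : R) *
    C ((z ^ ((k : ℤ) - n) : Rˣ) : R)) * hX

theorem finite_jacobi_triple_product (hN : 1 ≤ N) (hc : c ≤ N) (n : ℕ) :
    (∏ i ∈ Finset.range n, (1 + C (z : R) * X ^ (N * i + c))) *
      (∏ i ∈ Finset.range n, (1 + C ((z⁻¹ : Rˣ) : R) * X ^ (N * i + (N - c)))) =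
    ∑ k ∈ Finset.range (2 * n + 1), C ((z ^ ((k : ℤ) - n) : Rˣ) : R) *
      X ^ thetaExp N c ((k : ℤ) - n) * qBinom ((X : R⟦X⟧) ^ N) (2 * n) k := by
  have key := prod_range_add_mul_pow ((X : R⟦X⟧) ^ N) (C (z : R) * X ^ c) ((X ^ N) ^ n) (2 * n)
  rw [Finset.sum_congr rfl fun k hk =>
      qBinom_term_eq z hN hc (Nat.lt_succ_iff.1 (Finset.mem_range.1 hk)),
    ← Finset.mul_sum, ← Finset.mul_sum, two_mul n, Finset.prod_range_add,
    prod_range_upper_half, prod_range_lower_half z hc, ← two_mul n] at key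
  have hz : IsUnit (C ((z ^ n : Rˣ) : R) : R⟦X⟧) := (z ^ n).isUnit.map C
  refine hz.mul_left_cancel (X_pow_mul_right_injective _ (Eq.trans ?_ key))
  dsimp only
  rw [pow_add _ _ (N * (n * n))]
  ring

lemma sum_range_two_mul_add_one {A : Type*} [AddCommMonoid A] (n : ℕ) (f : ℤ → A) :
    ∑ k ∈ Finset.range (2 * n + 1), f ((k : ℤ) - n) = ∑ k ∈ Finset.Icc (-(n : ℤ)) n, f k := by
  refine Finset.sum_bij (fun k _ => (k : ℤ) - n) ?_ (fun a _ b _ h => by simpa using h) ?_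
    (fun _ _ => rfl)
  · intro k hk
    simp only [Finset.mem_range, Finset.mem_Icc] at *
    omega
  · intro b hb
    simp only [Finset.mem_Icc] at hb
    exact ⟨(b + n).toNat, by simp; omega, by omega⟩

lemma xAdicTendsto_qPochhammer_mul_qBinom (hN : 1 ≤ N) (l : ℤ) :
    XAdicTendsto (fun n : ℕ => qPochhammer ((X : R⟦X⟧) ^ N) n *
      qBinom ((X : R⟦X⟧) ^ N) (2 * n) (n + l).toNat) 1 := by
  have euler := xAdicTendsto_eulerProd (R := R) hN
  have tendsto_add (m : ℤ) : Tendsto (fun n : ℕ => ((n : ℤ) + m).toNat) atTop atTop :=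
    tendsto_atTop_atTop.2 fun B => ⟨B + m.natAbs, fun n hn => by omega⟩
  have tendsto_double : Tendsto (fun n : ℕ => 2 * n) atTop atTop :=
    tendsto_atTop_atTop.2 fun B => ⟨B, fun n hn => by omega⟩
  refine XAdicTendsto.of_mul_right (g := eulerProd R N * eulerProd R N) ?_
    ((euler.comp (tendsto_add l)).mul (euler.comp (tendsto_add (-l))))
    ((isUnit_eulerProd hN).mul (isUnit_eulerProd hN))
  rw [one_mul]
  refine (euler.mul (euler.comp tendsto_double)).congr ?_
  filter_upwards [eventually_ge_atTop l.natAbs] with n hn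
  have hfact := qPochhammer_mul_qPochhammer_mul_qBinom ((X : R⟦X⟧) ^ N)
    ((n : ℤ) + l).toNat ((n : ℤ) + -l).toNat
  rw [show ((n : ℤ) + l).toNat + ((n : ℤ) + -l).toNat = 2 * n by omega] at hfact
  linear_combination qPochhammer ((X : R⟦X⟧) ^ N) n * hfact

theorem jacobi_triple_product (hN : 1 ≤ N) (hc : c ≤ N) :
    thetaSeries (fun k => ((z ^ k : Rˣ) : R)) (thetaExp N c) =
      eulerProd R N *
        (progressionProd (z : R) N c * progressionProd ((z⁻¹ : Rˣ) : R) N (N - c)) := by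
  have series := xAdicTendsto_thetaSeries (fun k => ((z ^ k : Rˣ) : R))
    (natAbs_le_thetaExp_add_one (N := N) (c := c) (by exact_mod_cast hN) (by positivity)
      (by exact_mod_cast hc)) (xAdicTendsto_qPochhammer_mul_qBinom hN)
  refine series.unique (((xAdicTendsto_eulerProd hN).mul
    ((xAdicTendsto_progressionProd (z : R) c hN).mul
      (xAdicTendsto_progressionProd ((z⁻¹ : Rˣ) : R) (N - c) hN))).congr
        (Eventually.of_forall fun n => ?_))
  rw [finite_jacobi_triple_product z hN hc n, Finset.mul_sum, ← sum_range_two_mul_add_one]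
  refine Finset.sum_congr rfl fun k _ => ?_
  rw [add_sub_cancel, Int.toNat_natCast]
  ring

end TripleProduct

/-! ### Classical product identities -/

section Products

open Filter

variable {R : Type*} [CommRing R]

lemma prod_range_mul {A : Type*} [CommMonoid A] (a n : ℕ) (f : ℕ → A) :
    ∏ i ∈ Finset.range (a * n), f i =
      ∏ i ∈ Finset.range n, ∏ r ∈ Finset.range a, f (a * i + r) := by
  induction n with
  | zero => simp
  | succ n ih => rw [Nat.mul_succ, Finset.prod_range_add, ih, Finset.prod_range_succ]

lemma tendsto_const_mul_atTop {a : ℕ} (ha : 1 ≤ a) : Tendsto (fun n => a * n) atTop atTop :=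
  tendsto_id.const_mul_atTop' ha

lemma prod_progressionProd (z : R) {a N : ℕ} (c : ℕ) (ha : 1 ≤ a) (hN : 1 ≤ N) :
    ∏ r ∈ Finset.range a, progressionProd z (a * N) (N * r + c) = progressionProd z N c := by
  refine (XAdicTendsto.prod fun r _ => xAdicTendsto_progressionProd z (N * r + c)
    (Nat.mul_pos ha hN)).unique (((xAdicTendsto_progressionProd z c hN).comp
      (tendsto_const_mul_atTop ha)).congr (Eventually.of_forall fun n => ?_))
  rw [prod_range_mul, Finset.prod_comm]
  refine Finset.prod_congr rfl fun i _ => Finset.prod_congr rfl fun r _ => ?_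
  rw [show a * N * i + (N * r + c) = N * (a * i + r) + c by ring]

lemma eulerProd_eq_progressionProd (N : ℕ) : eulerProd R N = progressionProd (-1) N N := by
  refine congrArg infProd (funext fun i => ?_)
  rw [map_neg, map_one, neg_one_mul, ← sub_eq_add_neg, Nat.mul_succ]

lemma eulerProd_mul_progressionProd_one {N : ℕ} (hN : 1 ≤ N) :
    eulerProd R N * progressionProd 1 N N = eulerProd R (2 * N) := by
  have hN2 : 1 ≤ 2 * N := by omega
  refine ((xAdicTendsto_infProd (X_pow_dvd_eulerProd_factor_sub_one hN)).mul
    (xAdicTendsto_progressionProd 1 N hN)).unique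
      ((xAdicTendsto_infProd (X_pow_dvd_eulerProd_factor_sub_one hN2)).congr
        (Eventually.of_forall fun n => ?_))
  rw [← Finset.prod_mul_distrib]
  refine Finset.prod_congr rfl fun i _ => ?_
  rw [map_one]
  ring

lemma progressionProd_one_zero (z : R) :
    progressionProd z 1 0 = C (1 + z) * progressionProd z 1 1 := by
  refine ((xAdicTendsto_progressionProd z 0 le_rfl).comp (tendsto_add_atTop_nat 1)).unique
    (((XAdicTendsto.const (C (1 + z))).mul (xAdicTendsto_progressionProd z 1 le_rfl)).congr
      (Eventually.of_forall fun n => ?_))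
  rw [Finset.prod_range_succ', mul_comm]
  simp

lemma map_eulerProd {S : Type*} [CommRing S] (φ : R →+* S) (N : ℕ) :
    PowerSeries.map φ (eulerProd R N) = eulerProd S N := by
  simp [eulerProd, map_infProd]

lemma constantCoeff_eulerProd {N : ℕ} (hN : N ≠ 0) : constantCoeff (eulerProd R N) = 1 := by
  rw [← coeff_zero_eq_constantCoeff_apply, eulerProd, infProd, coeff_mk]
  simp [hN]

lemma expand_eulerProd {p N : ℕ} (hp : p ≠ 0) (hN : 1 ≤ N) :
    expand p hp (eulerProd R N) = eulerProd R (p * N) := by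
  have hp' := Nat.pos_of_ne_zero hp
  have hpN : 1 ≤ p * N := Nat.mul_pos hp' hN
  have hexpand : XAdicTendsto
      (fun n => expand p hp (∏ i ∈ Finset.range n, (1 - (X : R⟦X⟧) ^ (N * (i + 1)))))
      (expand p hp (eulerProd R N)) := fun M => by
    filter_upwards [xAdicTendsto_infProd (X_pow_dvd_eulerProd_factor_sub_one (R := R) hN) M]
      with n ⟨y, hy⟩
    rw [← map_sub, eulerProd, hy, map_mul, map_pow, expand_X, ← pow_mul]
    exact (pow_dvd_pow _ (Nat.le_mul_of_pos_left _ hp')).mul_right _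
  refine hexpand.unique ((xAdicTendsto_infProd (X_pow_dvd_eulerProd_factor_sub_one hpN)).congr
    (Eventually.of_forall fun n => ?_))
  rw [map_prod]
  refine Finset.prod_congr rfl fun i _ => ?_
  rw [map_sub, map_one, map_pow, expand_X, ← pow_mul, mul_assoc]

/-- The sign `(-1) ^ k` of an integer `k`, as an element of `R`. -/
def altSign (R : Type*) [CommRing R] (k : ℤ) : R := (((-1 : Rˣ) ^ k : Rˣ) : R)

/-- The theta function `φ(-q) = ∑ k : ℤ, (-1) ^ k q ^ (k²)`. -/
def phiSeries (R : Type*) [CommRing R] : R⟦X⟧ := thetaSeries (altSign R) (thetaExp 2 1)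

/-- The theta function `∑ k : ℤ, q ^ (k (k - 1) / 2)`, which is twice Ramanujan's `ψ(q)`. -/
def twoPsiSeries (R : Type*) [CommRing R] : R⟦X⟧ := thetaSeries (fun _ => 1) (thetaExp 1 0)

theorem eulerProd_one_eq_thetaSeries :
    eulerProd R 1 = thetaSeries (altSign R) (thetaExp 3 1) := by
  have triple := jacobi_triple_product (-1 : Rˣ) (show 1 ≤ 3 by norm_num) (show 1 ≤ 3 by norm_num)
  have blocks := prod_progressionProd (-1 : R) (a := 3) 1 (by norm_num) le_rfl
  simp only [Finset.prod_range_succ, Finset.prod_range_zero, one_mul, mul_one, zero_add,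
    Nat.reduceAdd] at blocks
  simp only [Nat.cast_ofNat, Nat.cast_one, inv_neg_one, Units.val_neg, Units.val_one,
    Nat.reduceSub] at triple
  change thetaSeries (altSign R) _ = _ at triple
  rw [triple, eulerProd_eq_progressionProd, eulerProd_eq_progressionProd, ← blocks]
  ring

theorem eulerProd_two_mul_phiSeries : eulerProd R 2 * phiSeries R = eulerProd R 1 ^ 2 := by
  have triple := jacobi_triple_product (-1 : Rˣ) (show 1 ≤ 2 by norm_num) (show 1 ≤ 2 by norm_num)
  have blocks := prod_progressionProd (-1 : R) (a := 2) 1 (by norm_num) le_rfl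
  simp only [Finset.prod_range_succ, Finset.prod_range_zero, one_mul, mul_one, zero_add,
    Nat.reduceAdd] at blocks
  simp only [Nat.cast_ofNat, Nat.cast_one, inv_neg_one, Units.val_neg, Units.val_one,
    Nat.reduceSub] at triple
  change phiSeries R = _ at triple
  rw [triple, eulerProd_eq_progressionProd, eulerProd_eq_progressionProd, ← blocks]
  ring

theorem eulerProd_one_mul_twoPsiSeries :
    eulerProd R 1 * twoPsiSeries R = 2 * eulerProd R 2 ^ 2 := by
  have triple := jacobi_triple_product (1 : Rˣ) (show 1 ≤ 1 from le_rfl) (Nat.zero_le 1)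
  simp only [Nat.cast_one, Nat.cast_zero, inv_one, Units.val_one, one_zpow, Nat.sub_zero,
    progressionProd_one_zero] at triple
  change twoPsiSeries R = _ at triple
  have htwo : (C (1 + 1 : R) : R⟦X⟧) = 2 := by rw [map_add, map_one, one_add_one_eq_two]
  have hdouble := eulerProd_mul_progressionProd_one (R := R) (le_refl 1)
  rw [triple, htwo, ← hdouble]
  ring

theorem septic_thetaSeries_product :
    thetaSeries (fun _ => (1 : R)) (thetaExp 7 4) * thetaSeries (fun _ => (1 : R)) (thetaExp 7 5) *
      thetaSeries (fun _ => (1 : R)) (thetaExp 7 6) * (eulerProd R 1 * eulerProd R 14) =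
    eulerProd R 7 ^ 4 * eulerProd R 2 := by
  have triple {c : ℕ} (hc : c ≤ 7) := jacobi_triple_product (1 : Rˣ) (show 1 ≤ 7 by norm_num) hc
  have triple4 := triple (show 4 ≤ 7 by norm_num)
  have triple5 := triple (show 5 ≤ 7 by norm_num)
  have triple6 := triple (show 6 ≤ 7 by norm_num)
  simp only [Nat.cast_ofNat, inv_one, Units.val_one, one_zpow, Nat.reduceSub]
    at triple4 triple5 triple6
  have double1 := eulerProd_mul_progressionProd_one (R := R) (le_refl 1)
  have double7 := eulerProd_mul_progressionProd_one (R := R) (show 1 ≤ 7 by norm_num)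
  have blocks := prod_progressionProd (1 : R) (a := 7) 1 (by norm_num) le_rfl
  simp only [Finset.prod_range_succ, Finset.prod_range_zero, one_mul, mul_one, zero_add,
    Nat.reduceAdd] at blocks
  simp only [mul_one, Nat.reduceMul] at double1 double7
  rw [triple4, triple5, triple6, ← double7, ← double1, ← blocks]
  ring

end Products

/-! ### Jacobi's identity for the cube of Euler's product -/

section JacobiCube

open Filter DualNumber

variable {R : Type*} [CommRing R]

lemma altSign_of_even {k : ℤ} (hk : Even k) : altSign R k = 1 := by
  rw [altSign, hk.neg_one_zpow, Units.val_one]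

lemma altSign_of_odd {k : ℤ} (hk : Odd k) : altSign R k = -1 := by
  rw [altSign, hk.neg_one_zpow, Units.val_neg, Units.val_one]

lemma altSign_mul_of_odd {m : ℤ} (hm : Odd m) (k : ℤ) : altSign R (m * k) = altSign R k := by
  rcases k.even_or_odd with hk | hk
  · rw [altSign_of_even hk, altSign_of_even (hk.mul_left m)]
  · rw [altSign_of_odd hk, altSign_of_odd (hm.mul hk)]

lemma altSign_add (k l : ℤ) : altSign R (k + l) = altSign R k * altSign R l := by
  rw [altSign, zpow_add, Units.val_mul, altSign, altSign]

lemma map_altSign {S : Type*} [CommRing S] (φ : R →+* S) (k : ℤ) :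
    φ (altSign R k) = altSign S k := by
  rcases k.even_or_odd with hk | hk
  · rw [altSign_of_even hk, altSign_of_even hk, map_one]
  · rw [altSign_of_odd hk, altSign_of_odd hk, map_neg, map_one]

lemma eps_mul_progressionProd {z : R[ε]} (hz : ε * z = -ε) :
    C ε * progressionProd z 1 1 = C ε * eulerProd R[ε] 1 := by
  refine ((XAdicTendsto.const _).mul (xAdicTendsto_progressionProd z 1 le_rfl)).unique
    (((XAdicTendsto.const _).mul (xAdicTendsto_infProd (X_pow_dvd_eulerProd_factor_sub_one
      le_rfl))).congr (Eventually.of_forall fun n => ?_))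
  have hCz : C ε * C z = -C ε := by rw [← map_mul, hz, map_neg]
  induction n with
  | zero => simp
  | succ n ih =>
    rw [Finset.prod_range_succ, Finset.prod_range_succ, ← mul_assoc, ih, ← mul_assoc, one_mul,
      one_mul]
    linear_combination (∏ x ∈ Finset.range n, (1 - X ^ (1 * (x + 1)))) * X ^ (n + 1) * hCz

/-- The unit `1 + ε` of the dual numbers: it makes the triple product see a derivative in `z`. -/
def oneAddEps (R : Type*) [CommRing R] : R[ε]ˣ where
  val := 1 + ε
  inv := 1 - ε
  val_inv := by linear_combination -eps_mul_eps (R := R)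
  inv_val := by linear_combination -eps_mul_eps (R := R)

lemma coe_oneAddEps : (oneAddEps R : R[ε]) = 1 + ε := rfl

lemma coe_inv_oneAddEps : ((oneAddEps R)⁻¹ : R[ε]ˣ) = (1 - ε : R[ε]) := rfl

lemma coe_oneAddEps_zpow (k : ℤ) : ((oneAddEps R ^ k : R[ε]ˣ) : R[ε]) = 1 + (k : R[ε]) * ε := by
  have heps := eps_mul_eps (R := R)
  induction k using Int.induction_on with
  | zero => simp
  | succ n ih =>
    rw [zpow_add_one, Units.val_mul, ih, coe_oneAddEps]
    push_cast
    linear_combination (n : R[ε]) * heps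
  | pred n ih =>
    rw [zpow_sub_one, Units.val_mul, ih, coe_inv_oneAddEps]
    push_cast
    linear_combination (n : R[ε]) * heps

lemma coe_neg_oneAddEps_zpow (k : ℤ) :
    (((-oneAddEps R) ^ k : R[ε]ˣ) : R[ε]) = altSign R[ε] k * (1 + (k : R[ε]) * ε) := by
  have hmul := congrArg Units.val (mul_zpow (-1 : R[ε]ˣ) (oneAddEps R) k)
  rw [Units.val_mul, coe_oneAddEps_zpow] at hmul
  rw [← neg_one_mul]
  exact hmul

lemma thetaSeries_neg_oneAddEps :
    thetaSeries (fun k => (((-oneAddEps R) ^ k : R[ε]ˣ) : R[ε])) (thetaExp 1 0) =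
      -(C ε * PowerSeries.map (TrivSqZeroExt.inlHom R R) (eulerProd R 1 ^ 3)) := by
  have triple := jacobi_triple_product (-oneAddEps R) (show 1 ≤ 1 from le_rfl) (Nat.zero_le 1)
  have heps := eps_mul_eps (R := R)
  have hleft := eps_mul_progressionProd (R := R) (z := ((-oneAddEps R : R[ε]ˣ) : R[ε])) (by
    rw [Units.val_neg, coe_oneAddEps]
    linear_combination -heps)
  have hright := eps_mul_progressionProd (R := R) (z := (((-oneAddEps R)⁻¹ : R[ε]ˣ) : R[ε])) (by
    rw [inv_neg, Units.val_neg, coe_inv_oneAddEps]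
    linear_combination heps)
  have hfactor : 1 + ((-oneAddEps R : R[ε]ˣ) : R[ε]) = -ε := by
    rw [Units.val_neg, coe_oneAddEps]
    ring
  rw [progressionProd_one_zero, hfactor, map_neg] at triple
  simp only [Nat.cast_one, Nat.cast_zero, Nat.sub_zero] at triple
  rw [triple, map_pow, map_eulerProd]
  linear_combination (-eulerProd R[ε] 1 *
    progressionProd (((-oneAddEps R)⁻¹ : R[ε]ˣ) : R[ε]) 1 1) * hleft - eulerProd R[ε] 1 ^ 2 * hright

lemma coeff_thetaSeries_of_natAbs_le (g : ℤ → R) {e : ℤ → ℕ} (he : ∀ k, k.natAbs ≤ e k + 1)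
    (m : ℕ) : coeff m (thetaSeries g e) =
      ∑ k ∈ Finset.Icc (-(m + 1 : ℤ)) (m + 1), if e k = m then g k else 0 := by
  refine coeff_thetaSeries g fun k hk => ?_
  have := he k
  rw [Finset.mem_Icc]
  omega

theorem eulerProd_one_cube :
    eulerProd R 1 ^ 3 = thetaSeries (fun k => -altSign R k * k) (thetaExp 1 0) := by
  ext m
  have hm := congrArg (fun x => TrivSqZeroExt.snd (coeff m x)) (thetaSeries_neg_oneAddEps (R := R))
  have he := natAbs_le_thetaExp_add_one le_rfl le_rfl zero_le_one
  rw [coeff_thetaSeries_of_natAbs_le _ he] at hm ⊢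
  rw [map_neg, coeff_C_mul, coeff_map, TrivSqZeroExt.snd_neg, TrivSqZeroExt.snd_sum] at hm
  have hsnd : TrivSqZeroExt.snd (ε * (TrivSqZeroExt.inlHom R R) (coeff m (eulerProd R 1 ^ 3))) =
      coeff m (eulerProd R 1 ^ 3) := by simp
  rw [hsnd, ← neg_eq_iff_eq_neg] at hm
  rw [← hm, ← Finset.sum_neg_distrib]
  refine Finset.sum_congr rfl fun k _ => ?_
  split_ifs with h
  · rw [coe_neg_oneAddEps_zpow, ← map_altSign (TrivSqZeroExt.inlHom R R)]
    simp
  · simp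

end JacobiCube

/-! ### Dissection of theta series modulo `7` -/

section Dissection

variable {R : Type*} [CommRing R] {p : ℕ}

/-- The part of a power series supported on exponents congruent to `r` modulo `p`. -/
def residuePart (r : ZMod p) (f : R⟦X⟧) : R⟦X⟧ :=
  PowerSeries.mk fun n => if (n : ZMod p) = r then coeff n f else 0

section ThetaSeries

variable {g : ℤ → R} {e : ℤ → ℕ}

lemma thetaSeries_add (g g' : ℤ → R) (he : ∀ k : ℤ, k.natAbs ≤ e k + 1) :
    thetaSeries (fun k => g k + g' k) e = thetaSeries g e + thetaSeries g' e := by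
  ext m
  simp only [map_add, coeff_thetaSeries_of_natAbs_le _ he, ← Finset.sum_add_distrib]
  refine Finset.sum_congr rfl fun k _ => ?_
  split_ifs <;> simp

lemma thetaSeries_const_mul (c : R) (g : ℤ → R) (he : ∀ k : ℤ, k.natAbs ≤ e k + 1) :
    thetaSeries (fun k => c * g k) e = C c * thetaSeries g e := by
  ext m
  simp only [coeff_C_mul, coeff_thetaSeries_of_natAbs_le _ he, Finset.mul_sum]
  refine Finset.sum_congr rfl fun k _ => ?_
  split_ifs <;> simp

lemma thetaSeries_comp {s : ℤ → ℤ} (hs : Function.Injective s)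
    (hg : ∀ k, g k ≠ 0 → k ∈ Set.range s) :
    thetaSeries g e = thetaSeries (fun l => g (s l)) (fun l => e (s l)) := by
  ext m
  simp only [thetaSeries, coeff_mk]
  rw [← finsum_mem_range (f := fun k => if e k = m then g k else 0) hs,
    ← finsum_mem_univ fun k => if e k = m then g k else 0]
  refine finsum_mem_inter_support_eq' _ _ _ fun k hk => ?_
  simp only [Function.mem_support, ne_eq, ite_eq_right_iff, Classical.not_imp] at hk
  exact iff_of_true trivial (hg k hk.2)

lemma thetaSeries_const_add_mul (g : ℤ → R) (e : ℤ → ℕ) (c : ℕ) (hp : p ≠ 0) :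
    thetaSeries g (fun k => c + p * e k) = X ^ c * expand p hp (thetaSeries g e) := by
  ext m
  rw [coeff_X_pow_mul']
  split_ifs with hcm
  · rw [coeff_expand]
    split_ifs with hdvd
    · obtain ⟨j, hj⟩ := hdvd
      rw [hj, Nat.mul_div_cancel_left _ (Nat.pos_of_ne_zero hp), thetaSeries, thetaSeries, coeff_mk,
        coeff_mk]
      refine finsum_congr fun k => if_congr ?_ rfl rfl
      exact ⟨fun hk => Nat.eq_of_mul_eq_mul_left (Nat.pos_of_ne_zero hp) (by omega),
        fun hk => by rw [hk]; omega⟩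
    · rw [thetaSeries, coeff_mk]
      exact finsum_eq_zero_of_forall_eq_zero fun k => if_neg fun hk => hdvd ⟨e k, by omega⟩
  · rw [thetaSeries, coeff_mk]
    exact finsum_eq_zero_of_forall_eq_zero fun k => if_neg fun hk => hcm (by omega)

lemma residuePart_thetaSeries (r : ZMod p) :
    residuePart r (thetaSeries g e) =
      thetaSeries (fun k => if (e k : ZMod p) = r then g k else 0) e := by
  ext m
  simp only [residuePart, thetaSeries, coeff_mk]
  split_ifs with hm
  · refine finsum_congr fun k => ?_
    split_ifs with hk hr
    · rfl
    · exact absurd (hk ▸ hm) hr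
    · rfl
  · refine (finsum_eq_zero_of_forall_eq_zero fun k => ?_).symm
    split_ifs with hk hr
    · exact absurd (hk ▸ hr) hm
    · rfl
    · rfl

lemma residuePart_thetaSeries_eq_zero {r : ZMod p} (h : ∀ k, (e k : ZMod p) ≠ r) :
    residuePart r (thetaSeries g e) = 0 := by
  rw [residuePart_thetaSeries]
  ext m
  simp [thetaSeries, h]

lemma mem_range_mul_add_iff (i k : ℤ) :
    k ∈ Set.range (fun l : ℤ => p * l + i) ↔ (k : ZMod p) = i := by
  rw [eq_comm (b := (i : ZMod p)), ZMod.intCast_eq_intCast_iff_dvd_sub]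
  exact exists_congr fun l => ⟨fun h => by linarith [show p * l + i = k from h], fun h =>
    show p * l + i = k by linarith⟩

variable [NeZero p]

lemma mul_add_injective (i : ℤ) : Function.Injective fun l : ℤ => (p : ℤ) * l + i := fun a b h => by
  simpa [NeZero.ne p] using h

lemma thetaSeries_of_residueClass (i : ℤ) (hg : ∀ k, g k ≠ 0 → (k : ZMod p) = i) :
    thetaSeries g e = thetaSeries (fun l => g (p * l + i)) (fun l => e (p * l + i)) :=
  thetaSeries_comp (mul_add_injective i) fun k hk => (mem_range_mul_add_iff i k).2 (hg k hk)

lemma thetaSeries_ite_residueClass (i : ℤ) :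
    thetaSeries (fun k => if (k : ZMod p) = i then g k else 0) e =
      thetaSeries (fun l => g (p * l + i)) (fun l => e (p * l + i)) := by
  rw [thetaSeries_of_residueClass (p := p) i fun k hk => by by_contra h; exact hk (if_neg h)]
  simp

lemma residuePart_thetaSeries_of_iff {r : ZMod p} {i : ℤ}
    (h : ∀ k : ℤ, (e k : ZMod p) = r ↔ (k : ZMod p) = i) :
    residuePart r (thetaSeries g e) =
      thetaSeries (fun l => g (p * l + i)) (fun l => e (p * l + i)) := by
  simp only [residuePart_thetaSeries, h, thetaSeries_ite_residueClass]

lemma residuePart_thetaSeries_of_iff_or {r : ZMod p} {i j : ℤ}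
    (he : ∀ k : ℤ, k.natAbs ≤ e k + 1) (hij : (i : ZMod p) ≠ j)
    (h : ∀ k : ℤ, (e k : ZMod p) = r ↔ ((k : ZMod p) = i ∨ (k : ZMod p) = j)) :
    residuePart r (thetaSeries g e) =
      thetaSeries (fun l => g (p * l + i)) (fun l => e (p * l + i)) +
        thetaSeries (fun l => g (p * l + j)) (fun l => e (p * l + j)) := by
  rw [residuePart_thetaSeries, ← thetaSeries_ite_residueClass, ← thetaSeries_ite_residueClass,
    ← thetaSeries_add _ _ he]
  congr 1
  funext k
  simp only [h]
  by_cases hi : (k : ZMod p) = i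
  · simp [hi, hij]
  · simp [hi]

lemma thetaSeries_neg :
    thetaSeries g e = thetaSeries (fun l => g (-l)) (fun l => e (-l)) :=
  thetaSeries_comp neg_injective fun k _ => ⟨-k, neg_neg k⟩

end ThetaSeries

section Exponents

variable {N c : ℤ}

lemma two_mul_thetaExp (hN : 1 ≤ N) (hc : 0 ≤ c) (hcN : c ≤ N) (k : ℤ) :
    2 * (thetaExp N c k : ℤ) = N * (k * (k - 1)) + 2 * c * k := by
  rw [coe_thetaExp hN hc hcN]
  linear_combination N * two_mul_triangle k

lemma two_mul_thetaExp_zmod (hN : 1 ≤ N) (hc : 0 ≤ c) (hcN : c ≤ N) (k : ℤ) :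
    2 * (thetaExp N c k : ZMod p) = N * (k * (k - 1)) + 2 * c * k := by
  have := congrArg (Int.cast : ℤ → ZMod p) (two_mul_thetaExp hN hc hcN k)
  push_cast at this
  exact this

lemma thetaExp_eq_add_mul_thetaExp {N' c' k l : ℤ} {a b : ℕ} (hN : 1 ≤ N) (hc : 0 ≤ c) (hcN : c ≤ N)
    (hN' : 1 ≤ N') (hc' : 0 ≤ c') (hcN' : c' ≤ N')
    (h : N * (k * (k - 1)) + 2 * c * k = 2 * a + b * (N' * (l * (l - 1)) + 2 * c' * l)) :
    thetaExp N c k = a + b * thetaExp N' c' l := by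
  zify
  rw [← two_mul_thetaExp hN hc hcN, ← two_mul_thetaExp hN' hc' hcN'] at h
  linarith

lemma thetaExp_three_one_mod_seven (k : ℤ) :
    ((thetaExp 3 1 k : ZMod 7) = 2 ↔ (k : ZMod 7) = (-1 : ℤ)) ∧
      (thetaExp 3 1 k : ZMod 7) ∉ ({3, 4, 6} : Set (ZMod 7)) := by
  have table : ∀ x y : ZMod 7, 2 * y = 3 * (x * (x - 1)) + 2 * 1 * x →
      (y = 2 ↔ x = (-1 : ℤ)) ∧ ¬(y = 3 ∨ y = 4 ∨ y = 6) := by decide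
  exact table k _ (by
    simpa using two_mul_thetaExp_zmod (p := 7) (N := 3) (c := 1) (by norm_num) (by norm_num)
      (by norm_num) k)

lemma thetaExp_one_zero_mod_seven (k : ℤ) :
    ((thetaExp 1 0 k : ZMod 7) = 6 ↔ (k : ZMod 7) = (-3 : ℤ)) ∧
      ((thetaExp 1 0 k : ZMod 7) = 0 ↔ (k : ZMod 7) = (1 : ℤ) ∨ (k : ZMod 7) = (0 : ℤ)) ∧
      ((thetaExp 1 0 k : ZMod 7) = 1 ↔ (k : ZMod 7) = (2 : ℤ) ∨ (k : ZMod 7) = (-1 : ℤ)) ∧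
      ((thetaExp 1 0 k : ZMod 7) = 3 ↔ (k : ZMod 7) = (3 : ℤ) ∨ (k : ZMod 7) = (-2 : ℤ)) ∧
      (thetaExp 1 0 k : ZMod 7) ∉ ({2, 4, 5} : Set (ZMod 7)) := by
  have table : ∀ x y : ZMod 7, 2 * y = 1 * (x * (x - 1)) + 2 * 0 * x →
      (y = 6 ↔ x = (-3 : ℤ)) ∧ (y = 0 ↔ x = (1 : ℤ) ∨ x = (0 : ℤ)) ∧
        (y = 1 ↔ x = (2 : ℤ) ∨ x = (-1 : ℤ)) ∧ (y = 3 ↔ x = (3 : ℤ) ∨ x = (-2 : ℤ)) ∧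
          ¬(y = 2 ∨ y = 4 ∨ y = 5) := by decide
  exact table k _ (by
    simpa using two_mul_thetaExp_zmod (p := 7) (N := 1) (c := 0) (by norm_num) (by norm_num)
      (by norm_num) k)

lemma thetaExp_two_one_mod_seven (k : ℤ) :
    ((thetaExp 2 1 k : ZMod 7) = 0 ↔ (k : ZMod 7) = (0 : ℤ)) ∧
      (thetaExp 2 1 k : ZMod 7) ∉ ({3, 5, 6} : Set (ZMod 7)) := by
  have table : ∀ x y : ZMod 7, 2 * y = 2 * (x * (x - 1)) + 2 * 1 * x →
      (y = 0 ↔ x = (0 : ℤ)) ∧ ¬(y = 3 ∨ y = 5 ∨ y = 6) := by decide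
  exact table k _ (by
    simpa using two_mul_thetaExp_zmod (p := 7) (N := 2) (c := 1) (by norm_num) (by norm_num)
      (by norm_num) k)

end Exponents

lemma altSign_seven_mul_add (l c : ℤ) :
    altSign R ((7 : ℕ) * l + c) = altSign R l * altSign R c := by
  rw [altSign_add, altSign_mul_of_odd (by decide)]

lemma residuePart_eulerProd_eq_zero {r : ZMod 7} (hr : r ∈ ({3, 4, 6} : Set (ZMod 7))) :
    residuePart r (eulerProd R 1) = 0 := by
  rw [eulerProd_one_eq_thetaSeries]
  exact residuePart_thetaSeries_eq_zero fun k hk =>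
    (thetaExp_three_one_mod_seven k).2 (hk ▸ hr)

theorem residuePart_two_eulerProd :
    residuePart (2 : ZMod 7) (eulerProd R 1) = -(X ^ 2 * eulerProd R 49) := by
  have hbound (k : ℤ) : k.natAbs ≤ 2 + 49 * thetaExp 3 1 k + 1 := by
    have := natAbs_le_thetaExp_add_one (N := 3) (c := 1) (by norm_num) (by norm_num) (by norm_num) k
    omega
  have hneg (f : R⟦X⟧) : -f = C (-1) * f := by rw [map_neg, map_one, neg_one_mul]
  rw [← expand_eulerProd (p := 49) (N := 1) (by norm_num) le_rfl, eulerProd_one_eq_thetaSeries,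
    residuePart_thetaSeries_of_iff fun k => (thetaExp_three_one_mod_seven k).1,
    ← thetaSeries_const_add_mul, hneg, ← thetaSeries_const_mul _ _ hbound]
  congr 1
  · funext l
    rw [altSign_seven_mul_add, altSign_of_odd (k := -1) (by decide), mul_comm]
  · funext l
    exact thetaExp_eq_add_mul_thetaExp (by norm_num) (by norm_num) (by norm_num) (by norm_num)
      (by norm_num) (by norm_num) (by push_cast; ring)

lemma residuePart_eulerProd_cube_eq_zero {r : ZMod 7} (hr : r ∈ ({2, 4, 5} : Set (ZMod 7))) :
    residuePart r (eulerProd R 1 ^ 3) = 0 := by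
  rw [eulerProd_one_cube]
  exact residuePart_thetaSeries_eq_zero fun k hk =>
    (thetaExp_one_zero_mod_seven k).2.2.2.2 (hk ▸ hr)

lemma thetaSeries_altSign_one_zero : thetaSeries (altSign R) (thetaExp 1 0) = 0 := by
  have triple := jacobi_triple_product (-1 : Rˣ) (show 1 ≤ 1 from le_rfl) (Nat.zero_le 1)
  simp only [Nat.cast_one, Nat.cast_zero, Units.val_neg, Units.val_one, progressionProd_one_zero,
    add_neg_cancel, map_zero, zero_mul, mul_zero] at triple
  exact triple

theorem residuePart_six_eulerProd_cube :
    residuePart (6 : ZMod 7) (eulerProd R 1 ^ 3) = -(7 * X ^ 6 * eulerProd R 49 ^ 3) := by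
  have hbound (k : ℤ) : k.natAbs ≤ 6 + 49 * thetaExp 1 0 k + 1 := by
    have := natAbs_le_thetaExp_add_one (N := 1) (c := 0) le_rfl le_rfl zero_le_one k
    omega
  have shifted : thetaSeries (fun k => (-7 : R) * (-altSign R k * k) + (-3 : R) * altSign R k)
      (fun k => 6 + 49 * thetaExp 1 0 k) =
      C (-7 : R) * (X ^ 6 * expand 49 (by norm_num) (eulerProd R 1 ^ 3)) := by
    rw [thetaSeries_add _ _ hbound, thetaSeries_const_mul _ _ hbound,
      thetaSeries_const_mul _ _ hbound, thetaSeries_const_add_mul _ _ _ (by norm_num),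
      thetaSeries_const_add_mul _ _ _ (by norm_num), thetaSeries_altSign_one_zero,
      eulerProd_one_cube, map_zero, mul_zero, mul_zero, add_zero]
  have hseven : C (-7 : R) = -7 := by rw [map_neg]; rfl
  rw [map_pow, expand_eulerProd _ le_rfl, hseven, mul_one] at shifted
  rw [← neg_mul, ← neg_mul, mul_assoc, ← shifted, eulerProd_one_cube,
    residuePart_thetaSeries_of_iff fun k => (thetaExp_one_zero_mod_seven k).1]
  congr 1
  · funext l
    rw [altSign_seven_mul_add, altSign_of_odd (k := -3) (by decide)]
    push_cast
    ring
  · funext l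
    exact thetaExp_eq_add_mul_thetaExp (by norm_num) (by norm_num) (by norm_num) (by norm_num)
      (by norm_num) (by norm_num) (by push_cast; ring)

lemma residuePart_phiSeries_eq_zero {r : ZMod 7} (hr : r ∈ ({3, 5, 6} : Set (ZMod 7))) :
    residuePart r (phiSeries R) = 0 :=
  residuePart_thetaSeries_eq_zero fun k hk => (thetaExp_two_one_mod_seven k).2 (hk ▸ hr)

theorem residuePart_zero_phiSeries :
    residuePart (0 : ZMod 7) (phiSeries R) = expand 49 (by norm_num) (phiSeries R) := by
  have hexpand := thetaSeries_const_add_mul (altSign R) (thetaExp 2 1) 0 (p := 49) (by norm_num)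
  rw [pow_zero, one_mul] at hexpand
  rw [phiSeries, residuePart_thetaSeries_of_iff fun k => (thetaExp_two_one_mod_seven k).1,
    ← hexpand]
  congr 1
  · funext l
    rw [altSign_seven_mul_add, altSign_of_even (k := 0) (by decide), mul_one]
  · funext l
    exact thetaExp_eq_add_mul_thetaExp (by norm_num) (by norm_num) (by norm_num) (by norm_num)
      (by norm_num) (by norm_num) (by push_cast; ring)

lemma residuePart_twoPsiSeries_eq_zero {r : ZMod 7} (hr : r ∈ ({2, 4, 5} : Set (ZMod 7))) :
    residuePart r (twoPsiSeries R) = 0 :=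
  residuePart_thetaSeries_eq_zero fun k hk => (thetaExp_one_zero_mod_seven k).2.2.2.2 (hk ▸ hr)

theorem residuePart_six_twoPsiSeries :
    residuePart (6 : ZMod 7) (twoPsiSeries R) =
      X ^ 6 * expand 49 (by norm_num) (twoPsiSeries R) := by
  rw [twoPsiSeries, residuePart_thetaSeries_of_iff fun k => (thetaExp_one_zero_mod_seven k).1,
    ← thetaSeries_const_add_mul]
  congr 1
  funext l
  exact thetaExp_eq_add_mul_thetaExp (by norm_num) (by norm_num) (by norm_num) (by norm_num)
    (by norm_num) (by norm_num) (by push_cast; ring)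

/-- The involution `k ↦ 1 - k` swaps the two classes `i` and `j`, whence the factor `2`. -/
lemma residuePart_twoPsiSeries_of_iff {r : ZMod 7} {a : ℕ} {i j c : ℤ} (hc : 0 ≤ c) (hc7 : c ≤ 7)
    (hij : (i : ZMod 7) ≠ j) (hsum : j = 1 - i)
    (h : ∀ k : ℤ, (thetaExp 1 0 k : ZMod 7) = r ↔ ((k : ZMod 7) = i ∨ (k : ZMod 7) = j))
    (hi : ∀ l : ℤ, (7 * l + i) * (7 * l + i - 1) = 2 * a + 7 * (7 * (l * (l - 1)) + 2 * c * l)) :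
    residuePart r (twoPsiSeries R) =
      2 * X ^ a * expand 7 (by norm_num) (thetaSeries (fun _ => (1 : R)) (thetaExp 7 c)) := by
  have he := natAbs_le_thetaExp_add_one (N := 1) (c := 0) le_rfl le_rfl zero_le_one
  rw [twoPsiSeries, residuePart_thetaSeries_of_iff_or he hij h, mul_assoc,
    ← thetaSeries_const_add_mul, two_mul]
  congr 1
  · congr 1
    funext l
    exact thetaExp_eq_add_mul_thetaExp (by norm_num) (by norm_num) (by norm_num) (by norm_num)
      hc hc7 (by push_cast; linear_combination hi l)
  · rw [thetaSeries_neg]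
    congr 1
    funext l
    exact thetaExp_eq_add_mul_thetaExp (by norm_num) (by norm_num) (by norm_num) (by norm_num)
      hc hc7 (by rw [hsum]; push_cast; linear_combination hi l)

theorem residuePart_zero_twoPsiSeries :
    residuePart (0 : ZMod 7) (twoPsiSeries R) =
      2 * X ^ 0 * expand 7 (by norm_num) (thetaSeries (fun _ => (1 : R)) (thetaExp 7 4)) :=
  residuePart_twoPsiSeries_of_iff (i := 1) (j := 0) (by norm_num) (by norm_num) (by decide) rfl
    (fun k => (thetaExp_one_zero_mod_seven k).2.1) fun l => by push_cast; ring

theorem residuePart_one_twoPsiSeries :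
    residuePart (1 : ZMod 7) (twoPsiSeries R) =
      2 * X ^ 1 * expand 7 (by norm_num) (thetaSeries (fun _ => (1 : R)) (thetaExp 7 5)) :=
  residuePart_twoPsiSeries_of_iff (i := 2) (j := -1) (by norm_num) (by norm_num) (by decide) rfl
    (fun k => (thetaExp_one_zero_mod_seven k).2.2.1) fun l => by push_cast; ring

theorem residuePart_three_twoPsiSeries :
    residuePart (3 : ZMod 7) (twoPsiSeries R) =
      2 * X ^ 3 * expand 7 (by norm_num) (thetaSeries (fun _ => (1 : R)) (thetaExp 7 6)) :=
  residuePart_twoPsiSeries_of_iff (i := 3) (j := -2) (by norm_num) (by norm_num) (by decide) rfl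
    (fun k => (thetaExp_one_zero_mod_seven k).2.2.2.1) fun l => by push_cast; ring

end Dissection

/-! ### Residue classes of exponents of Laurent series -/

section ResidueClasses

variable {R : Type*} [CommRing R] {p : ℕ}

/-- `x` is supported on exponents congruent to `r` modulo `p`. -/
def IsHomogeneousMod (r : ZMod p) (x : LaurentSeries R) : Prop :=
  ∀ n : ℤ, x.coeff n ≠ 0 → (n : ZMod p) = r

namespace IsHomogeneousMod

variable {r s : ZMod p} {x y : LaurentSeries R}

lemma zero : IsHomogeneousMod r (0 : LaurentSeries R) := fun _ hn => absurd rfl hn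

lemma one : IsHomogeneousMod (0 : ZMod p) (1 : LaurentSeries R) := fun n hn => by
  rw [HahnSeries.coeff_one] at hn
  split_ifs at hn with h
  · rw [h, Int.cast_zero]
  · exact absurd rfl hn

lemma add (hx : IsHomogeneousMod r x) (hy : IsHomogeneousMod r y) :
    IsHomogeneousMod r (x + y) := fun n hn => by
  by_contra h
  have hxn : x.coeff n = 0 := not_not.1 (mt (hx n) h)
  have hyn : y.coeff n = 0 := not_not.1 (mt (hy n) h)
  exact hn (by rw [HahnSeries.coeff_add, hxn, hyn, add_zero])

lemma neg (hx : IsHomogeneousMod r x) : IsHomogeneousMod r (-x) := fun n hn =>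
  hx n fun h => hn (by rw [HahnSeries.coeff_neg, h, neg_zero])

lemma sub (hx : IsHomogeneousMod r x) (hy : IsHomogeneousMod r y) :
    IsHomogeneousMod r (x - y) := sub_eq_add_neg x y ▸ hx.add hy.neg

lemma mul (hx : IsHomogeneousMod r x) (hy : IsHomogeneousMod s y) :
    IsHomogeneousMod (r + s) (x * y) := fun n hn => by
  rw [HahnSeries.coeff_mul] at hn
  obtain ⟨ij, hij, h⟩ := Finset.exists_ne_zero_of_sum_ne_zero hn
  rw [Finset.mem_antidiagonal] at hij
  rw [← hx _ (left_ne_zero_of_mul h), ← hy _ (right_ne_zero_of_mul h), ← Int.cast_add, hij.2.2]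

lemma cast (hx : IsHomogeneousMod r x) (h : r = s := by decide) : IsHomogeneousMod s x := h ▸ hx

lemma pow (hx : IsHomogeneousMod r x) (n : ℕ) : IsHomogeneousMod ((n : ZMod p) * r) (x ^ n) := by
  induction n with
  | zero => simpa using one
  | succ n ih => rw [pow_succ]; exact (ih.mul hx).cast (by push_cast; ring)

lemma natCast (n : ℕ) : IsHomogeneousMod (0 : ZMod p) (n : LaurentSeries R) := by
  induction n with
  | zero => simpa using zero
  | succ n ih => push_cast; exact ih.add one

lemma intCast (n : ℤ) : IsHomogeneousMod (0 : ZMod p) (n : LaurentSeries R) := by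
  obtain ⟨m, rfl | rfl⟩ := Int.eq_nat_or_neg n
  · simpa using natCast m
  · simpa using (natCast m).neg

end IsHomogeneousMod

lemma isHomogeneousMod_single (n : ℤ) (c : R) :
    IsHomogeneousMod (n : ZMod p) (HahnSeries.single n c : LaurentSeries R) := fun k hk => by
  rw [HahnSeries.coeff_single] at hk
  split_ifs at hk with h
  · rw [h]
  · exact absurd rfl hk

/-- The projection onto the exponents congruent to `r` modulo `p`. -/
def residueProj (r : ZMod p) : LaurentSeries R →+ LaurentSeries R where
  toFun x := ⟨fun n => if (n : ZMod p) = r then x.coeff n else 0,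
    x.isPWO_support.mono fun _ hn => (ite_ne_right_iff.1 hn).2⟩
  map_zero' := by ext; simp
  map_add' x y := by
    ext n
    simp only [HahnSeries.coeff_add]
    split_ifs <;> simp

lemma coeff_residueProj (r : ZMod p) (x : LaurentSeries R) (n : ℤ) :
    (residueProj r x).coeff n = if (n : ZMod p) = r then x.coeff n else 0 := rfl

lemma isHomogeneousMod_residueProj (r : ZMod p) (x : LaurentSeries R) :
    IsHomogeneousMod r (residueProj r x) := fun _ hn => (ite_ne_right_iff.1 hn).1

namespace IsHomogeneousMod

variable {r s : ZMod p} {x : LaurentSeries R}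

lemma residueProj_self (hx : IsHomogeneousMod r x) : residueProj r x = x := by
  ext n
  rw [coeff_residueProj, ite_eq_left_iff]
  exact fun h => (not_not.1 (mt (hx n) h)).symm

lemma residueProj_of_ne (hx : IsHomogeneousMod r x) (hrs : r ≠ s) : residueProj s x = 0 := by
  ext n
  rw [coeff_residueProj, HahnSeries.coeff_zero, ite_eq_right_iff]
  exact fun hs => not_not.1 (mt (hx n) fun hr => hrs (hr ▸ hs))

end IsHomogeneousMod

lemma residueProj_ofPowerSeries (r : ZMod p) (f : R⟦X⟧) :
    residueProj r (HahnSeries.ofPowerSeries ℤ R f) =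
      HahnSeries.ofPowerSeries ℤ R (residuePart r f) := by
  ext n
  rw [coeff_residueProj, PowerSeries.coeff_coe, PowerSeries.coeff_coe]
  rcases lt_or_ge n 0 with hn | hn
  · simp [hn]
  · lift n to ℕ using hn
    simp [residuePart, Int.not_lt.2 (Int.natCast_nonneg n)]

lemma isHomogeneousMod_ofPowerSeries_residuePart (r : ZMod p) (f : R⟦X⟧) :
    IsHomogeneousMod r (HahnSeries.ofPowerSeries ℤ R (residuePart r f)) :=
  residueProj_ofPowerSeries r f ▸ isHomogeneousMod_residueProj r _

section Sum

variable [NeZero p]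

lemma sum_residueProj (x : LaurentSeries R) : ∑ r : ZMod p, residueProj r x = x := by
  ext n
  simp only [HahnSeries.coeff_sum, coeff_residueProj, Finset.sum_ite_eq, Finset.mem_univ, if_true]

lemma residueProj_zero_mul {x : LaurentSeries R} (hx : IsHomogeneousMod (0 : ZMod p) x)
    (y : LaurentSeries R) :
    residueProj (0 : ZMod p) (x * y) = x * residueProj (0 : ZMod p) y := by
  have hmul (r : ZMod p) : IsHomogeneousMod r (x * residueProj r y) :=
    (hx.mul (isHomogeneousMod_residueProj r y)).cast (zero_add r)
  conv_lhs => rw [← sum_residueProj (p := p) y, Finset.mul_sum, map_sum]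
  rw [Finset.sum_eq_single_of_mem 0 (Finset.mem_univ 0) fun r _ hr => (hmul r).residueProj_of_ne hr,
    (hmul 0).residueProj_self]

lemma ofPowerSeries_eq_sum_residuePart (f : R⟦X⟧) :
    HahnSeries.ofPowerSeries ℤ R f =
      ∑ r : ZMod p, HahnSeries.ofPowerSeries ℤ R (residuePart r f) := by
  simp only [← residueProj_ofPowerSeries, sum_residueProj]

lemma eq_zero_of_sum_isHomogeneousMod_eq_zero {x : ZMod p → LaurentSeries R}
    (hx : ∀ r, IsHomogeneousMod r (x r)) (hsum : ∑ r, x r = 0) (r : ZMod p) : x r = 0 := by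
  have hproj : residueProj r (∑ s, x s) = x r := by
    rw [map_sum, Finset.sum_eq_single_of_mem r (Finset.mem_univ r) fun s _ hs =>
      (hx s).residueProj_of_ne hs, (hx r).residueProj_self]
  rw [← hproj, hsum, map_zero]

end Sum

end ResidueClasses

lemma eq_zero_of_seven_isHomogeneousMod {R : Type*} [CommRing R]
    {x₀ x₁ x₂ x₃ x₄ x₅ x₆ : LaurentSeries R}
    (h₀ : IsHomogeneousMod (0 : ZMod 7) x₀) (h₁ : IsHomogeneousMod (1 : ZMod 7) x₁)
    (h₂ : IsHomogeneousMod (2 : ZMod 7) x₂) (h₃ : IsHomogeneousMod (3 : ZMod 7) x₃)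
    (h₄ : IsHomogeneousMod (4 : ZMod 7) x₄) (h₅ : IsHomogeneousMod (5 : ZMod 7) x₅)
    (h₆ : IsHomogeneousMod (6 : ZMod 7) x₆) (hsum : x₀ + x₁ + x₂ + x₃ + x₄ + x₅ + x₆ = 0) :
    x₀ = 0 ∧ x₁ = 0 ∧ x₂ = 0 ∧ x₃ = 0 ∧ x₄ = 0 ∧ x₅ = 0 ∧ x₆ = 0 := by
  have hx : ∀ r : ZMod 7, IsHomogeneousMod r (![x₀, x₁, x₂, x₃, x₄, x₅, x₆] r) := by
    intro r
    fin_cases r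
    exacts [h₀, h₁, h₂, h₃, h₄, h₅, h₆]
  have hzero := eq_zero_of_sum_isHomogeneousMod_eq_zero hx ((Fin.sum_univ_seven _).trans hsum)
  exact ⟨hzero 0, hzero 1, hzero 2, hzero 3, hzero 4, hzero 5, hzero 6⟩

section Substitution

variable {R : Type*} [CommRing R]

/-- The substitution `q ↦ q ^ p` on Laurent series. -/
def qSubst (p : ℕ) [NeZero p] : LaurentSeries R →+* LaurentSeries R :=
  HahnSeries.embDomainRingHom (AddMonoidHom.mulLeft (p : ℤ))
    (mul_right_injective₀ (Nat.cast_ne_zero.2 (NeZero.ne p)))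
    fun _ _ => mul_le_mul_iff_of_pos_left (Nat.cast_pos.2 (NeZero.pos p))

variable {p : ℕ} [NeZero p]

lemma coeff_qSubst_mul (x : LaurentSeries R) (n : ℤ) : (qSubst p x).coeff (p * n) = x.coeff n :=
  HahnSeries.embDomain_mk_coeff _ _

lemma coeff_qSubst_of_not_dvd (x : LaurentSeries R) {n : ℤ} (hn : ¬(p : ℤ) ∣ n) :
    (qSubst p x).coeff n = 0 :=
  HahnSeries.embDomain_of_notMem_range fun ⟨a, ha⟩ => hn ⟨a, ha.symm⟩

lemma qSubst_ofPowerSeries (f : R⟦X⟧) :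
    qSubst p (HahnSeries.ofPowerSeries ℤ R f) =
      HahnSeries.ofPowerSeries ℤ R (expand p (NeZero.ne p) f) := by
  have hp : (0 : ℤ) < p := Nat.cast_pos.2 (NeZero.pos p)
  ext n
  by_cases hn : (p : ℤ) ∣ n
  · obtain ⟨k, rfl⟩ := hn
    rw [coeff_qSubst_mul, PowerSeries.coeff_coe, PowerSeries.coeff_coe, Int.natAbs_mul,
      Int.natAbs_natCast, coeff_expand_mul]
    simp only [mul_neg_iff, hp, hp.not_gt, true_and, false_and, or_false]
  · rw [coeff_qSubst_of_not_dvd _ hn, PowerSeries.coeff_coe,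
      coeff_expand_of_not_dvd _ _ _ (mt Int.natCast_dvd.2 hn), ite_self]

lemma coeff_qSubst (x : LaurentSeries R) (n : ℤ) :
    (qSubst p x).coeff n = if (p : ℤ) ∣ n then x.coeff (n / p) else 0 := by
  split_ifs with hn
  · obtain ⟨k, rfl⟩ := hn
    rw [coeff_qSubst_mul, Int.mul_ediv_cancel_left _ (Nat.cast_ne_zero.2 (NeZero.ne p))]
  · exact coeff_qSubst_of_not_dvd x hn

lemma qSubst_qSubst (r : ℕ) [NeZero r] (x : LaurentSeries R) :
    qSubst p (qSubst r x) = qSubst (p * r) x := by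
  ext n
  by_cases hn : (p : ℤ) ∣ n
  · obtain ⟨k, rfl⟩ := hn
    have hp : (p : ℤ) ≠ 0 := Nat.cast_ne_zero.2 (NeZero.ne p)
    rw [coeff_qSubst_mul]
    simp only [coeff_qSubst, Nat.cast_mul, mul_dvd_mul_iff_left hp,
      ← Int.ediv_ediv_of_nonneg (Int.natCast_nonneg p), Int.mul_ediv_cancel_left _ hp]
  · rw [coeff_qSubst_of_not_dvd _ hn, coeff_qSubst_of_not_dvd]
    exact fun h => hn (dvd_of_mul_right_dvd (Nat.cast_mul (α := ℤ) p r ▸ h))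

lemma isHomogeneousMod_qSubst (x : LaurentSeries R) :
    IsHomogeneousMod (0 : ZMod p) (qSubst p x) := fun n hn =>
  (ZMod.intCast_zmod_eq_zero_iff_dvd n p).2 (not_not.1 (mt (coeff_qSubst_of_not_dvd x) hn))

lemma IsHomogeneousMod.qSubst {m : ℕ} {r : ZMod m} {x : LaurentSeries R}
    (hx : IsHomogeneousMod r x) :
    IsHomogeneousMod ((p : ZMod m) * r) (D5Tower.qSubst p x) := fun n hn => by
  obtain ⟨k, rfl⟩ := not_not.1 (mt (coeff_qSubst_of_not_dvd x) hn)
  rw [coeff_qSubst_mul] at hn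
  rw [← hx k hn, Int.cast_mul, Int.cast_natCast]

/-- The operator `U_p`, sending `∑ f(n) qⁿ` to `∑ f(pn) qⁿ`. -/
def uOp (p : ℕ) [NeZero p] : LaurentSeries R →+ LaurentSeries R where
  toFun x := HahnSeries.ofSuppBddBelow (fun n => x.coeff (p * n)) (by
    refine ⟨min x.order 0, fun n hn => ?_⟩
    have horder : x.order ≤ p * n := HahnSeries.order_le_of_coeff_ne_zero hn
    by_contra! hlt
    have hp : (1 : ℤ) ≤ p := Nat.one_le_cast.2 (NeZero.pos p)
    nlinarith [min_le_left x.order 0, min_le_right x.order 0])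
  map_zero' := by ext; simp
  map_add' _ _ := rfl

lemma coeff_uOp (x : LaurentSeries R) (n : ℤ) : (uOp p x).coeff n = x.coeff (p * n) := rfl

lemma qSubst_uOp (x : LaurentSeries R) : qSubst p (uOp p x) = residueProj (0 : ZMod p) x := by
  ext n
  rw [coeff_residueProj]
  by_cases hn : (p : ℤ) ∣ n
  · rw [if_pos ((ZMod.intCast_zmod_eq_zero_iff_dvd n p).2 hn)]
    obtain ⟨k, rfl⟩ := hn
    rw [coeff_qSubst_mul, coeff_uOp]
  · rw [if_neg (mt (ZMod.intCast_zmod_eq_zero_iff_dvd n p).1 hn), coeff_qSubst_of_not_dvd _ hn]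

lemma qSubst_injective : Function.Injective (qSubst p : LaurentSeries R → LaurentSeries R) :=
  HahnSeries.embDomain_injective

lemma uOp_eq_of_residueProj_eq {x y : LaurentSeries R}
    (h : residueProj (0 : ZMod p) x = qSubst p y) : uOp p x = y :=
  qSubst_injective ((qSubst_uOp x).trans h)

lemma uOp_qSubst_mul (x y : LaurentSeries R) : uOp p (qSubst p x * y) = x * uOp p y :=
  uOp_eq_of_residueProj_eq (by
    rw [residueProj_zero_mul (isHomogeneousMod_qSubst x), map_mul, qSubst_uOp])

end Substitution

/-! ### The 7-dissection of `J₁` and of its theta quotients -/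

/-- The field in which the modular equations are derived; complex coefficients are chosen for the
seventh roots of unity. -/
abbrev QSeries : Type := LaurentSeries ℂ

/-- The embedding of power series into Laurent series. -/
abbrev toLaurent : ℂ⟦X⟧ →+* QSeries := HahnSeries.ofPowerSeries ℤ ℂ

instance charZero_qSeries : CharZero QSeries :=
  charZero_of_injective_ringHom (f := toLaurent.comp (PowerSeries.C (R := ℂ)))
    (HahnSeries.ofPowerSeries_injective.comp PowerSeries.C_injective)

/-- The variable `q`. -/
def qVar : QSeries := toLaurent X

/-- The Laurent series `J_N`. -/
def euler (N : ℕ) : QSeries := toLaurent (eulerProd ℂ N)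

lemma toLaurent_X : toLaurent X = qVar := rfl

lemma toLaurent_eulerProd (N : ℕ) : toLaurent (eulerProd ℂ N) = euler N := rfl

lemma qVar_ne_zero : qVar ≠ 0 := by simp [qVar, HahnSeries.ofPowerSeries_X]

lemma isHomogeneousMod_inv_qVar_pow (n : ℕ) : IsHomogeneousMod (-n : ZMod 7) (qVar ^ n)⁻¹ := by
  have hinv : qVar ^ n * HahnSeries.single (-n : ℤ) (1 : ℂ) = 1 := by
    rw [qVar, ← map_pow, HahnSeries.ofPowerSeries_X_pow, HahnSeries.single_mul_single]
    simp
  rw [← eq_inv_of_mul_eq_one_right hinv]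
  exact (isHomogeneousMod_single _ _).cast (by push_cast; rfl)

lemma euler_ne_zero (N : ℕ) (hN : 1 ≤ N := by norm_num) : euler N ≠ 0 :=
  ((isUnit_eulerProd hN).map toLaurent).ne_zero

lemma qSubst_euler (p : ℕ) [NeZero p] (N : ℕ) (hN : 1 ≤ N := by norm_num) :
    qSubst p (euler N) = euler (p * N) := by
  rw [euler, qSubst_ofPowerSeries, expand_eulerProd _ hN, euler]

lemma qSubst_qVar (p : ℕ) [NeZero p] : qSubst p qVar = qVar ^ p := by
  rw [qVar, qSubst_ofPowerSeries, expand_X, map_pow]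

lemma toLaurent_eq_sum_residuePart (f : ℂ⟦X⟧) :
    toLaurent f = toLaurent (residuePart (0 : ZMod 7) f) + toLaurent (residuePart (1 : ZMod 7) f) +
      toLaurent (residuePart (2 : ZMod 7) f) + toLaurent (residuePart (3 : ZMod 7) f) +
      toLaurent (residuePart (4 : ZMod 7) f) + toLaurent (residuePart (5 : ZMod 7) f) +
      toLaurent (residuePart (6 : ZMod 7) f) :=
  (ofPowerSeries_eq_sum_residuePart (p := 7) f).trans (Fin.sum_univ_seven _)

/-- The factor `1 / (q² J₄₉)` normalising the residue-`2` part of `J₁` to `-1`. -/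
def dissScale : QSeries := (qVar ^ 2 * euler 49)⁻¹

/-- The normalised part of `J₁` with exponents `≡ 0 (mod 7)`. -/
def u : QSeries := toLaurent (residuePart (0 : ZMod 7) (eulerProd ℂ 1)) * dissScale

/-- The normalised part of `J₁` with exponents `≡ 1 (mod 7)`. -/
def v : QSeries := toLaurent (residuePart (1 : ZMod 7) (eulerProd ℂ 1)) * dissScale

/-- The normalised part of `J₁` with exponents `≡ 5 (mod 7)`. -/
def w : QSeries := toLaurent (residuePart (5 : ZMod 7) (eulerProd ℂ 1)) * dissScale

/-- The quotient `J₁ / (q² J₄₉)`. -/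
def Z : QSeries := euler 1 * dissScale

/-- The image of `u` under `q ↦ q²`. -/
def u₂ : QSeries := qSubst 2 u

/-- The image of `v` under `q ↦ q²`. -/
def v₂ : QSeries := qSubst 2 v

/-- The image of `w` under `q ↦ q²`. -/
def w₂ : QSeries := qSubst 2 w

/-- The image `J₂ / (q⁴ J₉₈)` of `Z` under `q ↦ q²`. -/
def Z₂ : QSeries := qSubst 2 Z

lemma dissScale_ne_zero : dissScale ≠ 0 :=
  inv_ne_zero (mul_ne_zero (pow_ne_zero _ qVar_ne_zero) (euler_ne_zero 49))

lemma qVar_sq_mul_euler_mul_dissScale : qVar ^ 2 * euler 49 * dissScale = 1 :=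
  mul_inv_cancel₀ (mul_ne_zero (pow_ne_zero _ qVar_ne_zero) (euler_ne_zero 49))

lemma Z_ne_zero : Z ≠ 0 := mul_ne_zero (euler_ne_zero 1) dissScale_ne_zero

lemma isHomogeneousMod_dissScale : IsHomogeneousMod (5 : ZMod 7) dissScale := by
  have h : dissScale = (qVar ^ 2)⁻¹ * qSubst 7 (euler 7)⁻¹ := by
    rw [dissScale, mul_inv, map_inv₀, qSubst_euler 7 7]
  rw [h]
  exact ((isHomogeneousMod_inv_qVar_pow 2).mul (isHomogeneousMod_qSubst _)).cast

lemma isHomogeneousMod_u : IsHomogeneousMod (5 : ZMod 7) u :=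
  ((isHomogeneousMod_ofPowerSeries_residuePart 0 _).mul isHomogeneousMod_dissScale).cast

lemma isHomogeneousMod_v : IsHomogeneousMod (6 : ZMod 7) v :=
  ((isHomogeneousMod_ofPowerSeries_residuePart 1 _).mul isHomogeneousMod_dissScale).cast

lemma isHomogeneousMod_w : IsHomogeneousMod (3 : ZMod 7) w :=
  ((isHomogeneousMod_ofPowerSeries_residuePart 5 _).mul isHomogeneousMod_dissScale).cast

lemma isHomogeneousMod_u₂ : IsHomogeneousMod (3 : ZMod 7) u₂ := isHomogeneousMod_u.qSubst.cast

lemma isHomogeneousMod_v₂ : IsHomogeneousMod (5 : ZMod 7) v₂ := isHomogeneousMod_v.qSubst.cast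

lemma isHomogeneousMod_w₂ : IsHomogeneousMod (6 : ZMod 7) w₂ := isHomogeneousMod_w.qSubst.cast

/-- An integer multiple of a monomial in the six dissection components; its residue class is a
function of the exponents. -/
def dissMonomial (n : ℤ) (i j k l m o : ℕ) : QSeries :=
  n * u ^ i * v ^ j * w ^ k * u₂ ^ l * v₂ ^ m * w₂ ^ o

lemma isHomogeneousMod_dissMonomial {n : ℤ} {i j k l m o : ℕ} {r : ZMod 7}
    (h : (i * 5 + j * 6 + k * 3 + l * 3 + m * 5 + o * 6 : ZMod 7) = r := by decide) :
    IsHomogeneousMod r (dissMonomial n i j k l m o) :=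
  (((((((IsHomogeneousMod.intCast n).mul (isHomogeneousMod_u.pow i)).mul
    (isHomogeneousMod_v.pow j)).mul (isHomogeneousMod_w.pow k)).mul (isHomogeneousMod_u₂.pow l)).mul
    (isHomogeneousMod_v₂.pow m)).mul (isHomogeneousMod_w₂.pow o)).cast (by rw [← h]; ring)

lemma IsHomogeneousMod.add_add {r : ZMod 7} {x y z : QSeries} (hx : IsHomogeneousMod r x)
    (hy : IsHomogeneousMod r y) (hz : IsHomogeneousMod r z) : IsHomogeneousMod r (x + y + z) :=
  (hx.add hy).add hz

lemma Z_eq : Z = u + v + w - 1 := by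
  have hsum := toLaurent_eq_sum_residuePart (eulerProd ℂ 1)
  rw [residuePart_eulerProd_eq_zero (r := 3) (by simp),
    residuePart_eulerProd_eq_zero (r := 4) (by simp),
    residuePart_eulerProd_eq_zero (r := 6) (by simp), residuePart_two_eulerProd] at hsum
  simp only [map_neg, map_mul, map_pow, map_zero] at hsum
  have hscale := qVar_sq_mul_euler_mul_dissScale
  rw [qVar, euler] at hscale
  rw [Z, u, v, w, euler, hsum]
  linear_combination -hscale

lemma Z₂_eq : Z₂ = u₂ + v₂ + w₂ - 1 := by
  rw [Z₂, Z_eq, map_sub, map_add, map_add, map_one, u₂, v₂, w₂]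

/-- The normalised residue parts of `J₁³`. -/
def cubeComp (r : ZMod 7) : QSeries :=
  toLaurent (residuePart r (eulerProd ℂ 1 ^ 3)) * dissScale ^ 3

lemma isHomogeneousMod_cubeComp {r s : ZMod 7} (h : r + 1 = s := by decide) :
    IsHomogeneousMod s (cubeComp r) :=
  ((isHomogeneousMod_ofPowerSeries_residuePart r _).mul (isHomogeneousMod_dissScale.pow 3)).cast
    (by rw [← h]; congr 1)

lemma Z_cube : Z ^ 3 = -7 + cubeComp 0 + cubeComp 1 + cubeComp 3 := by
  have hsum := toLaurent_eq_sum_residuePart (eulerProd ℂ 1 ^ 3)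
  rw [residuePart_eulerProd_cube_eq_zero (r := 2) (by simp),
    residuePart_eulerProd_cube_eq_zero (r := 4) (by simp),
    residuePart_eulerProd_cube_eq_zero (r := 5) (by simp), residuePart_six_eulerProd_cube] at hsum
  simp only [map_neg, map_mul, map_pow, map_zero, map_ofNat] at hsum
  have hscale : (toLaurent X ^ 2 * toLaurent (eulerProd ℂ 49) * dissScale) ^ 3 = 1 := by
    rw [← euler, ← qVar, qVar_sq_mul_euler_mul_dissScale, one_pow]
  rw [Z, mul_pow, euler, hsum, cubeComp, cubeComp, cubeComp]
  linear_combination -7 * hscale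

theorem uvw_relations :
    u * v * w = -1 ∧ u = v ^ 2 - v * w ^ 2 ∧ v = w ^ 2 - w * u ^ 2 ∧ w = u ^ 2 - u * v ^ 2 := by
  have hcube := Z_cube
  rw [Z_eq] at hcube
  obtain ⟨h₀, -, -, h₃, -, h₅, h₆⟩ := eq_zero_of_seven_isHomogeneousMod
    (x₀ := dissMonomial 6 1 1 1 0 0 0 + dissMonomial 6 0 0 0 0 0 0)
    (x₁ := dissMonomial 1 3 0 0 0 0 0 + dissMonomial 3 0 2 1 0 0 0 +
      dissMonomial (-6) 1 0 1 0 0 0 - cubeComp 0)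
    (x₂ := dissMonomial 1 0 0 3 0 0 0 + dissMonomial 3 2 1 0 0 0 0 +
      dissMonomial (-6) 0 1 1 0 0 0 - cubeComp 1)
    (x₃ := dissMonomial (-3) 2 0 0 0 0 0 + dissMonomial 3 1 2 0 0 0 0 + dissMonomial 3 0 0 1 0 0 0)
    (x₄ := dissMonomial 1 0 3 0 0 0 0 + dissMonomial 3 1 0 2 0 0 0 +
      dissMonomial (-6) 1 1 0 0 0 0 - cubeComp 3)
    (x₅ := dissMonomial (-3) 0 2 0 0 0 0 + dissMonomial 3 0 1 2 0 0 0 + dissMonomial 3 1 0 0 0 0 0)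
    (x₆ := dissMonomial (-3) 0 0 2 0 0 0 + dissMonomial 3 2 0 1 0 0 0 + dissMonomial 3 0 1 0 0 0 0)
    (.add isHomogeneousMod_dissMonomial isHomogeneousMod_dissMonomial)
    (.sub (.add_add isHomogeneousMod_dissMonomial isHomogeneousMod_dissMonomial
      isHomogeneousMod_dissMonomial) isHomogeneousMod_cubeComp)
    (.sub (.add_add isHomogeneousMod_dissMonomial isHomogeneousMod_dissMonomial
      isHomogeneousMod_dissMonomial) isHomogeneousMod_cubeComp)
    (.add_add isHomogeneousMod_dissMonomial isHomogeneousMod_dissMonomial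
      isHomogeneousMod_dissMonomial)
    (.sub (.add_add isHomogeneousMod_dissMonomial isHomogeneousMod_dissMonomial
      isHomogeneousMod_dissMonomial) isHomogeneousMod_cubeComp)
    (.add_add isHomogeneousMod_dissMonomial isHomogeneousMod_dissMonomial
      isHomogeneousMod_dissMonomial)
    (.add_add isHomogeneousMod_dissMonomial isHomogeneousMod_dissMonomial
      isHomogeneousMod_dissMonomial)
    (by simp only [dissMonomial]; push_cast; linear_combination hcube)
  simp only [dissMonomial] at h₀ h₃ h₅ h₆
  push_cast at h₀ h₃ h₅ h₆
  refine ⟨?_, ?_, ?_, ?_⟩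
  · linear_combination (1 / 6) * h₀
  · linear_combination (1 / 3) * h₅
  · linear_combination (1 / 3) * h₆
  · linear_combination (1 / 3) * h₃

theorem uvw₂_relations :
    u₂ * v₂ * w₂ = -1 ∧ u₂ = v₂ ^ 2 - v₂ * w₂ ^ 2 ∧ v₂ = w₂ ^ 2 - w₂ * u₂ ^ 2 ∧
      w₂ = u₂ ^ 2 - u₂ * v₂ ^ 2 := by
  obtain ⟨huvw, hu, hv, hw⟩ := uvw_relations
  refine ⟨?_, ?_, ?_, ?_⟩
  · simpa only [u₂, v₂, w₂, map_mul, map_neg, map_one] using congrArg (qSubst 2) huvw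
  · simpa only [u₂, v₂, w₂, map_mul, map_sub, map_pow] using congrArg (qSubst 2) hu
  · simpa only [u₂, v₂, w₂, map_mul, map_sub, map_pow] using congrArg (qSubst 2) hv
  · simpa only [u₂, v₂, w₂, map_mul, map_sub, map_pow] using congrArg (qSubst 2) hw

/-- The normalised residue parts of `J₁² / J₂`. -/
def phiComp (r : ZMod 7) : QSeries :=
  toLaurent (residuePart r (phiSeries ℂ)) * (euler 98 / euler 49 ^ 2)

lemma isHomogeneousMod_phiComp (r : ZMod 7) : IsHomogeneousMod r (phiComp r) := by
  have hscale : euler 98 / euler 49 ^ 2 = qSubst 7 (euler 14 / euler 7 ^ 2) := by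
    rw [map_div₀, map_pow, qSubst_euler 7 14, qSubst_euler 7 7]
  rw [phiComp, hscale]
  exact ((isHomogeneousMod_ofPowerSeries_residuePart r _).mul (isHomogeneousMod_qSubst _)).cast
    (add_zero r)

theorem phiComp_mul_Z₂ : (1 + phiComp 1 + phiComp 2 + phiComp 4) * Z₂ = Z ^ 2 := by
  have hsum := toLaurent_eq_sum_residuePart (phiSeries ℂ)
  rw [residuePart_phiSeries_eq_zero (r := 3) (by simp),
    residuePart_phiSeries_eq_zero (r := 5) (by simp),
    residuePart_phiSeries_eq_zero (r := 6) (by simp), residuePart_zero_phiSeries] at hsum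
  simp only [map_zero, add_zero] at hsum
  have hphi : euler 2 * toLaurent (phiSeries ℂ) = euler 1 ^ 2 := by
    rw [euler, euler, ← map_mul, eulerProd_two_mul_phiSeries, map_pow]
  have hphi49 : euler 98 * toLaurent (expand 49 (by norm_num) (phiSeries ℂ)) = euler 49 ^ 2 := by
    simpa only [map_mul, map_pow, qSubst_euler 49 2, qSubst_euler 49 1, qSubst_ofPowerSeries]
      using congrArg (qSubst 49) hphi
  have h49 := euler_ne_zero 49
  have h98 := euler_ne_zero 98
  have hq := qVar_ne_zero
  have hcomp : 1 + phiComp 1 + phiComp 2 + phiComp 4 =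
      toLaurent (phiSeries ℂ) * (euler 98 / euler 49 ^ 2) := by
    rw [hsum, phiComp, phiComp, phiComp]
    field_simp
    linear_combination -hphi49
  rw [hcomp, Z₂, Z, dissScale, map_mul, map_inv₀, map_mul, map_pow, qSubst_euler 2 1,
    qSubst_euler 2 49, qSubst_qVar]
  field_simp
  linear_combination hphi

/-- The normalised residue parts of `2 J₂² / J₁`. -/
def psiComp (r : ZMod 7) : QSeries :=
  toLaurent (residuePart r (twoPsiSeries ℂ)) * ((qVar ^ 6)⁻¹ * (euler 49 / (2 * euler 98 ^ 2)))

lemma isHomogeneousMod_psiComp {r s : ZMod 7} (h : r + 1 = s := by decide) :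
    IsHomogeneousMod s (psiComp r) := by
  have hscale : euler 49 / (2 * euler 98 ^ 2) = qSubst 7 (euler 7 / (2 * euler 14 ^ 2)) := by
    rw [map_div₀, map_mul, map_pow, qSubst_euler 7 14, qSubst_euler 7 7, map_ofNat]
  rw [psiComp, hscale]
  exact ((isHomogeneousMod_ofPowerSeries_residuePart r _).mul
    ((isHomogeneousMod_inv_qVar_pow 6).mul (isHomogeneousMod_qSubst _))).cast
    (by rw [← h]; congr 1)

theorem psiComp_mul_Z : (1 + psiComp 0 + psiComp 1 + psiComp 3) * Z = Z₂ ^ 2 := by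
  have hsum := toLaurent_eq_sum_residuePart (twoPsiSeries ℂ)
  rw [residuePart_twoPsiSeries_eq_zero (r := 2) (by simp),
    residuePart_twoPsiSeries_eq_zero (r := 4) (by simp),
    residuePart_twoPsiSeries_eq_zero (r := 5) (by simp), residuePart_six_twoPsiSeries] at hsum
  simp only [map_zero, add_zero, map_mul, map_pow, toLaurent_X] at hsum
  have hpsi : euler 1 * toLaurent (twoPsiSeries ℂ) = 2 * euler 2 ^ 2 := by
    rw [euler, euler, ← map_mul, eulerProd_one_mul_twoPsiSeries, map_mul, map_pow, map_ofNat]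
  have hpsi49 : euler 49 * toLaurent (expand 49 (by norm_num) (twoPsiSeries ℂ)) =
      2 * euler 98 ^ 2 := by
    simpa only [map_mul, map_pow, map_ofNat, qSubst_euler 49 2, qSubst_euler 49 1,
      qSubst_ofPowerSeries] using congrArg (qSubst 49) hpsi
  have h49 := euler_ne_zero 49
  have h98 := euler_ne_zero 98
  have hq := qVar_ne_zero
  have hcomp : 1 + psiComp 0 + psiComp 1 + psiComp 3 =
      toLaurent (twoPsiSeries ℂ) * ((qVar ^ 6)⁻¹ * (euler 49 / (2 * euler 98 ^ 2))) := by
    rw [hsum, psiComp, psiComp, psiComp]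
    field_simp
    linear_combination -qVar ^ 6 * hpsi49
  rw [hcomp, Z₂, Z, dissScale, map_mul, map_inv₀, map_mul, map_pow, qSubst_euler 2 1,
    qSubst_euler 2 49, qSubst_qVar]
  field_simp
  linear_combination hpsi

/-- The eta quotient `q² J₁ J₁₄⁷ / (J₂ J₇⁷)`. -/
def etaQuot : QSeries := qVar ^ 2 * euler 1 * euler 14 ^ 7 / (euler 2 * euler 7 ^ 7)

theorem prod_psiComp_mul_etaQuot : psiComp 0 * psiComp 1 * psiComp 3 * qSubst 7 etaQuot = 1 := by
  have hprod := congrArg (fun f => qSubst 7 (toLaurent f)) (septic_thetaSeries_product (R := ℂ))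
  simp only [map_mul, map_pow, toLaurent_eulerProd, qSubst_euler 7 1, qSubst_euler 7 14,
    qSubst_euler 7 7, qSubst_euler 7 2, qSubst_ofPowerSeries] at hprod
  have h14 := euler_ne_zero 14
  have h49 := euler_ne_zero 49
  have hq := qVar_ne_zero
  rw [psiComp, psiComp, psiComp, residuePart_zero_twoPsiSeries, residuePart_one_twoPsiSeries,
    residuePart_three_twoPsiSeries, etaQuot, map_div₀]
  simp only [map_mul, map_pow, map_ofNat, toLaurent_X, qSubst_euler 7 1, qSubst_euler 7 14,
    qSubst_euler 7 7, qSubst_euler 7 2, qSubst_qVar]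
  field_simp
  linear_combination hprod

/-! ### Algebraic relations between the dissection components -/

section Nonvanishing

lemma coeff_one_eulerProd_one : coeff 1 (eulerProd ℂ 1) = -1 := by
  simp only [eulerProd, infProd, coeff_mk, Finset.prod_range_succ, Finset.prod_range_zero, one_mul,
    zero_add, pow_one, one_add_one_eq_two]
  rw [show (1 - X) * (1 - X ^ 2 : ℂ⟦X⟧) = 1 - X + X ^ 2 * (X - 1) by ring]
  simp [coeff_X_pow_mul', coeff_one]

/-- Clearing the scale, the coefficients of `q` on the two sides are `0` and `-1`. -/
lemma w_mul_w₂_ne_v_mul_u₂ : w * w₂ ≠ v * u₂ := by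
  intro h
  have hclear : toLaurent (residuePart (5 : ZMod 7) (eulerProd ℂ 1)) *
      qSubst 2 (toLaurent (residuePart (5 : ZMod 7) (eulerProd ℂ 1))) =
      toLaurent (residuePart (1 : ZMod 7) (eulerProd ℂ 1)) *
        qSubst 2 (toLaurent (residuePart (0 : ZMod 7) (eulerProd ℂ 1))) := by
    apply mul_right_cancel₀ (mul_ne_zero dissScale_ne_zero
      ((map_ne_zero (qSubst 2 : QSeries →+* QSeries)).2 dissScale_ne_zero))
    rw [w, w₂, v, u₂, w, u, map_mul, map_mul] at h
    linear_combination h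
  rw [qSubst_ofPowerSeries, qSubst_ofPowerSeries, ← map_mul, ← map_mul] at hclear
  have hcoeff := congrArg (coeff 1) (HahnSeries.ofPowerSeries_injective hclear)
  rw [coeff_mul, coeff_mul, Finset.Nat.antidiagonal_succ] at hcoeff
  have hres : (0 : ZMod 7) ≠ 5 ∧ (1 : ZMod 7) ≠ 5 ∧ (0 : ZMod 7) ≠ 1 := by decide
  simp [residuePart, coeff_one_eulerProd_one, constantCoeff_eulerProd one_ne_zero, hres] at hcoeff

lemma u_ne_zero : u ≠ 0 := fun h => by simpa [h] using uvw_relations.1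

lemma v_ne_zero : v ≠ 0 := fun h => by simpa [h] using uvw_relations.1

lemma w_ne_zero : w ≠ 0 := fun h => by simpa [h] using uvw_relations.1

lemma u₂_ne_zero : u₂ ≠ 0 := (map_ne_zero (qSubst 2 : QSeries →+* QSeries)).2 u_ne_zero

lemma v₂_ne_zero : v₂ ≠ 0 := (map_ne_zero (qSubst 2 : QSeries →+* QSeries)).2 v_ne_zero

lemma w₂_ne_zero : w₂ ≠ 0 := (map_ne_zero (qSubst 2 : QSeries →+* QSeries)).2 w_ne_zero

end Nonvanishing

lemma phiComp_system :
    phiComp 1 = phiComp 2 * w₂ - 2 * u * w ∧ phiComp 2 = phiComp 4 * v₂ - 2 * v * w ∧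
      phiComp 4 = phiComp 1 * u₂ - 2 * u * v ∧ u₂ + phiComp 4 * w₂ + 2 * w = u ^ 2 ∧
      w₂ + phiComp 1 * v₂ + 2 * v = w ^ 2 := by
  have hprod := phiComp_mul_Z₂
  rw [Z_eq, Z₂_eq] at hprod
  have hmon {n : ℤ} {i j k l m o : ℕ} {r : ZMod 7} (h) : IsHomogeneousMod r _ :=
    isHomogeneousMod_dissMonomial (n := n) (i := i) (j := j) (k := k) (l := l) (m := m) (o := o) h
  have h1 := isHomogeneousMod_phiComp 1
  have h2 := isHomogeneousMod_phiComp 2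
  have h4 := isHomogeneousMod_phiComp 4
  obtain ⟨-, e₁, e₂, e₃, e₄, -, e₆⟩ := eq_zero_of_seven_isHomogeneousMod
    (x₀ := -1 + phiComp 1 * w₂ + phiComp 2 * v₂ + phiComp 4 * u₂ - 1)
    (x₁ := -phiComp 1 + phiComp 2 * w₂ - dissMonomial 2 1 0 1 0 0 0)
    (x₂ := -phiComp 2 + phiComp 4 * v₂ - dissMonomial 2 0 1 1 0 0 0)
    (x₃ := dissMonomial 1 0 0 0 1 0 0 + phiComp 4 * w₂ + dissMonomial 2 0 0 1 0 0 0 -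
      dissMonomial 1 2 0 0 0 0 0)
    (x₄ := -phiComp 4 + phiComp 1 * u₂ - dissMonomial 2 1 1 0 0 0 0)
    (x₅ := dissMonomial 1 0 0 0 0 1 0 + phiComp 2 * u₂ + dissMonomial 2 1 0 0 0 0 0 -
      dissMonomial 1 0 2 0 0 0 0)
    (x₆ := dissMonomial 1 0 0 0 0 0 1 + phiComp 1 * v₂ + dissMonomial 2 0 1 0 0 0 0 -
      dissMonomial 1 0 0 2 0 0 0)
    ((IsHomogeneousMod.one.neg.add (h1.mul isHomogeneousMod_w₂).cast |>.add
      (h2.mul isHomogeneousMod_v₂).cast |>.add (h4.mul isHomogeneousMod_u₂).cast).sub .one)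
    ((h1.neg.add (h2.mul isHomogeneousMod_w₂).cast).sub (hmon (by decide)))
    ((h2.neg.add (h4.mul isHomogeneousMod_v₂).cast).sub (hmon (by decide)))
    (.sub (.add_add (hmon (by decide)) (h4.mul isHomogeneousMod_w₂).cast (hmon (by decide)))
      (hmon (by decide)))
    ((h4.neg.add (h1.mul isHomogeneousMod_u₂).cast).sub (hmon (by decide)))
    (.sub (.add_add (hmon (by decide)) (h2.mul isHomogeneousMod_u₂).cast (hmon (by decide)))
      (hmon (by decide)))
    (.sub (.add_add (hmon (by decide)) (h1.mul isHomogeneousMod_v₂).cast (hmon (by decide)))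
      (hmon (by decide)))
    (by simp only [dissMonomial]; push_cast; linear_combination hprod)
  simp only [dissMonomial] at e₁ e₂ e₃ e₄ e₆
  push_cast at e₁ e₂ e₃ e₄ e₆
  refine ⟨?_, ?_, ?_, ?_, ?_⟩
  · linear_combination -e₁
  · linear_combination -e₂
  · linear_combination -e₄
  · linear_combination e₃
  · linear_combination e₆

lemma psiComp_system :
    psiComp 0 = psiComp 1 * v - 2 * u₂ * v₂ ∧ psiComp 1 = psiComp 3 * u - 2 * u₂ * w₂ ∧
      psiComp 3 = psiComp 0 * w - 2 * v₂ * w₂ ∧ w + psiComp 3 * v + 2 * u₂ = v₂ ^ 2 := by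
  have hprod := psiComp_mul_Z
  rw [Z_eq, Z₂_eq] at hprod
  have hmon {n : ℤ} {i j k l m o : ℕ} {r : ZMod 7} (h) : IsHomogeneousMod r _ :=
    isHomogeneousMod_dissMonomial (n := n) (i := i) (j := j) (k := k) (l := l) (m := m) (o := o) h
  have h1 : IsHomogeneousMod 1 (psiComp 0) := isHomogeneousMod_psiComp
  have h2 : IsHomogeneousMod 2 (psiComp 1) := isHomogeneousMod_psiComp
  have h4 : IsHomogeneousMod 4 (psiComp 3) := isHomogeneousMod_psiComp
  obtain ⟨-, e₁, e₂, e₃, e₄, -, -⟩ := eq_zero_of_seven_isHomogeneousMod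
    (x₀ := -1 + psiComp 0 * v + psiComp 1 * u + psiComp 3 * w - 1)
    (x₁ := -psiComp 0 + psiComp 1 * v - dissMonomial 2 0 0 0 1 1 0)
    (x₂ := -psiComp 1 + psiComp 3 * u - dissMonomial 2 0 0 0 1 0 1)
    (x₃ := dissMonomial 1 0 0 1 0 0 0 + psiComp 3 * v + dissMonomial 2 0 0 0 1 0 0 -
      dissMonomial 1 0 0 0 0 2 0)
    (x₄ := -psiComp 3 + psiComp 0 * w - dissMonomial 2 0 0 0 0 1 1)
    (x₅ := dissMonomial 1 1 0 0 0 0 0 + psiComp 1 * w + dissMonomial 2 0 0 0 0 1 0 -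
      dissMonomial 1 0 0 0 0 0 2)
    (x₆ := dissMonomial 1 0 1 0 0 0 0 + psiComp 0 * u + dissMonomial 2 0 0 0 0 0 1 -
      dissMonomial 1 0 0 0 2 0 0)
    ((IsHomogeneousMod.one.neg.add (h1.mul isHomogeneousMod_v).cast |>.add
      (h2.mul isHomogeneousMod_u).cast |>.add (h4.mul isHomogeneousMod_w).cast).sub .one)
    ((h1.neg.add (h2.mul isHomogeneousMod_v).cast).sub (hmon (by decide)))
    ((h2.neg.add (h4.mul isHomogeneousMod_u).cast).sub (hmon (by decide)))
    (.sub (.add_add (hmon (by decide)) (h4.mul isHomogeneousMod_v).cast (hmon (by decide)))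
      (hmon (by decide)))
    ((h4.neg.add (h1.mul isHomogeneousMod_w).cast).sub (hmon (by decide)))
    (.sub (.add_add (hmon (by decide)) (h2.mul isHomogeneousMod_w).cast (hmon (by decide)))
      (hmon (by decide)))
    (.sub (.add_add (hmon (by decide)) (h1.mul isHomogeneousMod_u).cast (hmon (by decide)))
      (hmon (by decide)))
    (by simp only [dissMonomial]; push_cast; linear_combination hprod)
  simp only [dissMonomial] at e₁ e₂ e₃ e₄
  push_cast at e₁ e₂ e₃ e₄
  refine ⟨?_, ?_, ?_, ?_⟩
  · linear_combination -e₁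
  · linear_combination -e₂
  · linear_combination -e₄
  · linear_combination e₃

lemma phiComp_one : phiComp 1 = -(u * w + v * w * w₂ + u * v * v₂ * w₂) := by
  obtain ⟨k₁, k₂, k₄, -, -⟩ := phiComp_system
  apply mul_left_cancel₀ (two_ne_zero (α := QSeries))
  linear_combination k₁ + w₂ * k₂ + w₂ * v₂ * k₄ + phiComp 1 * uvw₂_relations.1

lemma phiComp_four : phiComp 4 = -(v * w * u₂ * w₂ + u * w * u₂ + u * v) := by
  obtain ⟨k₁, k₂, k₄, -, -⟩ := phiComp_system
  apply mul_left_cancel₀ (two_ne_zero (α := QSeries))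
  linear_combination k₄ + u₂ * k₁ + u₂ * w₂ * k₂ + phiComp 4 * uvw₂_relations.1

lemma psiComp_zero : psiComp 0 = -(u₂ * v₂ + w₂ * u₂ * v + v₂ * w₂ * u * v) := by
  obtain ⟨k₁, k₂, k₄, -⟩ := psiComp_system
  apply mul_left_cancel₀ (two_ne_zero (α := QSeries))
  linear_combination k₁ + v * k₂ + v * u * k₄ + psiComp 0 * uvw_relations.1

lemma psiComp_one : psiComp 1 = -(u₂ * v₂ * w * u + v₂ * w₂ * u + w₂ * u₂) := by
  obtain ⟨k₁, k₂, k₄, -⟩ := psiComp_system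
  apply mul_left_cancel₀ (two_ne_zero (α := QSeries))
  linear_combination k₂ + u * k₄ + w * u * k₁ + psiComp 1 * uvw_relations.1

lemma psiComp_three : psiComp 3 = -(w₂ * u₂ * w * v + v₂ * u₂ * w + v₂ * w₂) := by
  obtain ⟨k₁, k₂, k₄, -⟩ := psiComp_system
  apply mul_left_cancel₀ (two_ne_zero (α := QSeries))
  linear_combination k₄ + w * k₁ + w * v * k₂ + psiComp 3 * uvw_relations.1

theorem mixed_relations :
    w + u₂ + u * v₂ = 0 ∧ v + w₂ + w * u₂ = 0 ∧ u + v₂ + v * w₂ = 0 := by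
  obtain ⟨r₁, -, r₃, r₄⟩ := uvw_relations
  obtain ⟨s₁, s₂, -, -⟩ := uvw₂_relations
  obtain ⟨-, -, -, k₃, k₆⟩ := phiComp_system
  obtain ⟨-, -, -, l₃⟩ := psiComp_system
  rw [phiComp_four] at k₃
  rw [phiComp_one] at k₆
  rw [psiComp_three] at l₃
  have hφ₃ : u * v * (v + w₂ + w * u₂) + w * u₂ * w₂ * (u + v₂ + v * w₂) = 0 := by
    linear_combination -k₃ + r₄ + u₂ * r₁ + w * s₁
  have hφ₆ : u * w * (u + v₂ + v * w₂) + v * w₂ * v₂ * (w + u₂ + u * v₂) = 0 := by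
    linear_combination -k₆ + r₃ + w₂ * r₁ + v * s₁
  have hψ₃ : v₂ * w₂ * (v + w₂ + w * u₂) + u₂ * w * v * (u + v₂ + v * w₂) = 0 := by
    linear_combination -l₃ + s₂ + w * s₁ + u₂ * r₁
  have huv : u + v₂ + v * w₂ = 0 := by
    refine (mul_eq_zero.1 ?_).resolve_left (mul_ne_zero (mul_ne_zero w_ne_zero u₂_ne_zero)
      (sub_ne_zero.2 w_mul_w₂_ne_v_mul_u₂))
    linear_combination w * hφ₃ - u₂ * hψ₃ - (v + w₂ + w * u₂) * r₁ + (v + w₂ + w * u₂) * s₁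
  have hvw : v + w₂ + w * u₂ = 0 := by
    refine (mul_eq_zero.1 ?_).resolve_left (mul_ne_zero u_ne_zero v_ne_zero)
    linear_combination hφ₃ - w * u₂ * w₂ * huv
  have hwu : w + u₂ + u * v₂ = 0 := by
    refine (mul_eq_zero.1 ?_).resolve_left (mul_ne_zero (mul_ne_zero v_ne_zero w₂_ne_zero)
      v₂_ne_zero)
    linear_combination hφ₆ - u * w * huv
  exact ⟨hwu, hvw, huv⟩

/-! ### Deciding polynomial identities modulo two relations

The dissection components turn out to be polynomials in three quantities subject to two relations.
Coefficient lists are used instead of `MvPolynomial` because the kernel can compute with them. -/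

section CoefficientLists

variable {α : Type}

/-- Sum of two coefficient lists (constant term first). -/
def listAdd [Add α] : List α → List α → List α
  | [], y => y
  | x, [] => x
  | a :: x, b :: y => (a + b) :: listAdd x y

/-- Product of two coefficient lists. -/
def listMul [Add α] [Mul α] [Zero α] : List α → List α → List α
  | [], _ => []
  | a :: x, y => listAdd (y.map (a * ·)) (0 :: listMul x y)

/-- The value at `x` of a coefficient list whose coefficients are interpreted by `f`. -/
def horner {K : Type*} [CommRing K] (x : K) (f : α → K) : List α → K
  | [] => 0
  | a :: l => f a + x * horner x f l

variable {K : Type*} [CommRing K] {x : K} {f : α → K}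

lemma horner_listAdd [Add α] (hadd : ∀ a b, f (a + b) = f a + f b) (l l' : List α) :
    horner x f (listAdd l l') = horner x f l + horner x f l' := by
  induction l generalizing l' with
  | nil => simp [listAdd, horner]
  | cons a l ih =>
    cases l' with
    | nil => simp [listAdd, horner]
    | cons b l' => simp only [listAdd, horner, hadd, ih]; ring

lemma horner_map {h : α → α} {c : K} (hh : ∀ b, f (h b) = c * f b) (l : List α) :
    horner x f (l.map h) = c * horner x f l := by
  induction l with
  | nil => simp [horner]
  | cons a l ih => simp only [List.map_cons, horner, hh, ih]; ring

lemma horner_listMul [Add α] [Mul α] [Zero α] (hzero : f 0 = 0)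
    (hadd : ∀ a b, f (a + b) = f a + f b) (hmul : ∀ a b, f (a * b) = f a * f b) (l l' : List α) :
    horner x f (listMul l l') = horner x f l * horner x f l' := by
  induction l with
  | nil => simp [listMul, horner]
  | cons a l ih =>
    rw [listMul, horner_listAdd hadd, horner_map (hmul a)]
    simp only [horner, hzero, ih]
    ring

lemma horner_append_singleton (l : List α) (a : α) :
    horner x f (l ++ [a]) = horner x f l + x ^ l.length * f a := by
  induction l with
  | nil => simp [horner]
  | cons b l ih => simp only [List.cons_append, horner, ih, List.length_cons]; ring

end CoefficientLists

/-- Integer polynomials in one variable, as coefficient lists. -/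
def Poly₁ : Type := List ℤ

/-- Polynomials in a second variable over `Poly₁`, as coefficient lists. -/
def Poly₂ : Type := List Poly₁

/-- Polynomials in a third variable over `Poly₂`, as coefficient lists. -/
def Poly₃ : Type := List Poly₂

instance : Zero Poly₁ := ⟨([] : List ℤ)⟩

instance : Add Poly₁ := ⟨listAdd (α := ℤ)⟩

instance : Mul Poly₁ := ⟨listMul (α := ℤ)⟩

instance : Zero Poly₂ := ⟨([] : List Poly₁)⟩

instance : Add Poly₂ := ⟨listAdd (α := Poly₁)⟩

instance : Mul Poly₂ := ⟨listMul (α := Poly₁)⟩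

instance : Zero Poly₃ := ⟨([] : List Poly₂)⟩

instance : Add Poly₃ := ⟨listAdd (α := Poly₂)⟩

instance : Mul Poly₃ := ⟨listMul (α := Poly₂)⟩

instance : IntCast Poly₃ := ⟨fun n => [[[n]]]⟩

instance (n : ℕ) [n.AtLeastTwo] : OfNat Poly₃ n := ⟨((n : ℤ) : Poly₃)⟩

instance : One Poly₃ := ⟨((1 : ℤ) : Poly₃)⟩

instance : Neg Poly₃ := ⟨fun p => ((-1 : ℤ) : Poly₃) * p⟩

instance : Sub Poly₃ := ⟨fun p p' => p + -p'⟩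

instance : Pow Poly₃ ℕ := ⟨fun p n => npowRec n p⟩

section Evaluation

variable {K : Type*} [CommRing K]

/-- Evaluation of a one-variable polynomial at `m`. -/
def eval₁ (m : K) : Poly₁ → K := horner (α := ℤ) m Int.cast

/-- Evaluation of a two-variable polynomial: `m` for the inner and `r` for the outer variable. -/
def eval₂ (m r : K) : Poly₂ → K := horner (α := Poly₁) r (eval₁ m)

/-- Evaluation of a three-variable polynomial: `m` for the innermost, `k` for the outermost
variable. -/
def eval₃ (k m r : K) : Poly₃ → K := horner (α := Poly₂) k (eval₂ m r)

variable (k m r : K)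

lemma eval₁_add (p p' : Poly₁) : eval₁ m (p + p') = eval₁ m p + eval₁ m p' :=
  horner_listAdd Int.cast_add _ _

lemma eval₁_mul (p p' : Poly₁) : eval₁ m (p * p') = eval₁ m p * eval₁ m p' :=
  horner_listMul Int.cast_zero Int.cast_add Int.cast_mul _ _

lemma eval₂_add (p p' : Poly₂) : eval₂ m r (p + p') = eval₂ m r p + eval₂ m r p' :=
  horner_listAdd (eval₁_add m) _ _

lemma eval₂_mul (p p' : Poly₂) : eval₂ m r (p * p') = eval₂ m r p * eval₂ m r p' :=
  horner_listMul rfl (eval₁_add m) (eval₁_mul m) _ _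

@[simp]
lemma eval₃_add (p p' : Poly₃) : eval₃ k m r (p + p') = eval₃ k m r p + eval₃ k m r p' :=
  horner_listAdd (eval₂_add m r) _ _

@[simp]
lemma eval₃_mul (p p' : Poly₃) : eval₃ k m r (p * p') = eval₃ k m r p * eval₃ k m r p' :=
  horner_listMul rfl (eval₂_add m r) (eval₂_mul m r) _ _

@[simp]
lemma eval₃_intCast (n : ℤ) : eval₃ k m r n = n := by
  change horner (α := Poly₂) k (eval₂ m r) [[[n]]] = n
  simp [eval₂, eval₁, horner]

@[simp]
lemma eval₃_ofNat (n : ℕ) [n.AtLeastTwo] : eval₃ k m r ofNat(n) = OfNat.ofNat n :=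
  (eval₃_intCast k m r n).trans (Int.cast_natCast n)

@[simp]
lemma eval₃_one : eval₃ k m r 1 = 1 := (eval₃_intCast k m r 1).trans Int.cast_one

@[simp]
lemma eval₃_neg (p : Poly₃) : eval₃ k m r (-p) = -eval₃ k m r p := by
  change eval₃ k m r (((-1 : ℤ) : Poly₃) * p) = _
  rw [eval₃_mul, eval₃_intCast]
  simp

@[simp]
lemma eval₃_sub (p p' : Poly₃) : eval₃ k m r (p - p') = eval₃ k m r p - eval₃ k m r p' := by
  change eval₃ k m r (p + -p') = _
  rw [eval₃_add, eval₃_neg, sub_eq_add_neg]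

@[simp]
lemma eval₃_pow (p : Poly₃) (n : ℕ) : eval₃ k m r (p ^ n) = eval₃ k m r p ^ n := by
  induction n with
  | zero => exact (eval₃_one k m r).trans (pow_zero _).symm
  | succ n ih =>
    change eval₃ k m r (p ^ n * p) = _
    rw [eval₃_mul, ih, pow_succ]

end Evaluation

section Reduction

/-- The two relations modulo which polynomials in `(k, m, r)` are reduced. -/
structure IsCurvePoint {K : Type*} [CommRing K] (k m r : K) : Prop where
  septic : k ^ 7 * (m ^ 4 * (m + 1)) = 1
  cubic : r ^ 3 + (m - 1) * r ^ 2 - m * r + m ^ 2 + m = 0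

/-- Whether all coefficients vanish. -/
def allZero (p : Poly₁) : Bool := List.all p (· == (0 : ℤ))

/-- The coefficients of `1, r, r²` in the reduction of `r³`. -/
def cubicCoeffs : Poly₁ × Poly₁ × Poly₁ := ([0, -1, -1], [0, 1], [1, -1])

/-- The coefficients of `1, r, r²` after reduction by the cubic relation. -/
def reduceCubic : Poly₂ → Poly₁ × Poly₁ × Poly₁
  | [] => (0, 0, 0)
  | a :: l => match reduceCubic l with
    | (x, y, z) => (a + cubicCoeffs.1 * z, x + cubicCoeffs.2.1 * z, y + cubicCoeffs.2.2 * z)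

/-- Whether a polynomial vanishes modulo the cubic relation. -/
def isZeroModCubic (p : Poly₂) : Bool := match reduceCubic p with
  | (x, y, z) => allZero x && allZero y && allZero z

/-- The polynomial `m⁴ (m + 1)`, which is `k⁻⁷`. -/
def septicInv : Poly₂ := [[0, 0, 0, 0, 1, 1]]

/-- Reduction by the septic relation: each coefficient of the second argument is pushed into a
window of seven coefficients while the lowest one is multiplied by `k⁻⁷` and moved to the top. -/
def foldSeptic : List Poly₂ → List Poly₂ → List Poly₂
  | l, [] => l
  | [], _ :: _ => []
  | a :: l, c :: cs => foldSeptic (l ++ [septicInv * a + c]) cs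

/-- The seven coefficients of `k⁷⁻ᵈ p` after reduction by the septic relation, where `d` is the
length of `p`. -/
def septicCoeffs (p : Poly₃) : List Poly₂ := foldSeptic [0, 0, 0, 0, 0, 0, 0] p

/-- Whether a polynomial vanishes modulo both relations. -/
def isZeroOnCurve (p : Poly₃) : Bool := (septicCoeffs p).all isZeroModCubic

variable {K : Type*} [CommRing K] {k m r : K}

lemma eval₁_eq_zero_of_allZero {p : Poly₁} (h : allZero p = true) : eval₁ m p = 0 := by
  induction p with
  | nil => rfl
  | cons a l ih =>
    simp only [allZero, List.all_cons, Bool.and_eq_true, beq_iff_eq] at h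
    change (a : K) + m * eval₁ m l = 0
    rw [ih h.2, h.1, Int.cast_zero, mul_zero, add_zero]

lemma eval₂_eq_reduceCubic (h : IsCurvePoint k m r) (p : Poly₂) :
    eval₂ m r p = eval₁ m (reduceCubic p).1 + r * eval₁ m (reduceCubic p).2.1 +
      r ^ 2 * eval₁ m (reduceCubic p).2.2 := by
  induction p with
  | nil =>
    have hzero : eval₁ m 0 = 0 := rfl
    simp [reduceCubic, eval₂, horner, hzero]
  | cons a l ih =>
    change eval₁ m a + r * eval₂ m r l = _
    have h₀ : eval₁ m cubicCoeffs.1 = -m - m ^ 2 := by simp [eval₁, horner, cubicCoeffs]; ring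
    have h₁ : eval₁ m cubicCoeffs.2.1 = m := by simp [eval₁, horner, cubicCoeffs]
    have h₂ : eval₁ m cubicCoeffs.2.2 = 1 - m := by simp [eval₁, horner, cubicCoeffs]; ring
    simp only [ih, reduceCubic, eval₁_add, eval₁_mul, h₀, h₁, h₂]
    linear_combination eval₁ m (reduceCubic l).2.2 * h.cubic

lemma eval₂_eq_zero_of_isZeroModCubic (h : IsCurvePoint k m r) {p : Poly₂}
    (hp : isZeroModCubic p = true) : eval₂ m r p = 0 := by
  simp only [isZeroModCubic, Bool.and_eq_true] at hp
  rw [eval₂_eq_reduceCubic h, eval₁_eq_zero_of_allZero hp.1.1, eval₁_eq_zero_of_allZero hp.1.2,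
    eval₁_eq_zero_of_allZero hp.2, mul_zero, mul_zero, add_zero, add_zero]

lemma eval₃_foldSeptic (h : IsCurvePoint k m r) (cs l : List Poly₂) (hl : l.length = 7) :
    eval₃ k m r l + k ^ 7 * eval₃ k m r cs =
      k ^ cs.length * eval₃ k m r (foldSeptic l cs) := by
  induction cs generalizing l with
  | nil => cases l <;> simp [foldSeptic, eval₃, horner]
  | cons c cs ih =>
    obtain _ | ⟨a, l⟩ := l
    · simp at hl
    replace hl : l.length = 6 := by simpa using hl
    have hinv : eval₂ m r septicInv = m ^ 4 * (m + 1) := by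
      simp [septicInv, eval₂, eval₁, horner]; ring
    have hpush : eval₃ k m r (l ++ [septicInv * a + c]) =
        eval₃ k m r l + k ^ 6 * (m ^ 4 * (m + 1) * eval₂ m r a + eval₂ m r c) := by
      rw [eval₃, horner_append_singleton, eval₂_add, eval₂_mul, hinv, hl]
    rw [foldSeptic, List.length_cons, pow_succ' k cs.length, mul_assoc k, ← ih _ (by simp [hl]),
      hpush]
    change eval₂ m r a + k * eval₃ k m r l + k ^ 7 * (eval₂ m r c + k * eval₃ k m r cs) = _
    linear_combination -eval₂ m r a * h.septic

lemma pow_seven_mul_eval₃ (h : IsCurvePoint k m r) (p : Poly₃) :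
    k ^ 7 * eval₃ k m r p = k ^ List.length p * eval₃ k m r (septicCoeffs p) := by
  have hwindow : eval₃ k m r ([0, 0, 0, 0, 0, 0, 0] : List Poly₂) = 0 := by
    have hzero : eval₂ m r 0 = 0 := rfl
    simp [eval₃, horner, hzero]
  rw [septicCoeffs, ← eval₃_foldSeptic h p _ rfl, hwindow, zero_add]

theorem eval₃_eq_zero_of_isZeroOnCurve (h : IsCurvePoint k m r) {p : Poly₃}
    (hp : isZeroOnCurve p = true) : eval₃ k m r p = 0 := by
  have hcoeffs : ∀ l : List Poly₂, l.all isZeroModCubic = true → eval₃ k m r l = 0 := by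
    intro l hl
    induction l with
    | nil => rfl
    | cons a l ih =>
      rw [List.all_cons, Bool.and_eq_true] at hl
      change eval₂ m r a + k * eval₃ k m r l = 0
      rw [ih hl.2, eval₂_eq_zero_of_isZeroModCubic h hl.1, mul_zero, add_zero]
  have hred := pow_seven_mul_eval₃ h p
  rw [hcoeffs _ hp, mul_zero] at hred
  linear_combination (m ^ 4 * (m + 1)) * hred - eval₃ k m r p * h.septic

end Reduction

/-! ### A common parametrisation of the dissection components -/

/-- The parameter of residue class `3`; `w`, `v`, `u` are monomials in it over `ℤ[μ]`. -/
def κ : QSeries := u * v ^ 2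

/-- The first parameter of residue class `0`. -/
def μ : QSeries := w ^ 3 * u

/-- The second parameter of residue class `0`, cubic over `ℤ[μ]`. -/
def ρ : QSeries := u * w ^ 2 * u₂

lemma w_eq : w = μ * κ := by
  rw [μ, κ]
  linear_combination (w - u * v * w ^ 2) * uvw_relations.1

lemma v_eq : v = -(μ * κ ^ 2) := by
  rw [μ, κ]
  linear_combination v * (1 - u * v * w + (u * v * w) ^ 2) * uvw_relations.1

lemma u₂_eq : u₂ = ρ * κ := by
  rw [ρ, κ]
  linear_combination (u₂ - u * v * w * u₂) * uvw_relations.1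

lemma u_eq : u = (μ + 1) * μ ^ 2 * κ ^ 4 := by
  obtain ⟨huvw, hsum, -⟩ := uvw_relations
  have hv : (μ + 1) * v = -u ^ 2 * w := by
    rw [μ]
    linear_combination u * w * hsum + v * huvw
  have hseven : (u * v * w) ^ 7 = -1 := by rw [huvw]; norm_num
  calc u = -u ^ 2 * w * w ^ 6 * u ^ 6 * v ^ 7 := by linear_combination u * hseven
    _ = (μ + 1) * v * w ^ 6 * u ^ 6 * v ^ 7 := by rw [hv]
    _ = (μ + 1) * μ ^ 2 * κ ^ 4 := by rw [μ, κ]; ring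

lemma w₂_eq : w₂ = μ * (1 - ρ) * κ ^ 2 := by
  linear_combination mixed_relations.2.1 - v_eq - u₂ * w_eq - μ * κ * u₂_eq

lemma v₂_eq : v₂ = -(μ ^ 2 * (μ + ρ) * κ ^ 4) := by
  have h : v₂ = v * w * (w + u₂) := by
    linear_combination v₂ * uvw_relations.1 - v * w * mixed_relations.1
  rw [h, u₂_eq, v_eq, w_eq]
  ring

lemma isCurvePoint : IsCurvePoint κ μ ρ := by
  have hsix : (u * v * w) ^ 6 = 1 := by rw [uvw_relations.1]; norm_num
  have hseptic : κ ^ 7 * (μ ^ 4 * (μ + 1)) = 1 :=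
    calc κ ^ 7 * (μ ^ 4 * (μ + 1)) = (μ + 1) * μ ^ 2 * κ ^ 4 * (μ ^ 2 * κ ^ 3) := by ring
      _ = u * (μ ^ 2 * κ ^ 3) := by rw [← u_eq]
      _ = 1 := by rw [μ, κ]; linear_combination hsix
  have hne : κ ≠ 0 ∧ μ ≠ 0 := by constructor <;> rintro h <;> simp [h] at hseptic
  refine ⟨hseptic, (mul_eq_zero.1 ?_).resolve_left
    (mul_ne_zero (pow_ne_zero 3 hne.2) (pow_ne_zero 7 hne.1))⟩
  have h := uvw₂_relations.1
  rw [u₂_eq, v₂_eq, w₂_eq] at h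
  linear_combination h + hseptic

lemma κ_ne_zero : κ ≠ 0 := fun h => by simpa [h] using isCurvePoint.septic

lemma isHomogeneousMod_κ : IsHomogeneousMod (3 : ZMod 7) κ :=
  (isHomogeneousMod_u.mul (isHomogeneousMod_v.pow 2)).cast

lemma isHomogeneousMod_μ : IsHomogeneousMod (0 : ZMod 7) μ :=
  ((isHomogeneousMod_w.pow 3).mul isHomogeneousMod_u).cast

lemma isHomogeneousMod_ρ : IsHomogeneousMod (0 : ZMod 7) ρ :=
  ((isHomogeneousMod_u.mul (isHomogeneousMod_w.pow 2)).mul isHomogeneousMod_u₂).cast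

/-- The series obtained by substituting `κ`, `μ`, `ρ` into a polynomial. -/
abbrev evalCurve : Poly₃ → QSeries := eval₃ κ μ ρ

lemma evalCurve_eq_zero {p : Poly₃} (hp : isZeroOnCurve p = true) : evalCurve p = 0 :=
  eval₃_eq_zero_of_isZeroOnCurve isCurvePoint hp

section ResidueZero

lemma isHomogeneousMod_eval₁ (p : Poly₁) : IsHomogeneousMod (0 : ZMod 7) (eval₁ μ p) := by
  induction p with
  | nil => exact .zero
  | cons a l ih => exact (IsHomogeneousMod.intCast a).add (isHomogeneousMod_μ.mul ih).cast

lemma isHomogeneousMod_eval₂ (p : Poly₂) : IsHomogeneousMod (0 : ZMod 7) (eval₂ μ ρ p) := by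
  induction p with
  | nil => exact .zero
  | cons a l ih => exact (isHomogeneousMod_eval₁ a).add (isHomogeneousMod_ρ.mul ih).cast

/-- Whether the coefficients of `k ^ (n + i)` with `7 ∣ n + i` vanish modulo the cubic relation,
`i` being the position in the list. -/
def isZeroAtMultiples : ℕ → List Poly₂ → Bool
  | _, [] => true
  | n, a :: l => (n % 7 != 0 || isZeroModCubic a) && isZeroAtMultiples (n + 1) l

/-- Whether the powers of `k` with exponent divisible by `7` have vanishing coefficient modulo both
relations. -/
def residueZeroVanishes (p : Poly₃) : Bool :=
  isZeroAtMultiples (List.length p) (septicCoeffs p)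

lemma residueProj_pow_mul_eval₃ {n : ℕ} {l : List Poly₂} (h : isZeroAtMultiples n l = true) :
    residueProj (0 : ZMod 7) (κ ^ n * eval₃ κ μ ρ l) = 0 := by
  induction l generalizing n with
  | nil => simp [eval₃, horner]
  | cons a l ih =>
    simp only [isZeroAtMultiples, Bool.and_eq_true, Bool.or_eq_true] at h
    change residueProj 0 (κ ^ n * (eval₂ μ ρ a + κ * eval₃ κ μ ρ l)) = 0
    rw [mul_add, map_add, ← mul_assoc, ← pow_succ, ih h.2, add_zero]
    rcases h.1 with hn | ha
    · refine ((isHomogeneousMod_κ.pow n).mul (isHomogeneousMod_eval₂ a)).residueProj_of_ne ?_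
      intro h0
      have hcast : ((n * 3 : ℕ) : ZMod 7) = 0 := by
        push_cast
        linear_combination h0
      rw [ZMod.natCast_eq_zero_iff] at hcast
      simp only [bne_iff_ne, ne_eq] at hn
      omega
    · rw [eval₂_eq_zero_of_isZeroModCubic isCurvePoint ha, mul_zero, map_zero]

theorem residueProj_evalCurve_eq_zero {p : Poly₃} (hp : residueZeroVanishes p = true) :
    residueProj (0 : ZMod 7) (evalCurve p) = 0 := by
  have hcomm : residueProj (0 : ZMod 7) (κ ^ 7 * evalCurve p) =
      κ ^ 7 * residueProj 0 (evalCurve p) :=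
    residueProj_zero_mul (isHomogeneousMod_κ.pow 7).cast _
  rw [pow_seven_mul_eval₃ isCurvePoint p, residueProj_pow_mul_eval₃ hp] at hcomm
  exact (mul_eq_zero.1 hcomm.symm).resolve_left (pow_ne_zero _ κ_ne_zero)

end ResidueZero

/-- `u` in terms of the parameters. -/
def uPoly : Poly₃ := [[], [], [], [], [[0, 0, 1, 1]]]

/-- `v` in terms of the parameters. -/
def vPoly : Poly₃ := [[], [], [[0, -1]]]

/-- `w` in terms of the parameters. -/
def wPoly : Poly₃ := [[], [[0, 1]]]

/-- `u₂` in terms of the parameters. -/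
def u₂Poly : Poly₃ := [[], [[], [1]]]

/-- `v₂` in terms of the parameters. -/
def v₂Poly : Poly₃ := [[], [], [], [], [[0, 0, 0, -1], [0, 0, -1]]]

/-- `w₂` in terms of the parameters. -/
def w₂Poly : Poly₃ := [[], [], [[0, 1], [0, -1]]]

/-- `Z` in terms of the parameters. -/
def ZPoly : Poly₃ := uPoly + vPoly + wPoly - 1

/-- `Z₂` in terms of the parameters. -/
def Z₂Poly : Poly₃ := u₂Poly + v₂Poly + w₂Poly - 1

@[simp]
lemma evalCurve_uPoly : evalCurve uPoly = u := by
  simp [u_eq, eval₃, eval₂, eval₁, horner, uPoly]; ring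

@[simp]
lemma evalCurve_vPoly : evalCurve vPoly = v := by
  simp [v_eq, eval₃, eval₂, eval₁, horner, vPoly]; ring

@[simp]
lemma evalCurve_wPoly : evalCurve wPoly = w := by
  simp [w_eq, eval₃, eval₂, eval₁, horner, wPoly]; ring

@[simp]
lemma evalCurve_u₂Poly : evalCurve u₂Poly = u₂ := by
  simp [u₂_eq, eval₃, eval₂, eval₁, horner, u₂Poly]; ring

@[simp]
lemma evalCurve_v₂Poly : evalCurve v₂Poly = v₂ := by
  simp [v₂_eq, eval₃, eval₂, eval₁, horner, v₂Poly]; ring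

@[simp]
lemma evalCurve_w₂Poly : evalCurve w₂Poly = w₂ := by
  simp [w₂_eq, eval₃, eval₂, eval₁, horner, w₂Poly]; ring

@[simp]
lemma evalCurve_ZPoly : evalCurve ZPoly = Z := by simp [ZPoly, Z_eq]

@[simp]
lemma evalCurve_Z₂Poly : evalCurve Z₂Poly = Z₂ := by simp [Z₂Poly, Z₂_eq]

/-! ### The modular equation of degree seven for `Z` -/

section ModularEquation

/-- The monic septic polynomial satisfied by `Z`, with `s` the Hauptmodul of `Γ₀(7)` at `q ^ 7`. -/
def modularPoly {K : Type*} [CommRing K] (s : K) : Polynomial K :=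
  .X ^ 7 + 7 * .X ^ 6 + 21 * .X ^ 5 + 49 * .X ^ 4 + 147 * .X ^ 3 + 343 * .X ^ 2 + 343 * .X +
    .C s * (7 * .X ^ 3 + 35 * .X ^ 2 + 49 * .X) - .C s ^ 2

variable {K : Type*} [CommRing K]

lemma eval_modularPoly (s z : K) : (modularPoly s).eval z =
    z ^ 7 + 7 * z ^ 6 + 21 * z ^ 5 + 49 * z ^ 4 + 147 * z ^ 3 + 343 * z ^ 2 + 343 * z +
      s * (7 * z ^ 3 + 35 * z ^ 2 + 49 * z) - s ^ 2 := by
  simp [modularPoly]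

lemma monic_modularPoly (s : K) : (modularPoly s).Monic := by
  rw [modularPoly]
  monicity!

lemma natDegree_modularPoly [Nontrivial K] (s : K) : (modularPoly s).natDegree = 7 := by
  rw [modularPoly]
  compute_degree!

/-- `kleinForm` in terms of the parameters. -/
def kleinPoly : Poly₃ := [[[-8, -1]], [], [], [], [], [], [], [[0, 0, 0, 1, 3, 1]]]

lemma eval_modularPoly_eval₃ {k m r : K} (h : IsCurvePoint k m r) :
    (modularPoly (eval₃ k m r kleinPoly)).eval (eval₃ k m r ZPoly) = 0 := by
  have hzero := eval₃_eq_zero_of_isZeroOnCurve h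
    (p := ZPoly * (343 + 49 * kleinPoly + ZPoly * (343 + 35 * kleinPoly + ZPoly * (147 +
      7 * kleinPoly + ZPoly * (49 + ZPoly * (21 + ZPoly * (7 + ZPoly)))))) - kleinPoly ^ 2)
    (by decide +kernel)
  simp only [eval₃_add, eval₃_sub, eval₃_mul, eval₃_pow, eval₃_ofNat] at hzero
  rw [eval_modularPoly]
  linear_combination hzero

end ModularEquation

section Conjugates

/-- The Klein quartic form in the dissection components of `euler 1`, normalised so as to be the
Hauptmodul of `Γ₀(7)` at `q ^ 7`. -/
def kleinForm : QSeries := -(u ^ 3 * v + w ^ 3 * u + v ^ 3 * w) - 8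

lemma evalCurve_kleinPoly : evalCurve kleinPoly = kleinForm := by
  have h := evalCurve_eq_zero
    (p := -(uPoly ^ 3 * vPoly + wPoly ^ 3 * uPoly + vPoly ^ 3 * wPoly) - 8 - kleinPoly)
    (by decide +kernel)
  simp only [eval₃_add, eval₃_sub, eval₃_neg, eval₃_mul, eval₃_pow, eval₃_ofNat, evalCurve_uPoly,
    evalCurve_vPoly, evalCurve_wPoly] at h
  rw [kleinForm]
  linear_combination -h

theorem eval_modularPoly_Z : (modularPoly kleinForm).eval Z = 0 := by
  simpa only [evalCurve_kleinPoly, evalCurve_ZPoly] using eval_modularPoly_eval₃ isCurvePoint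

/-- Constant series. -/
def constC : ℂ →+* QSeries := toLaurent.comp PowerSeries.C

lemma constC_injective : Function.Injective constC :=
  HahnSeries.ofPowerSeries_injective.comp PowerSeries.C_injective

lemma isHomogeneousMod_constC (c : ℂ) : IsHomogeneousMod (0 : ZMod 7) (constC c) := by
  rw [constC, RingHom.comp_apply, toLaurent, HahnSeries.ofPowerSeries_C]
  exact (isHomogeneousMod_single 0 c).cast (by simp)

/-- The conjugate of `Z` under `q ↦ c * q`, up to a constant factor, for a seventh root of unity
`c`. -/
def ZConj (c : ℂ) : QSeries := constC (c ^ 5) * u + constC (c ^ 6) * v + constC (c ^ 3) * w - 1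

variable {c d : ℂ}

lemma constC_pow_eq_of_mod_eq (hc : c ^ 7 = 1) {m n : ℕ} (h : m % 7 = n % 7) :
    constC (c ^ m) = constC (c ^ n) := by
  rw [pow_eq_pow_mod m hc, pow_eq_pow_mod n hc, h]

lemma eval₃_ZPoly_constC_mul (hc : c ^ 7 = 1) :
    eval₃ (constC (c ^ 3) * κ) μ ρ ZPoly = ZConj c := by
  have h₅ : constC (c ^ 3) ^ 4 = constC (c ^ 5) := by
    rw [← map_pow, ← pow_mul]
    exact constC_pow_eq_of_mod_eq hc rfl
  have h₆ : constC (c ^ 3) ^ 2 = constC (c ^ 6) := by rw [← map_pow, ← pow_mul]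
  rw [ZConj, u_eq, v_eq, w_eq, ← h₅, ← h₆, ZPoly]
  simp only [eval₃_add, eval₃_sub, eval₃_one]
  simp only [eval₃, eval₂, eval₁, horner, uPoly, vPoly, wPoly, Int.cast_zero, Int.cast_one,
    Int.cast_neg]
  ring

lemma eval₃_kleinPoly_constC_mul (hc : c ^ 7 = 1) :
    eval₃ (constC (c ^ 3) * κ) μ ρ kleinPoly = kleinForm := by
  have hpow : constC (c ^ 3) ^ 7 = 1 := by rw [← map_pow, ← pow_mul, mul_comm, pow_mul, hc]; simp
  rw [← evalCurve_kleinPoly]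
  simp only [eval₃, eval₂, horner, kleinPoly]
  linear_combination κ ^ 7 * eval₁ μ [0, 0, 0, 1, 3, 1] * hpow

lemma eval_modularPoly_ZConj (hc : c ^ 7 = 1) : (modularPoly kleinForm).eval (ZConj c) = 0 := by
  have hpoint : IsCurvePoint (constC (c ^ 3) * κ) μ ρ := by
    refine ⟨?_, isCurvePoint.cubic⟩
    rw [mul_pow, ← map_pow, ← pow_mul, mul_comm 3, pow_mul, hc, one_pow, map_one, one_mul]
    exact isCurvePoint.septic
  rw [← eval₃_ZPoly_constC_mul hc, ← eval₃_kleinPoly_constC_mul hc]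
  exact eval_modularPoly_eval₃ hpoint

lemma residueProj_five_ZConj (c : ℂ) : residueProj (5 : ZMod 7) (ZConj c) = constC (c ^ 5) * u := by
  have hu := ((isHomogeneousMod_constC (c ^ 5)).mul isHomogeneousMod_u).cast
    |>.residueProj_self (r := 5)
  have hv := ((isHomogeneousMod_constC (c ^ 6)).mul isHomogeneousMod_v).residueProj_of_ne
    (s := 5) (by decide)
  have hw := ((isHomogeneousMod_constC (c ^ 3)).mul isHomogeneousMod_w).residueProj_of_ne
    (s := 5) (by decide)
  have hone := (IsHomogeneousMod.one (p := 7) (R := ℂ)).residueProj_of_ne (s := 5) (by decide)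
  simp only [ZConj, map_add, map_sub, hu, hv, hw, hone, add_zero, sub_zero]

lemma ZConj_injOn : Set.InjOn ZConj {c | c ^ 7 = 1} := fun c hc d hd h => by
  have hproj := congrArg (residueProj (5 : ZMod 7)) h
  rw [residueProj_five_ZConj, residueProj_five_ZConj] at hproj
  have hpow := constC_injective (mul_right_cancel₀ u_ne_zero hproj)
  have hcube : ∀ e : ℂ, e ^ 7 = 1 → e = (e ^ 5) ^ 3 := fun e he => by
    linear_combination -e * (1 + e ^ 7) * he
  rw [hcube c hc, hcube d hd, hpow]

lemma eq_prod_X_sub_C_of_forall_isRoot {ι F : Type*} [Field F] {P : Polynomial F} (hP : P.Monic)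
    {s : Finset ι} {f : ι → F} (hf : Set.InjOn f s) (hdeg : P.natDegree = s.card)
    (hroot : ∀ i ∈ s, P.IsRoot (f i)) : P = ∏ i ∈ s, (Polynomial.X - Polynomial.C (f i)) := by
  classical
  rw [← Finset.prod_image (g := f) (f := fun x => Polynomial.X - Polynomial.C x) hf]
  refine Polynomial.eq_of_monic_of_dvd_of_natDegree_le (Polynomial.monic_prod_X_sub_C _ _) hP ?_ ?_
  · refine (Multiset.prod_X_sub_C_dvd_iff_le_roots hP.ne_zero _).2
      (Finset.val_le_iff_val_subset.2 fun x hx => ?_)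
    obtain ⟨i, hi, rfl⟩ := Finset.mem_image.1 hx
    exact (Polynomial.mem_roots hP.ne_zero).2 (hroot i hi)
  · rw [Polynomial.natDegree_prod_of_monic _ _ fun x _ => Polynomial.monic_X_sub_C x]
    simp [hdeg, Finset.card_image_of_injOn hf]

theorem prod_ZConj : ∏ c ∈ Polynomial.nthRootsFinset 7 (1 : ℂ), ZConj c = kleinForm ^ 2 := by
  have hmem : ∀ c ∈ Polynomial.nthRootsFinset 7 (1 : ℂ), c ^ 7 = 1 := fun c hc =>
    (Polynomial.mem_nthRootsFinset (by norm_num) _).1 hc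
  have hcard : (Polynomial.nthRootsFinset 7 (1 : ℂ)).card = 7 :=
    (Complex.isPrimitiveRoot_exp 7 (by norm_num)).card_nthRootsFinset
  have hprod := eq_prod_X_sub_C_of_forall_isRoot (monic_modularPoly kleinForm)
    (ZConj_injOn.mono hmem) ((natDegree_modularPoly _).trans hcard.symm)
    fun c hc => eval_modularPoly_ZConj (hmem c hc)
  have heval := congrArg (Polynomial.eval 0) hprod
  rw [eval_modularPoly, Polynomial.eval_prod] at heval
  simp only [Polynomial.eval_sub, Polynomial.eval_X, Polynomial.eval_C, zero_sub] at heval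
  have hneg := Finset.prod_neg (s := Polynomial.nthRootsFinset 7 (1 : ℂ)) ZConj
  rw [hcard] at hneg
  linear_combination heval + hneg

end Conjugates

/-! ### The Klein form as an eta quotient -/

section RootsOfUnity

lemma rescale_X_pow {R : Type*} [CommRing R] (c : R) (n : ℕ) :
    rescale c (X ^ n : R⟦X⟧) = C (c ^ n) * X ^ n := by
  rw [map_pow, rescale_X, mul_pow, ← map_pow]

lemma XAdicTendsto.rescale {R : Type*} [CommRing R] {F : ℕ → R⟦X⟧} {f : R⟦X⟧} (c : R)
    (h : XAdicTendsto F f) : XAdicTendsto (fun n => rescale c (F n)) (rescale c f) := fun M =>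
  (h M).mono fun n hn => by
    have hdvd := map_dvd (PowerSeries.rescale c) hn
    rw [rescale_X_pow, map_sub] at hdvd
    exact (dvd_mul_left _ _).trans hdvd

variable {n s : ℕ}

lemma pow_injOn_of_pow_eq_one (hn : 1 < n) (hs : s.Coprime n) :
    Set.InjOn (fun c : ℂ => c ^ s) {c | c ^ n = 1} := fun c hc d hd h => by
  obtain ⟨m, -, hm⟩ := Nat.exists_mul_mod_eq_one_of_coprime hs hn
  have hinv : ∀ e : ℂ, e ^ n = 1 → (e ^ s) ^ m = e := fun e he => by
    rw [← pow_mul, ← Nat.mod_add_div (s * m) n, hm, pow_add, pow_mul, he, one_pow, pow_one, mul_one]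
  rw [← hinv c hc, ← hinv d hd]
  exact congrArg (· ^ m) h

lemma prod_one_sub_C_pow_mul (hn : 1 < n) (hs : s.Coprime n) (f : ℂ⟦X⟧) :
    ∏ c ∈ Polynomial.nthRootsFinset n (1 : ℂ), (1 - C (c ^ s) * f) = 1 - f ^ n := by
  have hmem : ∀ c ∈ Polynomial.nthRootsFinset n (1 : ℂ), c ^ n = 1 := fun c hc =>
    (Polynomial.mem_nthRootsFinset (by omega) _).1 hc
  have hprim := Complex.isPrimitiveRoot_exp n (by omega)
  have hprimC := hprim.map_of_injective (f := (C : ℂ →+* ℂ⟦X⟧)) PowerSeries.C_injective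
  have hmaps : ∀ c ∈ Polynomial.nthRootsFinset n (1 : ℂ),
      (C (c ^ s) : ℂ⟦X⟧) ∈ Polynomial.nthRootsFinset n (1 : ℂ⟦X⟧) := fun c hc => by
    rw [Polynomial.mem_nthRootsFinset (by omega), ← map_pow, ← pow_mul, mul_comm, pow_mul,
      hmem c hc, one_pow, map_one]
  have hinj : Set.InjOn (fun c : ℂ => (C (c ^ s) : ℂ⟦X⟧)) (Polynomial.nthRootsFinset n (1 : ℂ)) :=
    PowerSeries.C_injective.comp_injOn ((pow_injOn_of_pow_eq_one hn hs).mono hmem)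
  have hfactor := hprimC.pow_sub_pow_eq_prod_sub_mul 1 f (by omega)
  rw [one_pow] at hfactor
  rw [hfactor]
  refine Finset.prod_nbij _ hmaps hinj
    (Finset.surjOn_of_injOn_of_card_le _ hmaps hinj ?_) fun _ _ => rfl
  rw [hprim.card_nthRootsFinset, hprimC.card_nthRootsFinset]

lemma prod_one_sub_rescale_X_pow {p : ℕ} (hp : p.Prime) (k : ℕ) :
    ∏ c ∈ Polynomial.nthRootsFinset p (1 : ℂ), (1 - rescale c (X ^ k : ℂ⟦X⟧)) =
      if p ∣ k then (1 - X ^ k) ^ p else 1 - X ^ (p * k) := by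
  simp only [rescale_X_pow]
  split_ifs with hk
  · obtain ⟨m, rfl⟩ := hk
    refine (Finset.prod_eq_pow_card (b := 1 - X ^ (p * m)) fun c hc => ?_).trans ?_
    · rw [pow_mul c, (Polynomial.mem_nthRootsFinset hp.pos _).1 hc, one_pow, map_one, one_mul]
    · rw [(Complex.isPrimitiveRoot_exp p hp.ne_zero).card_nthRootsFinset]
  · rw [prod_one_sub_C_pow_mul hp.one_lt ((hp.coprime_iff_not_dvd.2 hk).symm), ← pow_mul, mul_comm]

theorem prod_rescale_eulerProd {p : ℕ} (hp : p.Prime) :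
    (∏ c ∈ Polynomial.nthRootsFinset p (1 : ℂ), rescale c (eulerProd ℂ 1)) * eulerProd ℂ (p * p) =
      eulerProd ℂ p * eulerProd ℂ p ^ p := by
  have hrescale := (XAdicTendsto.prod (s := Polynomial.nthRootsFinset p (1 : ℂ)) fun c _ =>
    (xAdicTendsto_eulerProd (R := ℂ) le_rfl).rescale c).comp (tendsto_const_mul_atTop hp.one_le)
  have hpow := XAdicTendsto.prod (s := Finset.range p) fun _ _ =>
    xAdicTendsto_eulerProd (R := ℂ) hp.one_le
  rw [Finset.prod_const, Finset.card_range] at hpow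
  refine (hrescale.mul (xAdicTendsto_eulerProd (Nat.mul_pos hp.pos hp.pos))).unique
    ((((xAdicTendsto_eulerProd hp.one_le).comp (tendsto_const_mul_atTop hp.one_le)).mul hpow).congr
      (Filter.Eventually.of_forall fun n => ?_))
  obtain ⟨m, rfl⟩ : ∃ m, p = m + 1 := ⟨p - 1, (Nat.sub_add_cancel hp.one_le).symm⟩
  simp only [qPochhammer, map_prod, map_sub, map_one, pow_one, Finset.prod_const, Finset.card_range]
  rw [Finset.prod_comm, prod_range_mul, prod_range_mul, ← Finset.prod_pow,
    ← Finset.prod_mul_distrib, ← Finset.prod_mul_distrib]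
  refine Finset.prod_congr rfl fun i _ => ?_
  simp only [prod_one_sub_rescale_X_pow hp, ← pow_mul]
  rw [Finset.prod_range_succ, Finset.prod_range_succ _ m, if_pos ⟨i + 1, by ring⟩]
  have hne : ∀ r ∈ Finset.range m, ¬ (m + 1) ∣ (m + 1) * i + r + 1 := fun r hr h => by
    have := (Nat.dvd_add_right (dvd_mul_right (m + 1) i)).1 (add_assoc _ r 1 ▸ h)
    exact absurd (Nat.le_of_dvd r.succ_pos this) (by simpa using hr)
  rw [Finset.prod_congr rfl fun r hr => if_neg (hne r hr)]
  ring_nf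

end RootsOfUnity

section KleinForm

lemma residuePart_rescale {R : Type*} [CommRing R] {p : ℕ} [NeZero p] {c : R} (hc : c ^ p = 1)
    (r : ZMod p) (f : R⟦X⟧) :
    residuePart r (rescale c f) = C (c ^ r.val) * residuePart r f := by
  ext n
  rw [coeff_C_mul, residuePart, residuePart, coeff_mk, coeff_mk, coeff_rescale]
  split_ifs with h
  · rw [← h, ZMod.val_natCast, ← pow_eq_pow_mod n hc]
  · rw [mul_zero]

lemma toLaurent_rescale_eulerProd_mul {c : ℂ} (hc : c ^ 7 = 1) :
    toLaurent (rescale c (eulerProd ℂ 1)) * dissScale = constC (c ^ 2) * ZConj c := by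
  have hsum := toLaurent_eq_sum_residuePart (rescale c (eulerProd ℂ 1))
  simp only [residuePart_rescale hc] at hsum
  rw [residuePart_eulerProd_eq_zero (r := 3) (by simp),
    residuePart_eulerProd_eq_zero (r := 4) (by simp),
    residuePart_eulerProd_eq_zero (r := 6) (by simp), residuePart_two_eulerProd] at hsum
  have hconst : toLaurent (C c) = constC c := rfl
  have hval : (0 : ZMod 7).val = 0 ∧ (1 : ZMod 7).val = 1 ∧ (2 : ZMod 7).val = 2 ∧
    (5 : ZMod 7).val = 5 := by decide
  simp only [map_neg, map_mul, map_zero, mul_zero, hconst, hval, map_pow, toLaurent_X,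
    toLaurent_eulerProd] at hsum
  have hseven : constC c ^ 7 = 1 := by rw [← map_pow, hc, map_one]
  simp only [hsum, ZConj, u, v, w, map_pow]
  generalize toLaurent (residuePart (0 : ZMod 7) (eulerProd ℂ 1)) = r₀
  generalize toLaurent (residuePart (1 : ZMod 7) (eulerProd ℂ 1)) = r₁
  linear_combination -constC c ^ 2 * qVar_sq_mul_euler_mul_dissScale -
    (r₀ + constC c * r₁) * dissScale * hseven

lemma prod_nthRootsFinset_seven : ∏ c ∈ Polynomial.nthRootsFinset 7 (1 : ℂ), c = 1 := by
  have hprim := Complex.isPrimitiveRoot_exp 7 (by norm_num)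
  have hfactor := hprim.pow_sub_pow_eq_prod_sub_mul 0 1 (by norm_num)
  simp only [mul_one, zero_sub] at hfactor
  rw [Finset.prod_neg, hprim.card_nthRootsFinset] at hfactor
  linear_combination hfactor

lemma prod_toLaurent_rescale_eulerProd_mul :
    (∏ c ∈ Polynomial.nthRootsFinset 7 (1 : ℂ), toLaurent (rescale c (eulerProd ℂ 1))) *
      dissScale ^ 7 = kleinForm ^ 2 := by
  have hcard : (Polynomial.nthRootsFinset 7 (1 : ℂ)).card = 7 :=
    (Complex.isPrimitiveRoot_exp 7 (by norm_num)).card_nthRootsFinset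
  calc _ = ∏ c ∈ Polynomial.nthRootsFinset 7 (1 : ℂ),
        toLaurent (rescale c (eulerProd ℂ 1)) * dissScale := by
        rw [Finset.prod_mul_distrib, Finset.prod_const, hcard]
    _ = ∏ c ∈ Polynomial.nthRootsFinset 7 (1 : ℂ), constC (c ^ 2) * ZConj c :=
        Finset.prod_congr rfl fun c hc => toLaurent_rescale_eulerProd_mul
          ((Polynomial.mem_nthRootsFinset (by norm_num) _).1 hc)
    _ = kleinForm ^ 2 := by
        rw [Finset.prod_mul_distrib, ← map_prod, Finset.prod_pow, prod_nthRootsFinset_seven,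
          one_pow, map_one, one_mul, prod_ZConj]

lemma kleinForm_sq_mul : kleinForm ^ 2 * (qVar ^ 7 * euler 49 ^ 4) ^ 2 = (euler 7 ^ 4) ^ 2 := by
  have hprod := congrArg toLaurent (prod_rescale_eulerProd (p := 7) (by norm_num))
  have hscale : (qVar ^ 2 * euler 49 * dissScale) ^ 7 = 1 := by
    rw [qVar_sq_mul_euler_mul_dissScale, one_pow]
  rw [map_mul, map_prod, map_mul, map_pow, toLaurent_eulerProd, toLaurent_eulerProd] at hprod
  rw [← prod_toLaurent_rescale_eulerProd_mul]
  linear_combination hprod + (∏ c ∈ Polynomial.nthRootsFinset 7 (1 : ℂ),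
    toLaurent (rescale c (eulerProd ℂ 1))) * euler 49 * hscale

/-- The Hauptmodul `(η(τ) / η(7τ)) ^ 4` of `Γ₀(7)`; its inverse is `t`. -/
def T : QSeries := euler 1 ^ 4 / (qVar * euler 7 ^ 4)

lemma T_ne_zero : T ≠ 0 :=
  div_ne_zero (pow_ne_zero _ (euler_ne_zero 1)) (mul_ne_zero qVar_ne_zero
    (pow_ne_zero _ (euler_ne_zero 7)))

lemma qSubst_seven_T_mul : qSubst 7 T * (qVar ^ 7 * euler 49 ^ 4) = euler 7 ^ 4 := by
  have h₄₉ := euler_ne_zero 49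
  have hq := qVar_ne_zero
  rw [T, map_div₀, map_mul, map_pow, map_pow, qSubst_euler 7 1, qSubst_euler 7 7, qSubst_qVar]
  norm_num
  field_simp

/-- The numerator of `kleinForm` over `qVar ^ 8 * euler 49 ^ 4`. -/
def kleinNumerator : ℂ⟦X⟧ :=
  -(residuePart (0 : ZMod 7) (eulerProd ℂ 1) ^ 3 * residuePart (1 : ZMod 7) (eulerProd ℂ 1) +
    residuePart (5 : ZMod 7) (eulerProd ℂ 1) ^ 3 * residuePart (0 : ZMod 7) (eulerProd ℂ 1) +
    residuePart (1 : ZMod 7) (eulerProd ℂ 1) ^ 3 * residuePart (5 : ZMod 7) (eulerProd ℂ 1)) -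
  X * (8 * X ^ 7 * eulerProd ℂ 49 ^ 4)

lemma kleinForm_mul : kleinForm * (qVar ^ 8 * euler 49 ^ 4) = toLaurent kleinNumerator := by
  have hscale : (qVar ^ 2 * euler 49 * dissScale) ^ 4 = 1 := by
    rw [qVar_sq_mul_euler_mul_dissScale, one_pow]
  simp only [kleinForm, u, v, w, kleinNumerator, map_sub, map_neg, map_add, map_mul, map_pow,
    map_ofNat, toLaurent_X, toLaurent_eulerProd]
  generalize toLaurent (residuePart (0 : ZMod 7) (eulerProd ℂ 1)) = a
  generalize toLaurent (residuePart (1 : ZMod 7) (eulerProd ℂ 1)) = b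
  generalize toLaurent (residuePart (5 : ZMod 7) (eulerProd ℂ 1)) = c
  linear_combination -(a ^ 3 * b + c ^ 3 * a + b ^ 3 * c) * hscale

lemma coeff_one_kleinNumerator : coeff 1 kleinNumerator = 1 := by
  have hcoeff : ∀ (r : ZMod 7) (n : ℕ), coeff n (residuePart r (eulerProd ℂ 1)) =
      if (n : ZMod 7) = r then coeff n (eulerProd ℂ 1) else 0 := fun r n => coeff_mk _ _
  have hconst : ∀ r : ZMod 7, constantCoeff (residuePart r (eulerProd ℂ 1)) =
      if (0 : ZMod 7) = r then 1 else 0 := fun r => by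
    rw [← coeff_zero_eq_constantCoeff_apply, hcoeff, Nat.cast_zero,
      coeff_zero_eq_constantCoeff_apply, constantCoeff_eulerProd one_ne_zero]
  have hne : (0 : ZMod 7) ≠ 1 ∧ (0 : ZMod 7) ≠ 5 ∧ (1 : ZMod 7) ≠ 5 := by decide
  simp [kleinNumerator, coeff_one_mul, coeff_one_pow, hcoeff, hconst, hne, coeff_one_eulerProd_one]

theorem kleinForm_eq : kleinForm = qSubst 7 T := by
  have hdenom : qVar ^ 7 * euler 49 ^ 4 ≠ 0 :=
    mul_ne_zero (pow_ne_zero _ qVar_ne_zero) (pow_ne_zero _ (euler_ne_zero 49))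
  have hsq : kleinForm ^ 2 = qSubst 7 T ^ 2 := by
    refine mul_right_cancel₀ (pow_ne_zero 2 hdenom) ?_
    rw [kleinForm_sq_mul, ← mul_pow, qSubst_seven_T_mul]
  refine (sq_eq_sq_iff_eq_or_eq_neg.1 hsq).resolve_right fun hneg => ?_
  have hnum : toLaurent kleinNumerator = toLaurent (-(X * eulerProd ℂ 7 ^ 4)) := by
    rw [← kleinForm_mul, hneg]
    simp only [map_neg, map_mul, map_pow, toLaurent_X, toLaurent_eulerProd]
    linear_combination -qVar * qSubst_seven_T_mul
  have hcoeff := congrArg (coeff 1) (HahnSeries.ofPowerSeries_injective hnum)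
  rw [coeff_one_kleinNumerator] at hcoeff
  norm_num [constantCoeff_eulerProd] at hcoeff

end KleinForm

/-! ### The coordinate ring of level fourteen -/

section LevelFourteen

/-- The image of `T` under `q ↦ q²`. -/
def T₂ : QSeries := qSubst 2 T

/-- The third generator of the ring of level-`14` functions, besides `T` and `T₂`; it equals
`T * p₀`. -/
def S : QSeries := T + 8 - 8 * etaQuot

/-- `qSubst 7 S` in terms of the parameters. -/
def SPoly : Poly₃ := [[[4]], [], [], [], [], [], [], [[0, 0, 0, 0, -1, -2], [0, 0, 0, 1, 1, 1]]]

/-- `qSubst 7 T₂` in terms of the parameters. -/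
def T₂Poly : Poly₃ := [[[-8]], [], [], [], [], [], [],
  [[0, 0, 0, -1, 1, 3, 1], [0, 0, 0, -1, -4, -2], [0, 0, 1, 1, 2, 1]], [], [], [], [], [], [],
  [[0, 0, 0, 0, 0, 0, 0, 0, 0, 2, 3], [0, 0, 0, 0, 0, 0, 0, 0, 1, 2, -1],
    [0, 0, 0, 0, 0, 0, 0, 0, 0, -1]]]

lemma T₂_ne_zero : T₂ ≠ 0 := (map_ne_zero (qSubst 2 : QSeries →+* QSeries)).2 T_ne_zero

@[simp]
lemma evalCurve_kleinPoly_eq_T : evalCurve kleinPoly = qSubst 7 T :=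
  evalCurve_kleinPoly.trans kleinForm_eq

@[simp]
lemma evalCurve_T₂Poly : evalCurve T₂Poly = qSubst 7 T₂ := by
  have h := evalCurve_eq_zero
    (p := -(u₂Poly ^ 3 * v₂Poly + w₂Poly ^ 3 * u₂Poly + v₂Poly ^ 3 * w₂Poly) - 8 - T₂Poly)
    (by decide +kernel)
  have hcomm : qSubst 2 (qSubst 7 T) = qSubst 7 (qSubst 2 T) := by
    rw [qSubst_qSubst, qSubst_qSubst]
  have hklein := congrArg (qSubst 2 : QSeries →+* QSeries) kleinForm_eq
  rw [hcomm, kleinForm] at hklein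
  simp only [map_add, map_sub, map_neg, map_mul, map_pow, map_ofNat] at hklein
  simp only [eval₃_add, eval₃_sub, eval₃_neg, eval₃_mul, eval₃_pow, eval₃_ofNat, evalCurve_u₂Poly,
    evalCurve_v₂Poly, evalCurve_w₂Poly, u₂, v₂, w₂] at h
  rw [T₂]
  linear_combination hklein - h

@[simp]
lemma evalCurve_SPoly : evalCurve SPoly = qSubst 7 S := by
  have h := evalCurve_eq_zero
    (p := -(u₂Poly * v₂Poly + w₂Poly * u₂Poly * vPoly + v₂Poly * w₂Poly * uPoly * vPoly) *
      (-(u₂Poly * v₂Poly * wPoly * uPoly + v₂Poly * w₂Poly * uPoly + w₂Poly * u₂Poly) *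
        (-(w₂Poly * u₂Poly * wPoly * vPoly + v₂Poly * u₂Poly * wPoly + v₂Poly * w₂Poly) *
          (kleinPoly + 8 - SPoly))) - 8)
    (by decide +kernel)
  simp only [eval₃_add, eval₃_sub, eval₃_neg, eval₃_mul, eval₃_ofNat, evalCurve_uPoly,
    evalCurve_vPoly, evalCurve_wPoly, evalCurve_u₂Poly, evalCurve_v₂Poly, evalCurve_w₂Poly,
    evalCurve_kleinPoly_eq_T] at h
  rw [← psiComp_zero, ← psiComp_one, ← psiComp_three] at h
  have hprod := prod_psiComp_mul_etaQuot
  have hne : psiComp 0 * psiComp 1 * psiComp 3 ≠ 0 := left_ne_zero_of_mul_eq_one hprod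
  apply mul_left_cancel₀ hne
  rw [S, map_sub, map_add, map_mul, map_ofNat]
  linear_combination 8 * hprod - h

lemma S_sq : S ^ 2 = 7 * S + T + T₂ := by
  have h := evalCurve_eq_zero (p := SPoly ^ 2 - (7 * SPoly + kleinPoly + T₂Poly))
    (by decide +kernel)
  apply qSubst_injective (p := 7)
  simp only [eval₃_add, eval₃_sub, eval₃_mul, eval₃_pow, eval₃_ofNat, evalCurve_SPoly,
    evalCurve_T₂Poly, evalCurve_kleinPoly_eq_T] at h
  simp only [map_add, map_mul, map_pow, map_ofNat]
  linear_combination h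

lemma S_mul_T₂ : S * T₂ = T * S + (T + 7) * T₂ := by
  have h := evalCurve_eq_zero
    (p := SPoly * T₂Poly - (kleinPoly * SPoly + (kleinPoly + 7) * T₂Poly)) (by decide +kernel)
  apply qSubst_injective (p := 7)
  simp only [eval₃_add, eval₃_sub, eval₃_mul, eval₃_ofNat, evalCurve_SPoly,
    evalCurve_T₂Poly, evalCurve_kleinPoly_eq_T] at h
  simp only [map_add, map_mul, map_ofNat]
  linear_combination h

lemma T₂_sq : T₂ ^ 2 = T ^ 2 + (T ^ 2 + 7 * T) * (S + T₂) := by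
  have h := evalCurve_eq_zero (p := T₂Poly ^ 2 - (kleinPoly ^ 2 +
    (kleinPoly ^ 2 + 7 * kleinPoly) * (SPoly + T₂Poly))) (by decide +kernel)
  apply qSubst_injective (p := 7)
  simp only [eval₃_add, eval₃_sub, eval₃_mul, eval₃_pow, eval₃_ofNat, evalCurve_SPoly,
    evalCurve_T₂Poly, evalCurve_kleinPoly_eq_T] at h
  simp only [map_add, map_mul, map_pow, map_ofNat]
  linear_combination h

lemma Z_pow_seven : Z ^ 7 + 7 * Z ^ 6 + 21 * Z ^ 5 + 49 * Z ^ 4 + 147 * Z ^ 3 + 343 * Z ^ 2 +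
    343 * Z + qSubst 7 T * (7 * Z ^ 3 + 35 * Z ^ 2 + 49 * Z) = qSubst 7 T ^ 2 := by
  rw [← sub_eq_zero, ← eval_modularPoly, ← kleinForm_eq, eval_modularPoly_Z]

lemma Z₂_pow_four : Z₂ ^ 4 + 7 * Z₂ ^ 3 + 14 * Z₂ ^ 2 - 2 * qSubst 7 T * Z₂ +
    Z * (-2 * qSubst 7 T₂ + 21 * Z₂ + 21 * Z₂ ^ 2 + 5 * Z₂ ^ 3) +
    Z ^ 2 * (14 + 21 * Z₂ + 9 * Z₂ ^ 2 + Z₂ ^ 3) + Z ^ 3 * (7 + 5 * Z₂ + Z₂ ^ 2) + Z ^ 4 = 0 := by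
  have h := evalCurve_eq_zero
    (p := Z₂Poly * (-2 * kleinPoly + Z₂Poly * (14 + Z₂Poly * (7 + Z₂Poly)))
    + ZPoly * (-2 * T₂Poly + Z₂Poly * (21 + Z₂Poly * (21 + 5 * Z₂Poly))
    + ZPoly * (14 + Z₂Poly * (21 + Z₂Poly * (9 + Z₂Poly))
    + ZPoly * (7 + Z₂Poly * (5 + Z₂Poly) + ZPoly)))) (by decide +kernel)
  simp only [eval₃_add, eval₃_neg, eval₃_mul, eval₃_ofNat, evalCurve_ZPoly, evalCurve_Z₂Poly,
    evalCurve_kleinPoly_eq_T, evalCurve_T₂Poly] at h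
  linear_combination h

end LevelFourteen

section LevelPoly

/-- The combination `c₀(T) + c₁(T) * S + c₂(T) * T₂`, given by its coefficients. -/
structure LevelPoly where
  /-- The coefficient of `1`. -/
  c₀ : Poly₁
  /-- The coefficient of `S`. -/
  c₁ : Poly₁
  /-- The coefficient of `T₂`. -/
  c₂ : Poly₁

namespace LevelPoly

/-- The series represented by a `LevelPoly`. -/
def eval (x : LevelPoly) : QSeries := eval₁ T x.c₀ + eval₁ T x.c₁ * S + eval₁ T x.c₂ * T₂

/-- Multiplication by a polynomial in `T`. -/
def smul (p : Poly₁) (x : LevelPoly) : LevelPoly := ⟨p * x.c₀, p * x.c₁, p * x.c₂⟩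

/-- The polynomial with the given coefficients, constant term first. -/
def ofCoeffs (l : List ℤ) : Poly₁ := l

/-- Multiplication by `S`, reduced by `S_sq` and `S_mul_T₂`. -/
def mulS (x : LevelPoly) : LevelPoly :=
  ⟨ofCoeffs [0, 1] * x.c₁, x.c₀ + (ofCoeffs [7] * x.c₁ + ofCoeffs [0, 1] * x.c₂),
    x.c₁ + ofCoeffs [7, 1] * x.c₂⟩

/-- Multiplication by `T₂`, reduced by `S_mul_T₂` and `T₂_sq`. -/
def mulT₂ (x : LevelPoly) : LevelPoly :=
  ⟨ofCoeffs [0, 0, 1] * x.c₂, ofCoeffs [0, 1] * x.c₁ + ofCoeffs [0, 7, 1] * x.c₂,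
    x.c₀ + (ofCoeffs [7, 1] * x.c₁ + ofCoeffs [0, 7, 1] * x.c₂)⟩

instance : Zero LevelPoly := ⟨⟨0, 0, 0⟩⟩

instance : Add LevelPoly := ⟨fun x y => ⟨x.c₀ + y.c₀, x.c₁ + y.c₁, x.c₂ + y.c₂⟩⟩

instance : Mul LevelPoly :=
  ⟨fun x y => smul x.c₀ y + (mulS (smul x.c₁ y) + mulT₂ (smul x.c₂ y))⟩

lemma eval_zero : eval 0 = 0 := by
  change (0 : QSeries) + 0 * S + 0 * T₂ = 0
  ring

lemma eval_add (x y : LevelPoly) : eval (x + y) = eval x + eval y := by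
  change eval₁ T (x.c₀ + y.c₀) + eval₁ T (x.c₁ + y.c₁) * S + eval₁ T (x.c₂ + y.c₂) * T₂ = _
  simp only [eval, eval₁_add]
  ring

lemma eval_smul (p : Poly₁) (x : LevelPoly) : eval (smul p x) = eval₁ T p * eval x := by
  simp only [eval, smul, eval₁_mul]
  ring

lemma eval_mulS (x : LevelPoly) : eval (mulS x) = S * eval x := by
  simp only [eval, mulS, eval₁_add, eval₁_mul]
  simp only [eval₁, ofCoeffs, horner]
  push_cast
  linear_combination -horner T Int.cast x.c₁ * S_sq - horner T Int.cast x.c₂ * S_mul_T₂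

lemma eval_mulT₂ (x : LevelPoly) : eval (mulT₂ x) = T₂ * eval x := by
  simp only [eval, mulT₂, eval₁_add, eval₁_mul]
  simp only [eval₁, ofCoeffs, horner]
  push_cast
  linear_combination -horner T Int.cast x.c₁ * S_mul_T₂ - horner T Int.cast x.c₂ * T₂_sq

lemma eval_mul (x y : LevelPoly) : eval (x * y) = eval x * eval y := by
  change eval (smul x.c₀ y + (mulS (smul x.c₁ y) + mulT₂ (smul x.c₂ y))) = _
  rw [eval_add, eval_add, eval_mulS, eval_mulT₂, eval_smul, eval_smul, eval_smul, eval.eq_1 x]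
  ring

/-- The polynomial in `kleinPoly` with the given coefficients. -/
def liftCoeffs : List ℤ → Poly₃
  | [] => 0
  | a :: l => (a : Poly₃) + kleinPoly * liftCoeffs l

lemma evalCurve_liftCoeffs (l : List ℤ) :
    evalCurve (liftCoeffs l) = qSubst 7 (horner T Int.cast l) := by
  induction l with
  | nil => exact (map_zero _).symm
  | cons a l ih =>
    simp only [liftCoeffs, horner, eval₃_add, eval₃_mul, eval₃_intCast, ih,
      evalCurve_kleinPoly_eq_T, map_add, map_mul, map_intCast]

/-- `qSubst 7` of a polynomial in `T`, in terms of the parameters. -/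
def liftPoly₁ (p : Poly₁) : Poly₃ := liftCoeffs p

lemma evalCurve_liftPoly₁ (p : Poly₁) : evalCurve (liftPoly₁ p) = qSubst 7 (eval₁ T p) :=
  evalCurve_liftCoeffs p

/-- `qSubst 7` of the represented series, in terms of the parameters. -/
def lift (x : LevelPoly) : Poly₃ :=
  liftPoly₁ x.c₀ + liftPoly₁ x.c₁ * SPoly + liftPoly₁ x.c₂ * T₂Poly

lemma evalCurve_lift (x : LevelPoly) : evalCurve (lift x) = qSubst 7 (eval x) := by
  simp only [lift, eval, eval₃_add, eval₃_mul, evalCurve_liftPoly₁, evalCurve_SPoly,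
    evalCurve_T₂Poly, map_add, map_mul]

end LevelPoly

end LevelPoly

/-! ### Tables of `uOp 7 (Z ^ i * x)` -/

section Tables

open LevelPoly

/-- `l` lists the values of `uOp 7 (Z ^ i * x)` for `i = 0, 1, …`. -/
def IsUTable (x : QSeries) (l : List LevelPoly) : Prop :=
  ∀ i k, l[i]? = some k → uOp 7 (Z ^ i * x) = k.eval

/-- Whether the residue-`0` parts of `ZPoly ^ i * p` are the lifts of the entries of a list. -/
def checkUTable : Poly₃ → List LevelPoly → Bool
  | _, [] => true
  | p, k :: l => residueZeroVanishes (p - lift k) && checkUTable (ZPoly * p) l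

/-- The combination `∑ cᵢ * (l shifted by i)`, for the coefficient list `c`. -/
def rowComb : List LevelPoly → List LevelPoly → List LevelPoly
  | [], l => List.replicate (l.length + 1) 0
  | c :: cs, l => List.zipWith (· + ·) (l.map (c * ·)) (rowComb cs l.tail)

namespace IsUTable

variable {x y : QSeries} {l l' : List LevelPoly}

lemma nil : IsUTable x [] := by simp [IsUTable]

lemma cons {k : LevelPoly} (hk : uOp 7 x = k.eval) (h : IsUTable (Z * x) l) :
    IsUTable x (k :: l) := by
  rintro (_ | i) k' hi
  · obtain rfl : k = k' := by simpa using hi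
    rwa [pow_zero, one_mul]
  · rw [pow_succ, mul_assoc]
    exact h i k' (by simpa using hi)

lemma drop (n : ℕ) (h : IsUTable x l) : IsUTable (Z ^ n * x) (l.drop n) := by
  intro i k hi
  rw [← mul_assoc, ← pow_add, add_comm i n]
  exact h (n + i) k (by simpa using hi)

lemma append (h : IsUTable x l) (h' : IsUTable (Z ^ l.length * x) l') : IsUTable x (l ++ l') := by
  intro i k hi
  rcases lt_or_ge i l.length with hlt | hge
  · exact h i k (by rwa [List.getElem?_append_left hlt] at hi)
  · have := h' (i - l.length) k (by rwa [List.getElem?_append_right hge] at hi)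
    rwa [← mul_assoc, ← pow_add, Nat.sub_add_cancel hge] at this

lemma zipWith_add (h : IsUTable x l) (h' : IsUTable y l') :
    IsUTable (x + y) (List.zipWith (· + ·) l l') := by
  intro i k hi
  obtain ⟨a, b, ha, hb, rfl⟩ := List.getElem?_zipWith_eq_some.1 hi
  rw [mul_add, map_add, h i a ha, h' i b hb, eval_add]

lemma map_const_mul (c : LevelPoly) (h : IsUTable x l) :
    IsUTable (qSubst 7 c.eval * x) (l.map (c * ·)) := by
  intro i k hi
  rw [List.getElem?_map, Option.map_eq_some_iff] at hi
  obtain ⟨a, ha, rfl⟩ := hi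
  rw [mul_left_comm, uOp_qSubst_mul, h i a ha, eval_mul]

lemma replicate_zero (n : ℕ) : IsUTable 0 (List.replicate n 0) := by
  intro i k hi
  obtain rfl : 0 = k := by
    rw [List.getElem?_replicate] at hi
    simpa using (Option.ite_none_right_eq_some.1 hi).2
  rw [mul_zero, map_zero, eval_zero]

lemma rowComb (cs : List LevelPoly) (h : IsUTable x l) :
    IsUTable (horner Z (fun c => qSubst 7 (eval c)) cs * x) (rowComb cs l) := by
  induction cs generalizing x l with
  | nil =>
    rw [horner, zero_mul]
    exact replicate_zero _
  | cons c cs ih =>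
    have htail : IsUTable (Z * x) l.tail := by simpa using h.drop 1
    have hsum := (h.map_const_mul c).zipWith_add (ih htail)
    rwa [← mul_assoc, ← add_mul, mul_comm _ Z] at hsum

end IsUTable

lemma isUTable_evalCurve {p : Poly₃} {l : List LevelPoly} (h : checkUTable p l = true) :
    IsUTable (evalCurve p) l := by
  induction l generalizing p with
  | nil => exact .nil
  | cons k l ih =>
    rw [checkUTable, Bool.and_eq_true] at h
    refine .cons (uOp_eq_of_residueProj_eq ?_) ?_
    · have hres := residueProj_evalCurve_eq_zero h.1
      simp only [eval₃_sub, map_sub, sub_eq_zero] at hres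
      rw [hres, ← evalCurve, evalCurve_lift, (isHomogeneousMod_qSubst _).residueProj_self]
    · simpa using ih h.2

/-- The coefficients of `Z ^ 7` in terms of lower powers of `Z`, from `Z_pow_seven`. -/
def modularCoeffs : List LevelPoly :=
  [⟨[0, 0, 1], [], []⟩, ⟨[-343, -49], [], []⟩, ⟨[-343, -35], [], []⟩, ⟨[-147, -7], [], []⟩,
    ⟨[-49], [], []⟩, ⟨[-21], [], []⟩, ⟨[-7], [], []⟩]

/-- A table with at least seven entries, prolonged by one entry. -/
def extendTable (l : List LevelPoly) : List LevelPoly :=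
  if 7 ≤ l.length then l ++ rowComb modularCoeffs (l.drop (l.length - 7)) else l

/-- The table of `Z₂ ^ 4 * x` in terms of those of `Z₂ ^ i * x` for `i < 4`, from `Z₂_pow_four`. -/
def quarticComb (l₀ l₁ l₂ l₃ : List LevelPoly) : List LevelPoly :=
  List.zipWith (· + ·)
    (List.zipWith (· + ·)
      (rowComb [0, ⟨[], [], [2]⟩, ⟨[-14], [], []⟩, ⟨[-7], [], []⟩, ⟨[-1], [], []⟩] l₀)
      (rowComb [⟨[0, 2], [], []⟩, ⟨[-21], [], []⟩, ⟨[-21], [], []⟩, ⟨[-5], [], []⟩] l₁))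
    (List.zipWith (· + ·)
      (rowComb [⟨[-14], [], []⟩, ⟨[-21], [], []⟩, ⟨[-9], [], []⟩, ⟨[-1], [], []⟩] l₂)
      (rowComb [⟨[-7], [], []⟩, ⟨[-5], [], []⟩, ⟨[-1], [], []⟩] l₃))

variable {x : QSeries} {l l₀ l₁ l₂ l₃ : List LevelPoly}

lemma horner_modularCoeffs : horner Z (fun c => qSubst 7 (eval c)) modularCoeffs = Z ^ 7 := by
  simp only [modularCoeffs, horner, eval, eval₁, map_add, map_mul, map_intCast, map_zero]
  push_cast
  linear_combination -Z_pow_seven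

lemma IsUTable.extendTable (h : IsUTable x l) : IsUTable x (extendTable l) := by
  rw [D5Tower.extendTable]
  split_ifs with hlen
  · have hlast := (h.drop (l.length - 7)).rowComb modularCoeffs
    rw [horner_modularCoeffs, ← mul_assoc, ← pow_add, Nat.add_sub_cancel' hlen] at hlast
    exact h.append hlast
  · exact h

lemma IsUTable.iterate_extendTable (n : ℕ) (h : IsUTable x l) :
    IsUTable x (D5Tower.extendTable^[n] l) :=
  Function.Iterate.rec (IsUTable x) h (fun _ => IsUTable.extendTable) n

lemma IsUTable.quarticComb (h₀ : IsUTable x l₀) (h₁ : IsUTable (Z₂ * x) l₁)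
    (h₂ : IsUTable (Z₂ ^ 2 * x) l₂) (h₃ : IsUTable (Z₂ ^ 3 * x) l₃) :
    IsUTable (Z₂ ^ 4 * x) (quarticComb l₀ l₁ l₂ l₃) := by
  convert (show IsUTable _ (D5Tower.quarticComb l₀ l₁ l₂ l₃) from
    ((h₀.rowComb _).zipWith_add (h₁.rowComb _)).zipWith_add
      ((h₂.rowComb _).zipWith_add (h₃.rowComb _))) using 1
  simp only [horner, eval_zero, map_zero]
  simp only [eval, eval₁, horner, map_add, map_mul, map_intCast, map_zero]
  push_cast
  linear_combination x * Z₂_pow_four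

/-- The tables of `Z₂ ^ n`, …, `Z₂ ^ (n + 3)`. The initial ones were found by reducing
`Z ^ i * Z₂ ^ j` modulo the two relations between the parameters. -/
def uTables : ℕ → List LevelPoly × List LevelPoly × List LevelPoly × List LevelPoly
  | 0 => (extendTable^[7] [⟨[1], [], []⟩, ⟨[-1], [], []⟩, ⟨[1], [], []⟩, ⟨[-7], [], []⟩,
        ⟨[-7, -4], [], []⟩, ⟨[49, 10], [], []⟩, ⟨[49], [], []⟩],
      extendTable^[7] [⟨[-1], [], []⟩, ⟨[1], [], []⟩, ⟨[7], [-2], []⟩, ⟨[-7, 1], [7], []⟩,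
        ⟨[49, 6], [-14], []⟩, ⟨[-294, -28], [49, 1], []⟩, ⟨[343, -14], [-98, 8], []⟩],
      extendTable^[7] [⟨[1], [], []⟩, ⟨[-7], [2], []⟩, ⟨[-7], [], []⟩, ⟨[0, -4], [-7], [1]⟩,
        ⟨[49], [], []⟩, ⟨[343, 56], [-98, -12], [-14]⟩, ⟨[-343, 49, 1], [343, 14], [49]⟩],
      extendTable^[7] [⟨[-7], [], []⟩, ⟨[42], [-7], [1]⟩, ⟨[-49, 1], [7], [-4]⟩, ⟨[49], [], []⟩,
        ⟨[-343, 14], [98, 3], [7]⟩, ⟨[-343, -245], [0, 35], [0, -5]⟩,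
        ⟨[2401, 490, -6], [-686, -112], [98, 28]⟩])
  | n + 1 => ((uTables n).2.1, (uTables n).2.2.1, (uTables n).2.2.2,
      extendTable^[4] (quarticComb (uTables n).1 (uTables n).2.1 (uTables n).2.2.1
        (uTables n).2.2.2))

lemma isUTable_uTables (n : ℕ) :
    IsUTable (Z₂ ^ n) (uTables n).1 ∧ IsUTable (Z₂ ^ (n + 1)) (uTables n).2.1 ∧
      IsUTable (Z₂ ^ (n + 2)) (uTables n).2.2.1 ∧ IsUTable (Z₂ ^ (n + 3)) (uTables n).2.2.2 := by
  induction n with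
  | zero =>
    have hbase {m : ℕ} {l} (h : checkUTable (Z₂Poly ^ m) l = true) :
        IsUTable (Z₂ ^ m) (extendTable^[7] l) := by
      simpa using (isUTable_evalCurve h).iterate_extendTable 7
    simp only [uTables]
    exact ⟨hbase (by decide +kernel), hbase (by decide +kernel), hbase (by decide +kernel),
      hbase (by decide +kernel)⟩
  | succ n ih =>
    obtain ⟨h₀, h₁, h₂, h₃⟩ := ih
    have h₄ : IsUTable (Z₂ ^ (n + 1 + 3)) (quarticComb (uTables n).1 (uTables n).2.1
        (uTables n).2.2.1 (uTables n).2.2.2) := by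
      rw [show n + 1 + 3 = 4 + n by ring, pow_add]
      refine h₀.quarticComb ?_ ?_ ?_
      · rwa [← pow_succ']
      · rwa [← pow_add, add_comm]
      · rwa [← pow_add, add_comm]
    simp only [uTables]
    exact ⟨h₁, h₂, h₃, h₄.iterate_extendTable 4⟩

/-- The table of `Z₂ ^ n`, with fourteen entries. -/
def uTable (n : ℕ) : List LevelPoly := (uTables n).1

lemma isUTable_uTable (n : ℕ) : IsUTable (Z₂ ^ n) (uTable n) := (isUTable_uTables n).1

end Tables

/-! ### The functions `t`, `p₀`, `p₁` and the multiplier `A₅` -/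

section EtaQuotients

/-- The series `t` of the theorem, over `ℂ`. -/
def t : QSeries := T⁻¹

/-- The series `p₀` of the theorem, over `ℂ`; see `one_add_seven_mul_p₀`. -/
def p₀ : QSeries := S * t

/-- The series `p₁` of the theorem, over `ℂ`. -/
def p₁ : QSeries := T₂ * t

/-- The series `A₅` of the theorem, over `ℂ`. -/
def A₅ : QSeries := Z₂ ^ 5 * Z⁻¹ ^ 16

lemma t_mul_T : t * T = 1 := inv_mul_cancel₀ T_ne_zero

lemma t_ne_zero : t ≠ 0 := inv_ne_zero T_ne_zero

lemma p₁_ne_zero : p₁ ≠ 0 := mul_ne_zero T₂_ne_zero t_ne_zero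

lemma Z_eq_div : Z = euler 1 / (qVar ^ 2 * euler 49) := rfl

lemma Z₂_eq_div : Z₂ = euler 2 / (qVar ^ 4 * euler 98) := by
  rw [Z₂, Z_eq_div, map_div₀, map_mul, map_pow, qSubst_euler 2 1, qSubst_euler 2 49, qSubst_qVar,
    ← pow_mul]

lemma T₂_eq_div : T₂ = euler 2 ^ 4 / (qVar ^ 2 * euler 14 ^ 4) := by
  rw [T₂, T, map_div₀, map_mul, map_pow, map_pow, qSubst_euler 2 1, qSubst_euler 2 7, qSubst_qVar]

lemma qSubst_seven_T : qSubst 7 T = euler 7 ^ 4 / (qVar ^ 7 * euler 49 ^ 4) := by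
  rw [T, map_div₀, map_mul, map_pow, map_pow, qSubst_euler 7 1, qSubst_euler 7 7, qSubst_qVar]

lemma qSubst_seven_T₂ : qSubst 7 T₂ = euler 14 ^ 4 / (qVar ^ 14 * euler 98 ^ 4) := by
  rw [T₂_eq_div, map_div₀, map_mul, map_pow, map_pow, map_pow, qSubst_euler 7 2,
    qSubst_euler 7 14, qSubst_qVar, ← pow_mul]

lemma qSubst_seven_etaQuot :
    qSubst 7 etaQuot = qVar ^ 14 * euler 7 * euler 98 ^ 7 / (euler 14 * euler 49 ^ 7) := by
  rw [etaQuot, map_div₀, map_mul, map_mul, map_mul, map_pow, map_pow, map_pow, qSubst_euler 7 1,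
    qSubst_euler 7 14, qSubst_euler 7 2, qSubst_euler 7 7, qSubst_qVar, ← pow_mul]

lemma t_eq_mul_qSubst : t = Z⁻¹ ^ 4 * qSubst 7 T := by
  have hq := qVar_ne_zero
  have h₄₉ := euler_ne_zero 49
  rw [t, qSubst_seven_T, T, Z_eq_div]
  field_simp

lemma qSubst_p₁_mul_p₁ : qSubst 7 p₁ * p₁ = (Z₂ * Z⁻¹) ^ 4 := by
  have hq := qVar_ne_zero
  have h₇ := euler_ne_zero 7
  have h₁₄ := euler_ne_zero 14
  have h₄₉ := euler_ne_zero 49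
  rw [p₁, t, map_mul, map_inv₀, qSubst_seven_T, qSubst_seven_T₂, T, T₂_eq_div, Z_eq_div, Z₂_eq_div]
  field_simp

lemma eight_mul_etaQuot : 8 * etaQuot = T + 8 - S := by
  rw [S]
  ring

lemma one_add_seven_mul_p₀ :
    1 + 7 * p₀ = 8 * (euler 2 ^ 7 * euler 7 / (euler 1 ^ 7 * euler 14)) := by
  have hq := qVar_ne_zero
  have h₂ := euler_ne_zero 2
  have h₁₄ := euler_ne_zero 14
  have hT : (T + 8 - S) * T₂ ^ 2 = T ^ 2 + 7 * T * S := by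
    linear_combination T₂_sq - T₂ * S_mul_T₂ - T * S_mul_T₂
  have hquot : euler 2 ^ 7 * euler 7 / (euler 1 ^ 7 * euler 14) = etaQuot * T₂ ^ 2 * t ^ 2 := by
    rw [t, T, T₂_eq_div, etaQuot]
    field_simp
  rw [hquot, p₀]
  linear_combination -(T₂ ^ 2 * t ^ 2) * eight_mul_etaQuot - t ^ 2 * hT -
    (t * T + 1 + 7 * t * S) * t_mul_T

lemma one_add_seven_mul_p₀_eq_qSubst : 1 + 7 * p₀ = qSubst 7 (T + 8 - S) * (Z₂ * Z⁻¹) ^ 7 := by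
  have hq := qVar_ne_zero
  have h₄₉ := euler_ne_zero 49
  have h₉₈ := euler_ne_zero 98
  have hquot : euler 2 ^ 7 * euler 7 / (euler 1 ^ 7 * euler 14) =
      qSubst 7 etaQuot * (Z₂ * Z⁻¹) ^ 7 := by
    rw [qSubst_seven_etaQuot, Z_eq_div, Z₂_eq_div]
    field_simp
  rw [one_add_seven_mul_p₀, hquot, ← eight_mul_etaQuot, map_mul, map_ofNat]
  ring

lemma T_mul_p₁_inv : T * p₁⁻¹ = 7 * T + 49 + T₂ - (T + 7) * S := by
  have hT : T₂ * (7 * T + 49 + T₂ - (T + 7) * S) = T ^ 2 := by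
    linear_combination T₂_sq - (T + 7) * S_mul_T₂
  rw [← div_eq_mul_inv, div_eq_iff p₁_ne_zero, p₁]
  linear_combination -t * hT - T * t_mul_T

lemma p₁_eq_mul_qSubst : p₁ = (Z₂ * Z⁻¹) ^ 4 * qSubst 7 p₁⁻¹ := by
  rw [← qSubst_p₁_mul_p₁, map_inv₀]
  have hne : qSubst 7 p₁ ≠ 0 := (map_ne_zero (qSubst 7 : QSeries →+* QSeries)).2 p₁_ne_zero
  field_simp

end EtaQuotients

/-! ### Lattices of `7`-adic weights -/

section Lattice

/-- The additive group generated by the series `7 ^ a * t ^ k * b i` with `P i a k`. -/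
def lattice (b : Fin 3 → QSeries) (P : Fin 3 → ℕ → ℤ → Prop) : AddSubgroup QSeries :=
  AddSubgroup.closure {x | ∃ i a k, P i a k ∧ x = 7 ^ a * t ^ k * b i}

/-- The condition on `7 ^ a * t ^ k * b i` by which the size of `uOp 7 (x * Z⁻¹ ^ e)` is measured:
`C` bounds the excess of powers of `7` over the slope `7 / 4`, and `o` bounds the order in `t`. -/
def WeightBound (C o : Fin 3 → ℤ) (e : ℤ) (i : Fin 3) (a : ℕ) (k : ℤ) : Prop :=
  C i - 2 * e ≤ 4 * a - 7 * k ∧ o i + 2 * e ≤ 7 * k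

instance (C o : Fin 3 → ℤ) (e : ℤ) (i : Fin 3) (a : ℕ) (k : ℤ) :
    Decidable (WeightBound C o e i a k) :=
  inferInstanceAs (Decidable (_ ∧ _))

variable {b : Fin 3 → QSeries} {P P' : Fin 3 → ℕ → ℤ → Prop} {C o : Fin 3 → ℤ} {x : QSeries}

lemma generator_mem_lattice {i : Fin 3} {a : ℕ} {k : ℤ} (h : P i a k) :
    7 ^ a * t ^ k * b i ∈ lattice b P :=
  AddSubgroup.subset_closure ⟨i, a, k, h, rfl⟩

lemma map_mem_of_mem_lattice {f : QSeries →+ QSeries} {M : AddSubgroup QSeries}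
    (h : ∀ i a k, P i a k → f (7 ^ a * t ^ k * b i) ∈ M) (hx : x ∈ lattice b P) : f x ∈ M := by
  suffices lattice b P ≤ M.comap f from this hx
  rw [lattice, AddSubgroup.closure_le]
  rintro _ ⟨i, a, k, hP, rfl⟩
  exact h i a k hP

lemma mul_mem_lattice {a : ℕ} {k : ℤ} (h : ∀ i a' k', P i a' k' → P' i (a' + a) (k' + k))
    (hx : x ∈ lattice b P) : 7 ^ a * t ^ k * x ∈ lattice b P' := by
  refine map_mem_of_mem_lattice (f := AddMonoidHom.mulLeft (7 ^ a * t ^ k)) ?_ hx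
  intro i a' k' hP
  have hgen := generator_mem_lattice (b := b) (h i a' k' hP)
  rw [pow_add, zpow_add₀ t_ne_zero] at hgen
  convert hgen using 1
  rw [AddMonoidHom.coe_mulLeft]
  ring

lemma lattice_mono (h : ∀ i a k, P i a k → P' i a k) : lattice b P ≤ lattice b P' :=
  fun _ => map_mem_of_mem_lattice (f := AddMonoidHom.id QSeries)
    fun i a k hP => generator_mem_lattice (h i a k hP)

lemma Z_inv_pow_seven :
    Z⁻¹ ^ 7 = qSubst 7 t ^ 2 * (1 + 7 * Z⁻¹ + 21 * Z⁻¹ ^ 2 + 49 * Z⁻¹ ^ 3 + 147 * Z⁻¹ ^ 4 +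
      343 * Z⁻¹ ^ 5 + 343 * Z⁻¹ ^ 6) +
      qSubst 7 t * (7 * Z⁻¹ ^ 4 + 35 * Z⁻¹ ^ 5 + 49 * Z⁻¹ ^ 6) := by
  have hT : qSubst 7 T ≠ 0 := (map_ne_zero (qSubst 7 : QSeries →+* QSeries)).2 T_ne_zero
  have hZ := Z_ne_zero
  rw [t, map_inv₀]
  field_simp
  linear_combination -Z_pow_seven

/-- The coefficients are written as multiples of `7 ^ a * t ^ k`, the form in which
`mul_mem_lattice` applies to the summands. -/
lemma uOp_mul_Z_inv_zpow_add_seven (x : QSeries) (e : ℤ) :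
    let u (i : ℕ) := uOp 7 (x * Z⁻¹ ^ (e + i))
    u 7 - t ^ 2 * u 0 =
      7 ^ 1 * t ^ (2 : ℤ) * u 1 + 3 • (7 ^ 1 * t ^ (2 : ℤ) * u 2) + 7 ^ 2 * t ^ (2 : ℤ) * u 3 +
      3 • (7 ^ 2 * t ^ (2 : ℤ) * u 4) + 7 ^ 3 * t ^ (2 : ℤ) * u 5 + 7 ^ 3 * t ^ (2 : ℤ) * u 6 +
      7 ^ 1 * t ^ (1 : ℤ) * u 4 + 5 • (7 ^ 1 * t ^ (1 : ℤ) * u 5) +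
      7 ^ 2 * t ^ (1 : ℤ) * u 6 := by
  intro u
  have hZ (i : ℕ) : Z⁻¹ ^ (e + i) = Z⁻¹ ^ e * Z⁻¹ ^ i := by
    rw [zpow_add₀ (inv_ne_zero Z_ne_zero), zpow_natCast]
  have ht₂ : t ^ (2 : ℤ) = t ^ 2 := zpow_natCast t 2
  simp only [u, ht₂, zpow_one, ← uOp_qSubst_mul, ← map_nsmul, ← map_add, ← map_sub]
  congr 1
  simp only [hZ, map_mul, map_pow, map_ofNat, nsmul_eq_mul]
  push_cast
  linear_combination (x * Z⁻¹ ^ e) * Z_inv_pow_seven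

lemma uOp_sub_mem_lattice {e : ℤ}
    (h : ∀ i : ℕ, i < 7 → uOp 7 (x * Z⁻¹ ^ (e + i)) ∈ lattice b (WeightBound C o (e + i))) :
    uOp 7 (x * Z⁻¹ ^ (e + 7)) - t ^ 2 * uOp 7 (x * Z⁻¹ ^ e) ∈
      lattice b (fun i a k => WeightBound C o (e + 7) i a k ∧ 1 ≤ a) := by
  have hterm {i a : ℕ} {k : ℤ} (hi : i < 7 := by norm_num) (ha : 1 ≤ a := by norm_num)
      (hC : -2 * (7 - (i : ℤ)) ≤ 4 * a - 7 * k := by norm_num)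
      (ho : 2 * (7 - (i : ℤ)) ≤ 7 * k := by norm_num) :
      7 ^ a * t ^ k * uOp 7 (x * Z⁻¹ ^ (e + i)) ∈
        lattice b (fun i a k => WeightBound C o (e + 7) i a k ∧ 1 ≤ a) := by
    refine mul_mem_lattice ?_ (h i hi)
    rintro i' a' k' ⟨hC', ho'⟩
    refine ⟨⟨?_, ?_⟩, by omega⟩ <;> push_cast <;> linarith
  have hrec := uOp_mul_Z_inv_zpow_add_seven x e
  simp only [Nat.cast_zero, add_zero] at hrec
  push_cast at hrec
  rw [hrec]
  refine add_mem (add_mem (add_mem (add_mem (add_mem (add_mem (add_mem (add_mem ?_ ?_) ?_) ?_)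
    ?_) ?_) ?_) ?_) ?_
  all_goals first | exact hterm | exact nsmul_mem hterm _

/-- The series `uOp 7 (x * Z⁻¹ ^ e)` satisfies the weight bound `WeightBound C o e` for all
`e ≥ e₀`. -/
def HasWeightBound (b : Fin 3 → QSeries) (C o : Fin 3 → ℤ) (x : QSeries) (e₀ : ℤ) : Prop :=
  ∀ e ≥ e₀, uOp 7 (x * Z⁻¹ ^ e) ∈ lattice b (WeightBound C o e)

lemma hasWeightBound_of_seven_consecutive {e₀ : ℤ}
    (h : ∀ i : ℕ, i < 7 → uOp 7 (x * Z⁻¹ ^ (e₀ + i)) ∈ lattice b (WeightBound C o (e₀ + i))) :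
    HasWeightBound b C o x e₀ := by
  suffices hnat : ∀ n : ℕ, uOp 7 (x * Z⁻¹ ^ (e₀ + n)) ∈ lattice b (WeightBound C o (e₀ + n)) by
    intro e he
    obtain ⟨n, hn⟩ := Int.le.dest he
    exact hn ▸ hnat n
  intro n
  induction n using Nat.strong_induction_on with
  | _ n ih =>
    rcases lt_or_ge n 7 with hn | hn
    · exact h n hn
    obtain ⟨m, rfl⟩ := Nat.exists_eq_add_of_le' hn
    have hsub := uOp_sub_mem_lattice (b := b) (C := C) (o := o) (x := x) (e := e₀ + m)
      fun i hi => by simpa only [Nat.cast_add, add_assoc] using ih (m + i) (by omega)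
    have hlead : 7 ^ 0 * t ^ (2 : ℤ) * uOp 7 (x * Z⁻¹ ^ (e₀ + m)) ∈
        lattice b (WeightBound C o (e₀ + m + 7)) := by
      refine mul_mem_lattice ?_ (ih m (by omega))
      rintro i a k ⟨hC, ho⟩
      constructor <;> push_cast <;> linarith
    have hsum := add_mem (lattice_mono (fun _ _ _ hP => hP.1) hsub) hlead
    have ht₂ : t ^ (2 : ℤ) = t ^ 2 := zpow_natCast t 2
    rw [pow_zero, one_mul, ht₂, sub_add_cancel] at hsum
    simpa only [Nat.cast_add, Nat.cast_ofNat, add_assoc] using hsum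

end Lattice

section Admissible

/-- A basis over the polynomials in `T` of the series represented by `LevelPoly`s. -/
structure LevelBasis where
  /-- The basis vectors. -/
  vec : Fin 3 → QSeries
  /-- The coordinates with respect to `vec`. -/
  coords : LevelPoly → Fin 3 → Poly₁
  eval_eq_sum (v : LevelPoly) : v.eval = ∑ i, eval₁ T (coords v i) * vec i

/-- The basis `1, S, T₂`, in which the members `L_{2α}` of the tower are expanded. -/
def evenBasis : LevelBasis where
  vec := ![1, S, T₂]
  coords v := ![v.c₀, v.c₁, v.c₂]
  eval_eq_sum v := by simp [Fin.sum_univ_three, LevelPoly.eval]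

/-- The basis `1, S, S + T₂`, in which the members `L_{2α+1}` of the tower are expanded. -/
def oddBasis : LevelBasis where
  vec := ![1, S, S + T₂]
  coords v := ![v.c₀, v.c₁ + LevelPoly.ofCoeffs [-1] * v.c₂, v.c₂]
  eval_eq_sum v := by
    have hneg : eval₁ T (LevelPoly.ofCoeffs [-1]) = -1 := by
      simp [eval₁, LevelPoly.ofCoeffs, horner]
    simp [Fin.sum_univ_three, LevelPoly.eval, eval₁_add, eval₁_mul, hneg]
    ring

/-- Whether `(7 ^ d)⁻¹ * t ^ k * c(T)` is a combination of the `7 ^ a * t ^ j` with `P a j`. The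
search bound `64` exceeds all powers of `7` that occur. -/
def coeffsAdmissible (P : ℕ → ℤ → Prop) [∀ a k, Decidable (P a k)] (d : ℕ) : ℤ → List ℤ → Bool
  | _, [] => true
  | k, c :: l => decide (c = 0 ∨ ∃ a < 64, P a k ∧ (7 : ℤ) ^ (d + a) ∣ c) &&
      coeffsAdmissible P d (k - 1) l

/-- Whether the coordinates of `(7 ^ d)⁻¹ * t ^ k * v` all pass `coeffsAdmissible`. -/
def levelAdmissible (B : LevelBasis) (P : Fin 3 → ℕ → ℤ → Prop) [∀ i a k, Decidable (P i a k)]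
    (d : ℕ) (k : ℤ) (v : LevelPoly) : Bool :=
  decide (∀ i, coeffsAdmissible (P i) d k (B.coords v i) = true)

/-- Whether the first seven entries of `l`, multiplied by `(7 ^ d)⁻¹ * t ^ k`, satisfy the weight
bounds for `e`, `e - 1`, …, `e - 6`. -/
def tableAdmissible (B : LevelBasis) (C o : Fin 3 → ℤ) (d k : ℕ) (e : ℤ)
    (l : List LevelPoly) : Bool :=
  (List.range 7).all fun j =>
    l[j]?.any (levelAdmissible B (WeightBound C o (e - j)) d k)

variable {B : LevelBasis} {P : Fin 3 → ℕ → ℤ → Prop} {d : ℕ}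

lemma coeff_mul_mem_lattice {b : Fin 3 → QSeries} {i : Fin 3} {k c : ℤ}
    (h : c = 0 ∨ ∃ a, P i a k ∧ (7 : ℤ) ^ (d + a) ∣ c) :
    (7 ^ d)⁻¹ * t ^ k * (c * b i) ∈ lattice b P := by
  rcases h with rfl | ⟨a, hP, m, rfl⟩
  · simp
  · convert zsmul_mem (generator_mem_lattice (b := b) hP) m using 1
    have h₇ : (7 : QSeries) ^ d ≠ 0 := pow_ne_zero _ (by norm_num)
    rw [zsmul_eq_mul]
    push_cast
    rw [pow_add]
    field_simp

variable [∀ i a k, Decidable (P i a k)]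

lemma horner_mul_mem_lattice {b : Fin 3 → QSeries} {i : Fin 3} {k : ℤ} {l : List ℤ}
    (h : coeffsAdmissible (P i) d k l = true) :
    (7 ^ d)⁻¹ * t ^ k * (horner T Int.cast l * b i) ∈ lattice b P := by
  induction l generalizing k with
  | nil => simp [horner]
  | cons c l ih =>
    rw [coeffsAdmissible, Bool.and_eq_true, decide_eq_true_iff] at h
    have hc : c = 0 ∨ ∃ a, P i a k ∧ (7 : ℤ) ^ (d + a) ∣ c :=
      h.1.imp_right fun ⟨a, _, ha⟩ => ⟨a, ha⟩
    convert add_mem (coeff_mul_mem_lattice (b := b) hc) (ih h.2) using 1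
    rw [horner, zpow_sub_one₀ t_ne_zero, t, inv_inv]
    ring

lemma eval_mul_mem_lattice {k : ℤ} {v : LevelPoly} (h : levelAdmissible B P d k v = true) :
    (7 ^ d)⁻¹ * t ^ k * v.eval ∈ lattice B.vec P := by
  rw [levelAdmissible, decide_eq_true_iff] at h
  rw [B.eval_eq_sum, Finset.mul_sum]
  exact sum_mem fun i _ => horner_mul_mem_lattice (h i)

lemma IsUTable.hasWeightBound {C o : Fin 3 → ℤ} {x : QSeries} {k s : ℕ} {l : List LevelPoly}
    (h : IsUTable (qSubst 7 (7 ^ d * T ^ k) * (x * Z ^ s)) l)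
    (hl : tableAdmissible B C o d k (-s) l = true) : HasWeightBound B.vec C o x (-s - 6) := by
  refine hasWeightBound_of_seven_consecutive fun i hi => ?_
  obtain ⟨j, hj⟩ := Nat.exists_eq_add_of_le (Nat.lt_succ_iff.1 hi)
  have hji : (-s - 6 + i : ℤ) = -s - j := by omega
  rw [tableAdmissible, List.all_eq_true] at hl
  obtain ⟨v, hv, hadm⟩ := (Option.any_eq_true ..).1 (hl j (List.mem_range.2 (by omega)))
  have hmem := eval_mul_mem_lattice hadm
  have hne : (7 : QSeries) ^ d * T ^ k ≠ 0 :=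
    mul_ne_zero (pow_ne_zero _ (by norm_num)) (pow_ne_zero _ T_ne_zero)
  have hZ : x * Z⁻¹ ^ (-s - j : ℤ) = Z ^ j * (x * Z ^ s) := by
    rw [inv_zpow', neg_sub, sub_neg_eq_add, zpow_add₀ Z_ne_zero, zpow_natCast, zpow_natCast]
    ring
  rw [← h j v hv, mul_left_comm, uOp_qSubst_mul, zpow_natCast, t, inv_pow, ← mul_inv,
    inv_mul_cancel_left₀ hne] at hmem
  rwa [hji, hZ]

end Admissible

/-! ### Weight bounds along the tower -/

section WeightBounds

/-- `T * p₁⁻¹`, by `T_mul_p₁_inv`. -/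
def p₁Factor : LevelPoly := ⟨[49, 7], [-7, -1], [1]⟩

/-- The factor `T + 8 - S` of `one_add_seven_mul_p₀_eq_qSubst`. -/
def p₀Factor : LevelPoly := ⟨[8, 1], [-1], []⟩

/-- A table for the multiple `p₁` of a series with numerator `Z₂ ^ m`. -/
def p₁Table (m : ℕ) : List LevelPoly := (uTable (m + 4)).map (p₁Factor * ·)

/-- A table for the multiple `p₀` of a series with numerator `Z₂ ^ m`. -/
def p₀Table (m : ℕ) : List LevelPoly :=
  List.zipWith (· + ·) ((uTable (m + 7)).map (p₀Factor * ·))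
    (((uTable m).drop 7).map ((⟨[-1], [], []⟩ : LevelPoly) * ·))

/-- A table for `p₀ + p₁`. -/
def addTable : List LevelPoly :=
  List.zipWith (· + ·) ((p₀Table 0).map ((⟨[0, 1], [], []⟩ : LevelPoly) * ·))
    (((p₁Table 0).drop 3).map ((⟨[7], [], []⟩ : LevelPoly) * ·))

lemma eval_p₁Factor : p₁Factor.eval = T * p₁⁻¹ := by
  rw [T_mul_p₁_inv]
  simp only [LevelPoly.eval, p₁Factor, eval₁, horner]
  push_cast
  ring

lemma eval_p₀Factor : p₀Factor.eval = T + 8 - S := by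
  simp only [LevelPoly.eval, p₀Factor, eval₁, horner]
  push_cast
  ring

lemma Z_pow_mul_inv_pow (n : ℕ) : Z ^ n * Z⁻¹ ^ n = 1 := by
  rw [← mul_pow, mul_inv_cancel₀ Z_ne_zero, one_pow]

lemma isUTable_p₁Table (m s : ℕ) :
    IsUTable (qSubst 7 T * (Z₂ ^ m * Z⁻¹ ^ s * p₁ * Z ^ (s + 4))) (p₁Table m) := by
  convert show IsUTable _ (p₁Table m) from (isUTable_uTable (m + 4)).map_const_mul p₁Factor using 1
  rw [eval_p₁Factor, map_mul]
  conv_lhs => rw [p₁_eq_mul_qSubst]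
  linear_combination qSubst 7 T * Z₂ ^ (m + 4) * qSubst 7 p₁⁻¹ * Z_pow_mul_inv_pow (s + 4)

lemma isUTable_p₀Table (m s : ℕ) :
    IsUTable (qSubst 7 7 * (Z₂ ^ m * Z⁻¹ ^ s * p₀ * Z ^ (s + 7))) (p₀Table m) := by
  convert show IsUTable _ (p₀Table m) from ((isUTable_uTable (m + 7)).map_const_mul
    p₀Factor).zipWith_add (((isUTable_uTable m).drop 7).map_const_mul _) using 1
  rw [eval_p₀Factor]
  simp only [LevelPoly.eval, eval₁, horner, map_ofNat, map_add, map_mul, map_intCast, map_zero]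
  push_cast
  linear_combination Z₂ ^ m * Z⁻¹ ^ s * Z ^ (s + 7) * one_add_seven_mul_p₀_eq_qSubst +
    Z₂ ^ (m + 7) * qSubst 7 (T + 8 - S) * Z_pow_mul_inv_pow (s + 7) -
    Z₂ ^ m * Z ^ 7 * Z_pow_mul_inv_pow s

lemma isUTable_addTable : IsUTable (qSubst 7 (7 * T) * ((p₀ + p₁) * Z ^ 7)) addTable := by
  convert show IsUTable _ addTable from ((isUTable_p₀Table 0 0).map_const_mul _).zipWith_add
    (((isUTable_p₁Table 0 0).drop 3).map_const_mul _) using 1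
  simp only [LevelPoly.eval, eval₁, horner, map_ofNat, map_add, map_mul, map_intCast, map_zero]
  push_cast
  ring

/-- The weights `C` of the odd members of the tower. -/
def oddWeight : Fin 3 → ℤ := ![-26, -33, -33]

/-- The order bounds `o` of the odd members of the tower. -/
def oddOrder : Fin 3 → ℤ := ![22, 29, 22]

/-- The weights `C` of the even members of the tower: they encode the exponents `⌊(7n - 2) / 4⌋`,
`⌊(7n + 2) / 4⌋`, `⌊(7n - 1) / 4⌋` of `7`, where `S = p₀ * T` and `T₂ = p₁ * T` shift `n` by one. -/
def evenWeight : Fin 3 → ℤ := ![-5, -8, -11]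

/-- The order bounds `o` of the even members of the tower. -/
def evenOrder : Fin 3 → ℤ := ![1, 8, 15]

/-- The order bounds of `1`, `p₀` and `p₁`. -/
def baseOrder : Fin 3 → ℤ := ![-3, 4, 11]

/-- The order bounds of `p₀ + p₁`, in which the leading terms of `p₀` and `p₁` cancel. -/
def addOrder : Fin 3 → ℤ := ![-2, 5, 12]

lemma hasWeightBound_one : HasWeightBound evenBasis.vec evenWeight baseOrder 1 (-6) := by
  have h : IsUTable (qSubst 7 (7 ^ 0 * T ^ 0) * (1 * Z ^ 0)) (uTable 0) := by
    simpa using isUTable_uTable 0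
  simpa using h.hasWeightBound (by decide +kernel)

lemma hasWeightBound_p₁ : HasWeightBound evenBasis.vec evenWeight baseOrder p₁ (-10) := by
  have h : IsUTable (qSubst 7 (7 ^ 0 * T ^ 1) * (p₁ * Z ^ 4)) (p₁Table 0) := by
    simpa using isUTable_p₁Table 0 0
  exact h.hasWeightBound (by decide +kernel)

lemma hasWeightBound_p₀ : HasWeightBound evenBasis.vec evenWeight baseOrder p₀ (-13) := by
  have h : IsUTable (qSubst 7 (7 ^ 1 * T ^ 0) * (p₀ * Z ^ 7)) (p₀Table 0) := by
    simpa using isUTable_p₀Table 0 0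
  exact h.hasWeightBound (by decide +kernel)

lemma hasWeightBound_p₀_add_p₁ :
    HasWeightBound evenBasis.vec evenWeight addOrder (p₀ + p₁) (-13) := by
  have h : IsUTable (qSubst 7 (7 ^ 1 * T ^ 1) * ((p₀ + p₁) * Z ^ 7)) addTable := by
    simpa using isUTable_addTable
  exact h.hasWeightBound (by decide +kernel)

lemma hasWeightBound_A₅ : HasWeightBound oddBasis.vec oddWeight oddOrder A₅ (-22) := by
  have h : IsUTable (qSubst 7 (7 ^ 0 * T ^ 0) * (A₅ * Z ^ 16)) (uTable 5) := by
    convert isUTable_uTable 5 using 1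
    rw [A₅, pow_zero, pow_zero, mul_one, map_one]
    linear_combination Z₂ ^ 5 * Z_pow_mul_inv_pow 16
  exact h.hasWeightBound (by decide +kernel)

lemma hasWeightBound_A₅_mul_p₁ :
    HasWeightBound oddBasis.vec oddWeight oddOrder (A₅ * p₁) (-26) := by
  have h : IsUTable (qSubst 7 (7 ^ 0 * T ^ 1) * (A₅ * p₁ * Z ^ (16 + 4))) (p₁Table 5) := by
    have htable := isUTable_p₁Table 5 16
    rw [pow_zero, one_mul, pow_one, A₅]
    with_reducible exact htable
  exact h.hasWeightBound (by decide +kernel)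

lemma hasWeightBound_A₅_mul_p₀ :
    HasWeightBound oddBasis.vec oddWeight oddOrder (A₅ * p₀) (-29) := by
  have h : IsUTable (qSubst 7 (7 ^ 1 * T ^ 0) * (A₅ * p₀ * Z ^ (16 + 7))) (p₀Table 5) := by
    have htable := isUTable_p₀Table 5 16
    rw [pow_zero, mul_one, pow_one, A₅]
    with_reducible exact htable
  exact h.hasWeightBound (by decide +kernel)

end WeightBounds

/-! ### The two steps of the tower -/

section TowerStep

/-- The lattice containing the even members of the tower. -/
def evenLattice : AddSubgroup QSeries := lattice evenBasis.vec (WeightBound evenWeight evenOrder 0)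

/-- The weight condition on the odd members of the tower. For `t ^ 4 * (S + T₂)` the weight
alone would allow `a = 0`, which is too weak for `uOp_mem_evenLattice`. -/
def OddBound (i : Fin 3) (a : ℕ) (k : ℤ) : Prop :=
  WeightBound oddWeight oddOrder 0 i a k ∧ (i = 2 → k = 4 → 1 ≤ a)

instance (i : Fin 3) (a : ℕ) (k : ℤ) : Decidable (OddBound i a k) :=
  inferInstanceAs (Decidable (_ ∧ _))

/-- The lattice containing the odd members of the tower. -/
def oddLattice : AddSubgroup QSeries := lattice oddBasis.vec OddBound

lemma uOp_pow_mul_t_pow_mul (a n : ℕ) (x : QSeries) :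
    uOp 7 (7 ^ a * t ^ n * x) = 7 ^ a * t ^ (-n : ℤ) * uOp 7 (x * Z⁻¹ ^ (4 * n : ℤ)) := by
  have hZ : Z⁻¹ ^ (4 * n : ℤ) = (Z⁻¹ ^ 4) ^ n := by rw [← pow_mul]; exact_mod_cast rfl
  have ht : 7 ^ a * t ^ n * x = qSubst 7 (7 ^ a * T ^ n) * (x * (Z⁻¹ ^ 4) ^ n) := by
    conv_lhs => rw [t_eq_mul_qSubst]
    simp only [map_mul, map_pow, map_ofNat, mul_pow]
    ring
  rw [ht, hZ, uOp_qSubst_mul, zpow_neg, zpow_natCast, t, ← inv_pow, inv_inv]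

lemma t_zpow_add_one_mul (n : ℕ) (x : QSeries) : t ^ (n + 1 : ℤ) * x = t ^ n * (x * t) := by
  rw [zpow_add_one₀ t_ne_zero, zpow_natCast]
  ring

lemma weightBound_even_zero {a : ℕ} {k : ℤ} :
    WeightBound evenWeight evenOrder 0 0 a k ↔ 1 ≤ k ∧ 7 * k ≤ 4 * a + 5 := by
  simp only [WeightBound, evenWeight, evenOrder, Matrix.cons_val]
  omega

lemma weightBound_even_one {a : ℕ} {k : ℤ} :
    WeightBound evenWeight evenOrder 0 1 a k ↔ 2 ≤ k ∧ 7 * k ≤ 4 * a + 8 := by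
  simp only [WeightBound, evenWeight, evenOrder, Matrix.cons_val]
  omega

lemma weightBound_even_two {a : ℕ} {k : ℤ} :
    WeightBound evenWeight evenOrder 0 2 a k ↔ 3 ≤ k ∧ 7 * k ≤ 4 * a + 11 := by
  simp only [WeightBound, evenWeight, evenOrder, Matrix.cons_val]
  omega

lemma oddBound_zero {a : ℕ} {k : ℤ} : OddBound 0 a k ↔ 4 ≤ k ∧ 7 * k ≤ 4 * a + 26 := by
  simp only [OddBound, WeightBound, oddWeight, oddOrder, Matrix.cons_val, Fin.reduceEq]
  omega

lemma oddBound_one {a : ℕ} {k : ℤ} : OddBound 1 a k ↔ 5 ≤ k ∧ 7 * k ≤ 4 * a + 33 := by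
  simp only [OddBound, WeightBound, oddWeight, oddOrder, Matrix.cons_val, Fin.reduceEq]
  omega

lemma oddBound_two {a : ℕ} {k : ℤ} :
    OddBound 2 a k ↔ 4 ≤ k ∧ 7 * k ≤ 4 * a + 33 ∧ (k = 4 → 1 ≤ a) := by
  simp only [OddBound, WeightBound, oddWeight, oddOrder, Matrix.cons_val, forall_const]
  omega

section

variable {b : Fin 3 → QSeries} {C o : Fin 3 → ℤ} {x : QSeries} {e₀ : ℤ} {a n : ℕ}

lemma HasWeightBound.uOp_mem_lattice {P : Fin 3 → ℕ → ℤ → Prop} (h : HasWeightBound b C o x e₀)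
    (he₀ : e₀ ≤ 0)
    (hP : ∀ i (a' : ℕ) k, C i - 8 * n ≤ 4 * a' - 7 * k → o i + 8 * n ≤ 7 * k →
      P i (a' + a) (k + -n)) :
    uOp 7 (7 ^ a * t ^ n * x) ∈ lattice b P := by
  rw [uOp_pow_mul_t_pow_mul]
  refine mul_mem_lattice ?_ (h (4 * n) (by omega))
  rintro i a' k ⟨hC, ho⟩
  exact hP i a' k (by linarith) (by linarith)

lemma uOp_mem_oddLattice (h : HasWeightBound oddBasis.vec oddWeight oddOrder x e₀) (he₀ : e₀ ≤ 0)
    (ha : 1 ≤ a) (hna : n ≤ 4 * a) : uOp 7 (7 ^ a * t ^ n * x) ∈ oddLattice := by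
  refine h.uOp_mem_lattice he₀ fun i a' k hC ho => ⟨⟨?_, ?_⟩, by omega⟩ <;> push_cast <;> omega

lemma uOp_mem_evenLattice (h : HasWeightBound evenBasis.vec evenWeight o x e₀) (he₀ : e₀ ≤ 0)
    (ho : ∀ i, evenOrder i ≤ o i + n) (hna : n ≤ 4 * a) :
    uOp 7 (7 ^ a * t ^ n * x) ∈ evenLattice := by
  refine h.uOp_mem_lattice he₀ fun i a' k hC hk => ⟨?_, ?_⟩
  · push_cast
    omega
  · have := ho i
    omega

lemma evenOrder_le_baseOrder_add (hn : 4 ≤ n) (i : Fin 3) : evenOrder i ≤ baseOrder i + n := by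
  fin_cases i <;> simp [evenOrder, baseOrder] <;> omega

lemma evenOrder_le_addOrder_add (hn : 3 ≤ n) (i : Fin 3) : evenOrder i ≤ addOrder i + n := by
  fin_cases i <;> simp [evenOrder, addOrder] <;> omega

end

lemma uOp_A₅_mul_mem_oddLattice {x : QSeries} (hx : x ∈ evenLattice) :
    uOp 7 (A₅ * x) ∈ oddLattice := by
  refine map_mem_of_mem_lattice (f := (uOp 7).comp (AddMonoidHom.mulLeft A₅)) ?_ hx
  intro i a k hP
  rw [AddMonoidHom.comp_apply, AddMonoidHom.coe_mulLeft, mul_comm A₅]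
  match i, hP with
  | 0, hP =>
    obtain ⟨hk, ha⟩ := weightBound_even_zero.1 hP
    lift k to ℕ using by omega
    have hgen : 7 ^ a * t ^ (k : ℤ) * 1 * A₅ = 7 ^ a * t ^ k * A₅ := by
      rw [mul_one, zpow_natCast]
    exact hgen ▸ uOp_mem_oddLattice hasWeightBound_A₅ (by norm_num) (by omega) (by omega)
  | 1, hP =>
    obtain ⟨hk, ha⟩ := weightBound_even_one.1 hP
    obtain ⟨n, rfl⟩ : ∃ n : ℕ, k = n + 1 := ⟨(k - 1).toNat, by omega⟩
    have hgen : 7 ^ a * t ^ (n + 1 : ℤ) * S * A₅ = 7 ^ a * t ^ n * (A₅ * p₀) := by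
      rw [mul_assoc (7 ^ a), t_zpow_add_one_mul, p₀]
      ring
    exact hgen ▸ uOp_mem_oddLattice hasWeightBound_A₅_mul_p₀ (by norm_num) (by omega) (by omega)
  | 2, hP =>
    obtain ⟨hk, ha⟩ := weightBound_even_two.1 hP
    obtain ⟨n, rfl⟩ : ∃ n : ℕ, k = n + 1 := ⟨(k - 1).toNat, by omega⟩
    have hgen : 7 ^ a * t ^ (n + 1 : ℤ) * T₂ * A₅ = 7 ^ a * t ^ n * (A₅ * p₁) := by
      rw [mul_assoc (7 ^ a), t_zpow_add_one_mul, p₁]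
      ring
    exact hgen ▸ uOp_mem_oddLattice hasWeightBound_A₅_mul_p₁ (by norm_num) (by omega) (by omega)

lemma uOp_mem_evenLattice_of_mem_oddLattice {x : QSeries} (hx : x ∈ oddLattice) :
    uOp 7 x ∈ evenLattice := by
  refine map_mem_of_mem_lattice ?_ hx
  intro i a k hP
  match i, hP with
  | 0, hP =>
    obtain ⟨hk, ha⟩ := oddBound_zero.1 hP
    lift k to ℕ using by omega
    exact zpow_natCast t k ▸ uOp_mem_evenLattice hasWeightBound_one (by norm_num)
      (evenOrder_le_baseOrder_add (by omega)) (by omega)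
  | 1, hP =>
    obtain ⟨hk, ha⟩ := oddBound_one.1 hP
    obtain ⟨n, rfl⟩ : ∃ n : ℕ, k = n + 1 := ⟨(k - 1).toNat, by omega⟩
    have hgen : 7 ^ a * t ^ (n + 1 : ℤ) * S = 7 ^ a * t ^ n * p₀ := by
      rw [mul_assoc, t_zpow_add_one_mul, p₀, mul_assoc]
    exact hgen ▸ uOp_mem_evenLattice hasWeightBound_p₀ (by norm_num)
      (evenOrder_le_baseOrder_add (by omega)) (by omega)
  | 2, hP =>
    obtain ⟨hk, ha, hlow⟩ := oddBound_two.1 hP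
    obtain ⟨n, rfl⟩ : ∃ n : ℕ, k = n + 1 := ⟨(k - 1).toNat, by omega⟩
    have hgen : 7 ^ a * t ^ (n + 1 : ℤ) * (S + T₂) = 7 ^ a * t ^ n * (p₀ + p₁) := by
      rw [mul_assoc, t_zpow_add_one_mul, add_mul, p₀, p₁, mul_assoc]
    refine hgen ▸ ?_
    by_cases hn : 4 ≤ n
    · have ho := evenOrder_le_baseOrder_add hn
      rw [mul_add, map_add]
      exact add_mem (uOp_mem_evenLattice hasWeightBound_p₀ (by norm_num) ho (by omega))
        (uOp_mem_evenLattice hasWeightBound_p₁ (by norm_num) ho (by omega))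
    · have := hlow (by omega)
      exact uOp_mem_evenLattice hasWeightBound_p₀_add_p₁ (by norm_num)
        (evenOrder_le_addOrder_add (by omega)) (by omega)

lemma uOp_A₅_sub_mem_oddLattice :
    uOp 7 A₅ - t ^ 6 * uOp 7 (A₅ * Z⁻¹ ^ (-21 : ℤ)) ∈ oddLattice := by
  have hstep {e : ℤ} {j : ℕ} (he : -22 ≤ e) (hj : e + 7 + 7 * j = 0) :
      t ^ (2 * j) * (uOp 7 (A₅ * Z⁻¹ ^ (e + 7)) - t ^ 2 * uOp 7 (A₅ * Z⁻¹ ^ e)) ∈ oddLattice := by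
    have hsub := uOp_sub_mem_lattice fun i _ => hasWeightBound_A₅ (e + i) (by omega)
    have hmul := mul_mem_lattice (P' := OddBound) (a := 0) (k := (2 * j : ℕ)) ?_ hsub
    · rwa [pow_zero, one_mul, zpow_natCast] at hmul
    · rintro i a k ⟨⟨hC, ho⟩, ha⟩
      refine ⟨⟨?_, ?_⟩, by omega⟩ <;> push_cast <;> omega
  convert add_mem (add_mem (hstep (e := -7) (j := 0) (by norm_num) (by norm_num))
    (hstep (e := -14) (j := 1) (by norm_num) (by norm_num)))
    (hstep (e := -21) (j := 2) (by norm_num) (by norm_num)) using 1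
  norm_num
  ring

lemma t_pow_mul_uOp_mem_oddLattice : t ^ 6 * uOp 7 (A₅ * Z⁻¹ ^ (-21 : ℤ)) ∈ oddLattice := by
  have hA : A₅ * Z⁻¹ ^ (-21 : ℤ) = Z ^ 5 * Z₂ ^ 5 := by
    have hZ : Z⁻¹ ^ (-21 : ℤ) = Z ^ 21 := by rw [inv_zpow', neg_neg]; exact_mod_cast rfl
    rw [A₅, hZ]
    linear_combination Z₂ ^ 5 * Z ^ 5 * Z_pow_mul_inv_pow 16
  obtain ⟨v, hv, hadm⟩ := (Option.any_eq_true ..).1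
    (show ((uTable 5)[5]?.any (levelAdmissible oddBasis OddBound 0 6)) = true by decide +kernel)
  have hmem := eval_mul_mem_lattice hadm
  rw [← isUTable_uTable 5 5 v hv, ← hA, pow_zero, inv_one, one_mul] at hmem
  exact_mod_cast hmem

lemma uOp_A₅_mem_oddLattice : uOp 7 A₅ ∈ oddLattice := by
  simpa only [sub_add_cancel] using
    add_mem uOp_A₅_sub_mem_oddLattice t_pow_mul_uOp_mem_oddLattice

end TowerStep

/-! ### Descent to integer coefficients -/

section Descent

/-- The coefficientwise inclusion of Laurent series over `ℤ` into those over `ℂ`. -/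
def intLaurentCast : LaurentSeries ℤ →+* QSeries where
  toFun x := x.map (Int.castRingHom ℂ)
  map_zero' := by ext; simp
  map_add' x y := by ext; simp
  map_one' := HahnSeries.map_one (Int.castRingHom ℂ).toMonoidWithZeroHom
  map_mul' x y := HahnSeries.map_mul (Int.castRingHom ℂ : ℤ →ₙ+* ℂ)

/-- The coefficientwise inclusion of power series over `ℤ` into Laurent series over `ℂ`. -/
def intPowerCast : ℤ⟦X⟧ →+* QSeries := intLaurentCast.comp (HahnSeries.ofPowerSeries ℤ ℤ)

lemma coeff_intLaurentCast (x : LaurentSeries ℤ) (n : ℤ) :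
    (intLaurentCast x).coeff n = (x.coeff n : ℂ) := rfl

lemma intLaurentCast_injective : Function.Injective intLaurentCast := by
  intro x y h
  ext n
  have hn := congrArg (fun z : QSeries => z.coeff n) h
  simp only [coeff_intLaurentCast] at hn
  exact_mod_cast hn

lemma intLaurentCast_ofPowerSeries (f : ℤ⟦X⟧) :
    intLaurentCast (HahnSeries.ofPowerSeries ℤ ℤ f) = intPowerCast f := rfl

lemma intPowerCast_eq_toLaurent (f : ℤ⟦X⟧) :
    intPowerCast f = toLaurent (PowerSeries.map (Int.castRingHom ℂ) f) := by
  ext n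
  have hf := PowerSeries.coeff_coe f n
  have hmap := PowerSeries.coeff_coe (PowerSeries.map (Int.castRingHom ℂ) f) n
  rw [← intLaurentCast_ofPowerSeries, coeff_intLaurentCast, hf, hmap]
  split_ifs <;> simp

lemma intPowerCast_J (b : ℕ) : intPowerCast (J b) = euler b :=
  (intPowerCast_eq_toLaurent _).trans (congrArg toLaurent (map_eulerProd (Int.castRingHom ℂ) b))

lemma intPowerCast_X : intPowerCast X = qVar := by
  rw [intPowerCast_eq_toLaurent, PowerSeries.map_X, toLaurent_X]

lemma intPowerCast_eq_t {t' : ℤ⟦X⟧} (h : t' * J 1 ^ 4 = X * J 7 ^ 4) : intPowerCast t' = t := by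
  have hcast := congrArg intPowerCast h
  simp only [map_mul, map_pow, intPowerCast_J, intPowerCast_X] at hcast
  rw [t, T, inv_div, eq_div_iff (pow_ne_zero _ (euler_ne_zero 1)), hcast]

lemma X_dvd_of_mul_J_pow_eq {t' : ℤ⟦X⟧} (h : t' * J 1 ^ 4 = X * J 7 ^ 4) : X ∣ t' := by
  have hJ : constantCoeff (J 1) = 1 := constantCoeff_eulerProd one_ne_zero
  have hcoeff := congrArg constantCoeff h
  rw [map_mul, map_mul, map_pow, hJ, one_pow, mul_one, constantCoeff_X, zero_mul] at hcoeff
  exact X_dvd_iff.2 hcoeff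

lemma intPowerCast_eq_p₀ {p : ℤ⟦X⟧} (h : (1 + 7 * p) * (J 1 ^ 7 * J 14) = 8 * J 2 ^ 7 * J 7) :
    intPowerCast p = p₀ := by
  have hcast := congrArg intPowerCast h
  simp only [map_mul, map_pow, map_add, map_one, map_ofNat, intPowerCast_J] at hcast
  have hne : euler 1 ^ 7 * euler 14 ≠ 0 :=
    mul_ne_zero (pow_ne_zero _ (euler_ne_zero 1)) (euler_ne_zero 14)
  have hone : 1 + 7 * intPowerCast p = 1 + 7 * p₀ := by
    rw [one_add_seven_mul_p₀, ← mul_div_assoc, eq_div_iff hne, hcast, mul_assoc]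
  linear_combination 1 / 7 * hone

lemma intLaurentCast_eq_p₁ {p : LaurentSeries ℤ}
    (h : p * HahnSeries.ofPowerSeries ℤ ℤ (X * J 1 ^ 4 * J 14 ^ 4) =
      HahnSeries.ofPowerSeries ℤ ℤ (J 2 ^ 4 * J 7 ^ 4)) :
    intLaurentCast p = p₁ := by
  have hcast := congrArg intLaurentCast h
  rw [map_mul intLaurentCast] at hcast
  simp only [intLaurentCast_ofPowerSeries, map_mul, map_pow, intPowerCast_J, intPowerCast_X]
    at hcast
  have hq := qVar_ne_zero
  have h₁ := euler_ne_zero 1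
  have h₁₄ := euler_ne_zero 14
  rw [p₁, t, T, T₂_eq_div]
  field_simp
  linear_combination hcast

lemma intLaurentCast_eq_A₅ {A : LaurentSeries ℤ}
    (h : A * HahnSeries.ofPowerSeries ℤ ℤ (J 1 ^ 16 * J 98 ^ 5) =
      HahnSeries.ofPowerSeries ℤ ℤ (X ^ 12 * J 2 ^ 5 * J 49 ^ 16)) :
    intLaurentCast A = A₅ := by
  have hcast := congrArg intLaurentCast h
  rw [map_mul intLaurentCast] at hcast
  simp only [intLaurentCast_ofPowerSeries, map_mul, map_pow, intPowerCast_J, intPowerCast_X]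
    at hcast
  have h₁ := euler_ne_zero 1
  have h₉₈ := euler_ne_zero 98
  rw [A₅, Z_eq_div, Z₂_eq_div]
  field_simp
  linear_combination hcast

lemma intLaurentCast_eq_uOp {U : LaurentSeries ℤ → LaurentSeries ℤ}
    (hU : ∀ (f : LaurentSeries ℤ) (n : ℤ), (U f).coeff n = f.coeff (7 * n))
    (x : LaurentSeries ℤ) : intLaurentCast (U x) = uOp 7 (intLaurentCast x) := by
  ext n
  rw [coeff_uOp, coeff_intLaurentCast, coeff_intLaurentCast, hU, Nat.cast_ofNat]

lemma intLaurentCast_tower_mem_evenLattice {U : LaurentSeries ℤ → LaurentSeries ℤ}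
    {A : LaurentSeries ℤ} {L : ℕ → LaurentSeries ℤ}
    (hU : ∀ x, intLaurentCast (U x) = uOp 7 (intLaurentCast x)) (hA : intLaurentCast A = A₅)
    (hL₀ : L 0 = 1) (hLodd : ∀ β, L (2 * β + 1) = U (A * L (2 * β)))
    (hLeven : ∀ β, L (2 * β + 2) = U (L (2 * β + 1))) (β : ℕ) :
    intLaurentCast (L (2 * β + 2)) ∈ evenLattice := by
  rw [hLeven, hLodd, hU, hU, map_mul, hA]
  apply uOp_mem_evenLattice_of_mem_oddLattice
  induction β with
  | zero => simpa only [mul_zero, hL₀, map_one, mul_one] using uOp_A₅_mem_oddLattice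
  | succ β ih =>
    apply uOp_A₅_mul_mem_oddLattice
    rw [mul_add, mul_one, hLeven, hLodd, hU, hU, map_mul, hA]
    exact uOp_mem_evenLattice_of_mem_oddLattice ih

end Descent

/-! ### Expansions in powers of `t` -/

section Expansion

variable {t' : ℤ⟦X⟧}

lemma tpowSum_add (c c' : ℕ → ℤ) :
    tpowSum t' (fun n => c n + c' n) = tpowSum t' c + tpowSum t' c' := by
  ext m
  simp [tpowSum, add_mul, Finset.sum_add_distrib]

lemma tpowSum_ite_eq (ht : X ∣ t') (n : ℕ) (z : ℤ) :
    tpowSum t' (fun m => if m = n then z else 0) = C z * t' ^ n := by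
  ext m
  rw [tpowSum, coeff_mk, coeff_C_mul]
  simp only [ite_mul, zero_mul, Finset.sum_ite_eq', Finset.mem_range]
  split_ifs with h
  · rfl
  · rw [X_pow_dvd_iff.1 (pow_dvd_pow_of_dvd ht n) m (by omega), mul_zero]

/-- The map `d ↦ ∑ n ≥ N, d n * 7 ^ w n * t' ^ n`. -/
def weightedSum (t' : ℤ⟦X⟧) (N : ℕ) (w : ℕ → ℕ) : (ℕ → ℤ) →+ ℤ⟦X⟧ :=
  AddMonoidHom.mk' (fun d => tpowSum t' fun n => if N ≤ n then d n * 7 ^ w n else 0) fun d d' => by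
    rw [← tpowSum_add]
    congr 1
    ext n
    split_ifs
    · rw [Pi.add_apply, add_mul]
    · rw [add_zero]

lemma exists_weightedSum_eq (ht : X ∣ t') {N n a : ℕ} {w : ℕ → ℕ} (hn : N ≤ n) (ha : w n ≤ a) :
    ∃ d, weightedSum t' N w d = 7 ^ a * t' ^ n := by
  refine ⟨fun m => if m = n then 7 ^ (a - w n) else 0, ?_⟩
  have hterm : (fun m => if N ≤ m then (if m = n then (7 : ℤ) ^ (a - w n) else 0) * 7 ^ w m else 0)
      = fun m => if m = n then 7 ^ a else 0 := by
    ext m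
    by_cases hm : m = n
    · rw [if_pos (hm ▸ hn), if_pos hm, if_pos hm, hm, pow_sub_mul_pow _ ha]
    · simp [hm]
  rw [weightedSum, AddMonoidHom.mk'_apply, hterm, tpowSum_ite_eq ht, map_pow, map_ofNat]

/-- The series `x * ∑ n ≥ N, d n * 7 ^ w n * t' ^ n` with integer coefficients `d n`. -/
def weightedSumMultiples (t' : ℤ⟦X⟧) (x : QSeries) (N : ℕ) (w : ℕ → ℕ) : AddSubgroup QSeries :=
  ((AddMonoidHom.mulLeft x).comp (intPowerCast.toAddMonoidHom.comp (weightedSum t' N w))).range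

lemma mul_mem_weightedSumMultiples (hX : X ∣ t') (ht : intPowerCast t' = t) (x : QSeries)
    {N n a : ℕ} {w : ℕ → ℕ} (hn : N ≤ n) (ha : w n ≤ a) :
    x * (7 ^ a * t ^ n) ∈ weightedSumMultiples t' x N w := by
  obtain ⟨d, hd⟩ := exists_weightedSum_eq hX hn ha
  refine ⟨d, ?_⟩
  have hcast : intPowerCast (weightedSum t' N w d) = 7 ^ a * t ^ n := by
    rw [hd, map_mul, map_pow, map_pow, map_ofNat, ht]
  exact congrArg (x * ·) hcast

lemma evenLattice_le_sup (hX : X ∣ t') (ht : intPowerCast t' = t) :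
    evenLattice ≤ weightedSumMultiples t' p₀ 1 (fun n => (7 * n + 2) / 4) ⊔
      weightedSumMultiples t' p₁ 2 (fun n => (7 * n - 1) / 4) ⊔
      weightedSumMultiples t' 1 1 (fun n => (7 * n - 2) / 4) := by
  refine fun x => map_mem_of_mem_lattice (f := AddMonoidHom.id QSeries) ?_
  intro i a k hP
  rw [AddMonoidHom.id_apply]
  match i, hP with
  | 0, hP =>
    obtain ⟨hk, ha⟩ := weightBound_even_zero.1 hP
    lift k to ℕ using by omega
    have hgen : 7 ^ a * t ^ (k : ℤ) * 1 = 1 * (7 ^ a * t ^ k) := by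
      rw [mul_comm, zpow_natCast]
    exact hgen ▸ AddSubgroup.mem_sup_right
      (mul_mem_weightedSumMultiples hX ht 1 (by omega) (by omega))
  | 1, hP =>
    obtain ⟨hk, ha⟩ := weightBound_even_one.1 hP
    obtain ⟨n, rfl⟩ : ∃ n : ℕ, k = n + 1 := ⟨(k - 1).toNat, by omega⟩
    have hgen : 7 ^ a * t ^ (n + 1 : ℤ) * S = p₀ * (7 ^ a * t ^ n) := by
      rw [mul_assoc, t_zpow_add_one_mul, p₀]
      ring
    exact hgen ▸ AddSubgroup.mem_sup_left (AddSubgroup.mem_sup_left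
      (mul_mem_weightedSumMultiples hX ht p₀ (by omega) (by omega)))
  | 2, hP =>
    obtain ⟨hk, ha⟩ := weightBound_even_two.1 hP
    obtain ⟨n, rfl⟩ : ∃ n : ℕ, k = n + 1 := ⟨(k - 1).toNat, by omega⟩
    have hgen : 7 ^ a * t ^ (n + 1 : ℤ) * T₂ = p₁ * (7 ^ a * t ^ n) := by
      rw [mul_assoc, t_zpow_add_one_mul, p₁]
      ring
    exact hgen ▸ AddSubgroup.mem_sup_left (AddSubgroup.mem_sup_right
      (mul_mem_weightedSumMultiples hX ht p₁ (by omega) (by omega)))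

lemma exists_eq_weightedSum_of_mem_evenLattice {p0 : ℤ⟦X⟧} {p1 x : LaurentSeries ℤ} (hX : X ∣ t')
    (ht : intPowerCast t' = t) (hp0 : intPowerCast p0 = p₀) (hp1 : intLaurentCast p1 = p₁)
    (hx : intLaurentCast x ∈ evenLattice) :
    ∃ d₀ d₁ d₂ : ℕ → ℤ,
      x = HahnSeries.ofPowerSeries ℤ ℤ (p0 * weightedSum t' 1 (fun n => (7 * n + 2) / 4) d₀)
        + p1 * HahnSeries.ofPowerSeries ℤ ℤ (weightedSum t' 2 (fun n => (7 * n - 1) / 4) d₁)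
        + HahnSeries.ofPowerSeries ℤ ℤ (weightedSum t' 1 (fun n => (7 * n - 2) / 4) d₂) := by
  obtain ⟨_, hy, _, ⟨d₂, rfl⟩, hsum⟩ := AddSubgroup.mem_sup.1 (evenLattice_le_sup hX ht hx)
  obtain ⟨_, ⟨d₀, rfl⟩, _, ⟨d₁, rfl⟩, rfl⟩ := AddSubgroup.mem_sup.1 hy
  refine ⟨d₀, d₁, d₂, intLaurentCast_injective ?_⟩
  rw [← hsum]
  simp only [map_add, map_mul intLaurentCast, intLaurentCast_ofPowerSeries, map_mul intPowerCast,
    hp0, hp1]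
  simp

end Expansion

end D5Tower

/-- in the d₅ tower, for every `α ≥ 1` there are integers `d(n,i)` with
`L_{2α} = p₀·∑_{n≥1} d(n,0)·7^{⌊(7n+2)/4⌋}·tⁿ + p₁·∑_{n≥2} d(n,1)·7^{⌊(7n−1)/4⌋}·tⁿ
 + ∑_{n≥1} d(n,2)·7^{⌊(7n−2)/4⌋}·tⁿ`.
Here `t = q·J_7^4/J_1^4`, `p₀ = (8·J_2^7·J_7/(J_1^7·J_14) − 1)/7`,
`p₁ = q⁻¹·J_2^4·J_7^4/(J_1^4·J_14^4)`, all given by their defining equations. -/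
theorem stmt16
    (t : PowerSeries ℤ) (ht : t * (J 1) ^ 4 = PowerSeries.X * (J 7) ^ 4)
    (p0 : PowerSeries ℤ)
    (hp0 : (1 + 7 * p0) * ((J 1) ^ 7 * J 14) = 8 * (J 2) ^ 7 * J 7)
    (p1 : LaurentSeries ℤ)
    (hp1 : p1 * HahnSeries.ofPowerSeries ℤ ℤ (PowerSeries.X * (J 1) ^ 4 * (J 14) ^ 4)
        = HahnSeries.ofPowerSeries ℤ ℤ ((J 2) ^ 4 * (J 7) ^ 4))
    (U : LaurentSeries ℤ → LaurentSeries ℤ)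
    (hU : ∀ (f : LaurentSeries ℤ) (n : ℤ), (U f).coeff n = f.coeff (7 * n))
    (A5 : LaurentSeries ℤ)
    (hA5 : A5 * HahnSeries.ofPowerSeries ℤ ℤ ((J 1) ^ 16 * (J 98) ^ 5)
        = HahnSeries.ofPowerSeries ℤ ℤ (PowerSeries.X ^ 12 * (J 2) ^ 5 * (J 49) ^ 16))
    (L : ℕ → LaurentSeries ℤ) (hL0 : L 0 = 1)
    (hLodd : ∀ β : ℕ, L (2 * β + 1) = U (A5 * L (2 * β)))
    (hLeven : ∀ β : ℕ, L (2 * β + 2) = U (L (2 * β + 1)))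
    (α : ℕ) (hα : 1 ≤ α) :
    ∃ d : ℕ → ℕ → ℤ,
      L (2 * α)
        = HahnSeries.ofPowerSeries ℤ ℤ
            (p0 * tpowSum t fun n =>
              if 1 ≤ n then d n 0 * 7 ^ ((7 * n + 2) / 4) else 0)
        + p1 * HahnSeries.ofPowerSeries ℤ ℤ
            (tpowSum t fun n =>
              if 2 ≤ n then d n 1 * 7 ^ ((7 * n - 1) / 4) else 0)
        + HahnSeries.ofPowerSeries ℤ ℤ
            (tpowSum t fun n =>
              if 1 ≤ n then d n 2 * 7 ^ ((7 * n - 2) / 4) else 0) := by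
  obtain ⟨β, rfl⟩ : ∃ β, α = β + 1 := ⟨α - 1, by omega⟩
  have hmem := D5Tower.intLaurentCast_tower_mem_evenLattice (D5Tower.intLaurentCast_eq_uOp hU)
    (D5Tower.intLaurentCast_eq_A₅ hA5) hL0 hLodd hLeven β
  obtain ⟨d₀, d₁, d₂, hd⟩ := D5Tower.exists_eq_weightedSum_of_mem_evenLattice
    (D5Tower.X_dvd_of_mul_J_pow_eq ht) (D5Tower.intPowerCast_eq_t ht)
    (D5Tower.intPowerCast_eq_p₀ hp0) (D5Tower.intLaurentCast_eq_p₁ hp1) hmem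
  exact ⟨fun n i => if i = 0 then d₀ n else if i = 1 then d₁ n else d₂ n, hd⟩
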